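/- arXiv:math/0511647 — 2 statements merged into one kernel-verified Lean document; each statement's English description precedes it below -/
import Mathlib

section
/- Let a, b > 0 with a ≠ b, and let G_{a,b} denote ℝ³ with the left-invariant distance d_{a,b} defined as the infimum, over piecewise C¹ paths (x(t),y(t),z(t)) joining the two given points, of ∫ √(e^{−2a·z(t)}·x′(t)² + e^{2b·z(t)}·y′(t)² + z′(t)²) dt (the solvable Lie group ℝ ⋉ ℝ² with z·(x,y) = (e^{az}x, e^{−bz}y)). Then no finitely generated group is quasi-isometric to G_{a,b}: for every group Γ with a finite symmetric generating set S, the metric space (Γ, d_S) is not quasi-isometric to (G_{a,b}, d_{a,b}). -/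
open Set

noncomputable section

/-- A path `γ : ℝ → E` is piecewise `C¹` on `[0,1]`. -/
def PiecewiseC1 {E : Type*} [NormedAddCommGroup E] [NormedSpace ℝ E] (γ : ℝ → E) : Prop :=
  ∃ (n : ℕ) (τ : ℕ → ℝ), τ 0 = 0 ∧ τ n = 1 ∧ (∀ i < n, τ i ≤ τ (i + 1)) ∧
    ∀ i < n, ContDiffOn ℝ 1 γ (Set.Icc (τ i) (τ (i + 1)))

/-- Length of a path for the left-invariant metric
`ds² = e^{-2az} dx² + e^{2bz} dy² + dz²` on the solvable group `ℝ ⋉ ℝ²` with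
`z·(x,y) = (e^{az} x, e^{-bz} y)`. -/
def abLength (a b : ℝ) (γ : ℝ → ℝ × ℝ × ℝ) : ℝ :=
  ∫ t in (0:ℝ)..1,
    Real.sqrt (Real.exp (-2 * a * (γ t).2.2) * (deriv (fun s => (γ s).1) t) ^ 2 +
      Real.exp (2 * b * (γ t).2.2) * (deriv (fun s => (γ s).2.1) t) ^ 2 +
      (deriv (fun s => (γ s).2.2) t) ^ 2)

/-- The left-invariant distance `d_{a,b}` on `G_{a,b} = ℝ³`. -/
def dAB (a b : ℝ) (p q : ℝ × ℝ × ℝ) : ℝ :=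
  sInf {ℓ : ℝ | ∃ γ : ℝ → ℝ × ℝ × ℝ,
    γ 0 = p ∧ γ 1 = q ∧ PiecewiseC1 γ ∧ abLength a b γ = ℓ}

/-- `f` is a `(K, C)`-quasi-isometric embedding with respect to the given distances. -/
def IsQIE {X Y : Type*} (dX : X → X → ℝ) (dY : Y → Y → ℝ) (K C : ℝ) (f : X → Y) : Prop :=
  ∀ a b : X, (1 / K) * dX a b - C ≤ dY (f a) (f b) ∧ dY (f a) (f b) ≤ K * dX a b + C

/-- `f` is a `(K, C)`-quasi-isometry with respect to the given distances. -/
def IsQI {X Y : Type*} (dX : X → X → ℝ) (dY : Y → Y → ℝ) (K C : ℝ) (f : X → Y) : Prop :=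
  IsQIE dX dY K C f ∧ ∀ y : Y, ∃ x : X, dY (f x) y ≤ C

/-- Two "metric spaces", given by distance functions, are quasi-isometric. -/
def QuasiIsometric {X Y : Type*} (dX : X → X → ℝ) (dY : Y → Y → ℝ) : Prop :=
  ∃ (K C : ℝ) (f : X → Y), 1 ≤ K ∧ 0 ≤ C ∧ IsQI dX dY K C f

/-- The word norm of `g` with respect to a generating set `S`. -/
def wordNorm {Γ : Type*} [Group Γ] (S : Set Γ) (g : Γ) : ℕ :=
  sInf {m : ℕ | ∃ l : List Γ, (∀ x ∈ l, x ∈ S) ∧ l.prod = g ∧ l.length = m}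

/-- The word metric on a group `Γ` with respect to a generating set `S`. -/
def wordDist {Γ : Type*} [Group Γ] (S : Set Γ) (a b : Γ) : ℝ :=
  (wordNorm S (a⁻¹ * b) : ℝ)

/-- `S` is a finite symmetric generating set of `Γ`. -/
def IsFinSymmGen {Γ : Type*} [Group Γ] (S : Set Γ) : Prop :=
  S.Finite ∧ (∀ s ∈ S, s⁻¹ ∈ S) ∧ Subgroup.closure S = ⊤

/-!
The distance `d_{a,b}` is comparable to an explicit relation `Near`, preserved by the left
translations and, up to exchanging `a` and `b`, by the reflection of the height. Consider the maps
from `G_{a,b}` to itself that distort `Near` by at most a factor `K`. Upward vertical lines branch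
in the second coordinate and so form `N`-ary trees; let the slope be the best average height that
all these maps gain at the leaves of suitable `κ`-ary subtrees of long trees.

Two lines with separated second coordinates along which a map realizes the slope stay separated in
the image. Below the value `b / (K * (a + b))` this forces the slope to be negative, and then also
yields maps that reverse the height at a constant rate `ρ > 0` over a large region. Comparing
displacements in the horizontal directions before and after such a reversal for `G_{a,b}` and for
its reflection `G_{b,a}` gives `a = b`. Hence for `a ≠ b` all these maps go up along most
branches.

If a group is quasi-isometric to `G_{a,b}`, its left multiplications induce such maps with a
common `K`. Starting with `T ^ 2` group elements in a box of width of order `T`, a pigeonhole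
argument finds a common leaf at which many of them have gone up by a given height. For `b < a` the
volume of a box shrinks exponentially as it moves up, since `G_{a,b}` is not unimodular, so that
there is no room for them.
-/

namespace Gab

open Real

/-! ### Coarse geometry -/

/-- A point `(x, y, z)` of `G_{a,b}`. The coordinates of `p` are `p.1`, `p.2.1` and `p.2.2`; the
last one is called the height. -/
abbrev Point : Type := ℝ × ℝ × ℝ

/-- Coarse closeness at scale `ℓ` in `G_{a,b}`: up to a bounded change of `ℓ ≥ 1` by a factor, this
says that the distance of `p` and `q` is at most `ℓ`. -/
def Near (a b ℓ : ℝ) (p q : Point) : Prop :=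
  |p.2.2 - q.2.2| ≤ ℓ ∧ |p.1 - q.1| ≤ exp (a * p.2.2 + ℓ) ∧ |p.2.1 - q.2.1| ≤ exp (-b * p.2.2 + ℓ)

/-- Self-maps of `G_{a,b}` that distort the scales of `Near` at most by the factor `K`; up to
constants, these are the quasi-isometric embeddings of `G_{a,b}` into itself. -/
def CoarseEmb (a b K : ℝ) (φ : Point → Point) : Prop :=
  ∀ ℓ, 1 ≤ ℓ → ∀ p q, (Near a b ℓ p q → Near a b (K * ℓ) (φ p) (φ q)) ∧
    (Near a b ℓ (φ p) (φ q) → Near a b (K * ℓ) p q)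

/-- Left multiplication by `p` in `G_{a,b}`. -/
def leftMul (a b : ℝ) (p q : Point) : Point :=
  (p.1 + exp (a * p.2.2) * q.1, p.2.1 + exp (-b * p.2.2) * q.2.1, p.2.2 + q.2.2)

/-- Left multiplication by the inverse of `p` in `G_{a,b}`. -/
def leftDiv (a b : ℝ) (p q : Point) : Point :=
  (exp (-(a * p.2.2)) * (q.1 - p.1), exp (b * p.2.2) * (q.2.1 - p.2.1), q.2.2 - p.2.2)

/-- The isometry `G_{a,b} → G_{b,a}` that reverses the height. -/
def mirror (p : Point) : Point := (p.2.1, p.1, -p.2.2)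

theorem mul_exp_le_exp_add {c x y : ℝ} (h : c ≤ exp y) : c * exp x ≤ exp (x + y) := by
  rw [exp_add, mul_comm]
  exact mul_le_mul_of_nonneg_left h (exp_pos _).le

theorem exp_add_exp_le {x y z : ℝ} (hx : x ≤ z) (hy : y ≤ z) : exp x + exp y ≤ exp (z + 1) := by
  have two_le : (2 : ℝ) ≤ exp 1 := by linarith [add_one_le_exp (1 : ℝ)]
  linarith [mul_exp_le_exp_add (x := z) two_le, exp_le_exp.2 hx, exp_le_exp.2 hy]

section Near

variable {a b ℓ ℓ' : ℝ} {p q r : Point}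

theorem Near.mono (h : Near a b ℓ p q) (hℓ : ℓ ≤ ℓ') : Near a b ℓ' p q :=
  ⟨h.1.trans hℓ, h.2.1.trans (exp_le_exp.2 (by linarith)),
    h.2.2.trans (exp_le_exp.2 (by linarith))⟩

theorem Near.symm (ha : 0 < a) (hb : 0 < b) (h : Near a b ℓ p q) :
    Near a b ((1 + a + b) * ℓ) q p := by
  obtain ⟨hz, hx, hy⟩ := h
  have hℓ : 0 ≤ ℓ := (abs_nonneg _).trans hz
  have haℓ := mul_nonneg ha.le hℓ
  have hbℓ := mul_nonneg hb.le hℓ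
  obtain ⟨hz₁, hz₂⟩ := abs_le.1 hz
  simp only [Near, abs_sub_comm q.1, abs_sub_comm q.2.1, abs_sub_comm q.2.2]
  exact ⟨by linarith, hx.trans (exp_le_exp.2 (by nlinarith)),
    hy.trans (exp_le_exp.2 (by nlinarith))⟩

theorem Near.trans (ha : 0 < a) (hb : 0 < b) (h : Near a b ℓ p q) (h' : Near a b ℓ' q r) :
    Near a b ((1 + a + b) * ℓ + ℓ' + 1) p r := by
  obtain ⟨hz, hx, hy⟩ := h
  obtain ⟨hz', hx', hy'⟩ := h'
  have hℓ : 0 ≤ ℓ := (abs_nonneg _).trans hz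
  have hℓ' : 0 ≤ ℓ' := (abs_nonneg _).trans hz'
  have haℓ := mul_nonneg ha.le hℓ
  have hbℓ := mul_nonneg hb.le hℓ
  obtain ⟨hz₁, hz₂⟩ := abs_le.1 hz
  refine ⟨by linarith [abs_sub_le p.2.2 q.2.2 r.2.2], ?_, ?_⟩ <;> rw [← add_assoc]
  · exact (abs_sub_le _ q.1 _).trans
      ((add_le_add hx hx').trans (exp_add_exp_le (by linarith) (by nlinarith)))
  · exact (abs_sub_le _ q.2.1 _).trans
      ((add_le_add hy hy').trans (exp_add_exp_le (by linarith) (by nlinarith)))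

end Near

section Translations

variable {a b ℓ : ℝ}

theorem abs_exp_mul_sub_exp_mul_le_iff {c x x' y : ℝ} :
    |exp c * x - exp c * x'| ≤ exp (c + y) ↔ |x - x'| ≤ exp y := by
  rw [← mul_sub, abs_mul, abs_of_pos (exp_pos _), exp_add, mul_le_mul_iff_right₀ (exp_pos _)]

theorem near_leftMul (p q r : Point) :
    Near a b ℓ (leftMul a b p q) (leftMul a b p r) ↔ Near a b ℓ q r := by
  simp only [Near, leftMul, add_sub_add_left_eq_sub, mul_add, add_assoc,
    abs_exp_mul_sub_exp_mul_le_iff]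

theorem leftMul_leftDiv (a b : ℝ) (p q : Point) : leftMul a b p (leftDiv a b p q) = q := by
  ext <;> simp [leftMul, leftDiv, ← mul_assoc, ← exp_add]

theorem near_leftDiv (p q r : Point) :
    Near a b ℓ (leftDiv a b p q) (leftDiv a b p r) ↔ Near a b ℓ q r := by
  rw [← near_leftMul p, leftMul_leftDiv, leftMul_leftDiv]

theorem leftDiv_self (a b : ℝ) (p : Point) : leftDiv a b p p = 0 := by
  ext <;> simp [leftDiv]

theorem leftMul_zero (a b : ℝ) (p : Point) : leftMul a b p 0 = p := by
  ext <;> simp [leftMul]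

theorem near_mirror (p q : Point) : Near b a ℓ (mirror p) (mirror q) ↔ Near a b ℓ p q := by
  simp only [Near, mirror, neg_sub_neg, abs_sub_comm q.2.2, mul_neg, neg_mul, neg_neg,
    and_comm (a := |p.2.1 - q.2.1| ≤ _)]

@[simp] theorem mirror_mirror (p : Point) : mirror (mirror p) = p := by
  ext <;> simp [mirror]

end Translations

section CoarseEmb

variable {a b K : ℝ} {φ : Point → Point}

theorem coarseEmb_id (hK : 1 ≤ K) : CoarseEmb a b K id := fun ℓ hℓ p q =>
  ⟨fun h => h.mono (by nlinarith), fun h => h.mono (by nlinarith)⟩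

theorem CoarseEmb.leftDiv_comp_leftMul (h : CoarseEmb a b K φ) (p r : Point) :
    CoarseEmb a b K (fun q => leftDiv a b r (φ (leftMul a b p q))) := by
  intro ℓ hℓ q q'
  simpa only [near_leftDiv, near_leftMul] using h ℓ hℓ (leftMul a b p q) (leftMul a b p q')

theorem CoarseEmb.mirror (h : CoarseEmb a b K φ) :
    CoarseEmb b a K (fun q => mirror (φ (mirror q))) := by
  intro ℓ hℓ q q'
  simpa only [near_mirror] using h ℓ hℓ (Gab.mirror q) (Gab.mirror q')

theorem CoarseEmb.abs_height_sub_le (h : CoarseEmb a b K φ) {ℓ : ℝ} (hℓ : 1 ≤ ℓ) {p q : Point}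
    (hpq : Near a b ℓ p q) : |(φ p).2.2 - (φ q).2.2| ≤ K * ℓ :=
  ((h ℓ hℓ p q).1 hpq).1

end CoarseEmb

/-! ### Trees of vertical lines -/

/-- The height over which the contraction `e^{-bz}` of the second coordinate becomes `1 / N`. -/
def levelHeight (b : ℝ) (N : ℕ) : ℝ := log N / b

/-- The `i`-th child of `p`. A point `p` stands for the segment of length `e^{-b p.2.2}` starting
at `p` in the direction of the second coordinate. Its `N` children, one level above it, stand for
the pieces into which this segment is divided: they make up an `N`-ary tree of vertical lines. -/
def child (b : ℝ) (N i : ℕ) (p : Point) : Point :=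
  (p.1, p.2.1 + exp (-b * p.2.2) * (i / N), p.2.2 + levelHeight b N)

/-- `q` lies `n` levels above `p`, and the segment of `q` lies over the segment of `p`. -/
def IsDescendant (b : ℝ) (N n : ℕ) (p q : Point) : Prop :=
  q.1 = p.1 ∧ q.2.2 = p.2.2 + n * levelHeight b N ∧ p.2.1 ≤ q.2.1 ∧
    q.2.1 + exp (-b * q.2.2) ≤ p.2.1 + exp (-b * p.2.2)

/-- `A` contains the leaves of a subtree of depth `n` with root `p` in which each inner node has at
least `κ` children. -/
def ContainsSubtree (b : ℝ) (N κ : ℕ) : ℕ → Set Point → Point → Prop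
  | 0, A, p => p ∈ A
  | n + 1, A, p => ∃ t ⊆ Finset.range N, κ ≤ t.card ∧
      ∀ i ∈ t, ContainsSubtree b N κ n A (child b N i p)

section Trees

variable {a b : ℝ} {N κ n m i : ℕ} {p q r : Point} {A A' : Set Point}

theorem mul_levelHeight (hb : 0 < b) (N : ℕ) : b * levelHeight b N = log N :=
  mul_div_cancel₀ _ hb.ne'

theorem exp_child (hb : 0 < b) (hN : 0 < N) (z : ℝ) :
    exp (-b * (z + levelHeight b N)) = exp (-b * z) / N := by
  rw [mul_add, neg_mul b (levelHeight b N), mul_levelHeight hb, ← sub_eq_add_neg, exp_sub,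
    exp_log (by exact_mod_cast hN)]

theorem isDescendant_refl (b : ℝ) (N : ℕ) (p : Point) : IsDescendant b N 0 p p :=
  ⟨rfl, by simp, le_rfl, le_rfl⟩

theorem IsDescendant.trans (h : IsDescendant b N n p q) (h' : IsDescendant b N m q r) :
    IsDescendant b N (n + m) p r := by
  obtain ⟨hx, hz, hy, hy₁⟩ := h
  obtain ⟨hx', hz', hy', hy₁'⟩ := h'
  exact ⟨hx'.trans hx, by rw [hz', hz]; push_cast; ring, hy.trans hy', hy₁'.trans hy₁⟩

theorem IsDescendant.snd_add_exp_le (hb : 0 < b) (hi : i < N)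
    (h : IsDescendant b N n (child b N i p) q) :
    q.2.1 + exp (-b * q.2.2) ≤ p.2.1 + exp (-b * p.2.2) * ((i + 1) / N) := by
  refine h.2.2.2.trans_eq ?_
  simp only [child, exp_child hb (i.zero_le.trans_lt hi)]
  ring

theorem isDescendant_child (hb : 0 < b) (hi : i < N) (p : Point) :
    IsDescendant b N 1 p (child b N i p) := by
  have hi' : ((i : ℝ) + 1) / N ≤ 1 := div_le_one_of_le₀ (by exact_mod_cast hi) N.cast_nonneg
  refine ⟨rfl, by simp [child], le_add_of_nonneg_right (by positivity), ?_⟩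
  refine ((isDescendant_refl b N _).snd_add_exp_le hb hi).trans ?_
  gcongr
  exact mul_le_of_le_one_right (exp_pos _).le hi'

theorem IsDescendant.of_child (hb : 0 < b) (hi : i < N)
    (h : IsDescendant b N n (child b N i p) q) : IsDescendant b N (n + 1) p q := by
  rw [add_comm]
  exact (isDescendant_child hb hi p).trans h

theorem IsDescendant.near {ℓ : ℝ} (h : IsDescendant b N n p q)
    (hn : |n * levelHeight b N| ≤ ℓ) : Near a b ℓ p q := by
  have hℓ : 0 ≤ ℓ := (abs_nonneg _).trans hn
  obtain ⟨hx, hz, hy, hy₁⟩ := h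
  refine ⟨by rw [hz]; simpa using hn, by simpa [hx] using (exp_pos _).le, ?_⟩
  rw [abs_sub_comm, abs_of_nonneg (by linarith)]
  calc q.2.1 - p.2.1 ≤ exp (-b * p.2.2) := by linarith [exp_pos (-b * q.2.2)]
    _ ≤ exp (-b * p.2.2 + ℓ) := exp_le_exp.2 (by linarith)

theorem ContainsSubtree.exists_notMem (hb : 0 < b) :
    ∀ {n : ℕ} {p : Point}, ContainsSubtree b N κ n A p → ¬ ContainsSubtree b N κ n A' p →
      ∃ q, IsDescendant b N n p q ∧ q ∈ A ∧ q ∉ A'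
  | 0, p, h, h' => ⟨p, isDescendant_refl b N p, h, h'⟩
  | n + 1, p, ⟨t, ht, hκ, h⟩, h' => by
    obtain ⟨i, hi, hi'⟩ : ∃ i ∈ t, ¬ ContainsSubtree b N κ n A' (child b N i p) := by
      by_contra! hall
      exact h' ⟨t, ht, hκ, hall⟩
    obtain ⟨q, hq, hqA⟩ := exists_notMem hb (h i hi) hi'
    exact ⟨q, hq.of_child hb (Finset.mem_range.1 (ht hi)), hqA⟩

theorem ContainsSubtree.mono (hb : 0 < b) (h : ContainsSubtree b N κ n A p)
    (hA : ∀ q, IsDescendant b N n p q → q ∈ A → q ∈ A') : ContainsSubtree b N κ n A' p := by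
  by_contra h'
  obtain ⟨q, hq, hqA, hqA'⟩ := h.exists_notMem hb h'
  exact hqA' (hA q hq hqA)

theorem containsSubtree_add : ∀ {n : ℕ} {p : Point}, ContainsSubtree b N κ (n + m) A p ↔
    ContainsSubtree b N κ n {q | ContainsSubtree b N κ m A q} p
  | 0, p => by simp [ContainsSubtree]
  | n + 1, p => by
    rw [Nat.add_right_comm]
    simp only [ContainsSubtree, containsSubtree_add]

theorem containsSubtree_of_forall (hb : 0 < b) (hκ : κ ≤ N) :
    ∀ {n : ℕ} {p : Point}, (∀ q, IsDescendant b N n p q → q ∈ A) → ContainsSubtree b N κ n A p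
  | 0, p, h => h p (isDescendant_refl b N p)
  | n + 1, p, h => ⟨Finset.range N, subset_rfl, by simpa using hκ, fun i hi =>
      containsSubtree_of_forall hb hκ fun q hq => h q (hq.of_child hb (Finset.mem_range.1 hi))⟩

theorem ContainsSubtree.exists_mem (hb : 0 < b) (hκ : 1 ≤ κ) :
    ∀ {n : ℕ} {p : Point}, ContainsSubtree b N κ n A p → ∃ q, IsDescendant b N n p q ∧ q ∈ A
  | 0, p, h => ⟨p, isDescendant_refl b N p, h⟩
  | n + 1, p, ⟨t, ht, hκt, h⟩ => by
    obtain ⟨i, hi⟩ := Finset.card_pos.1 (hκ.trans hκt)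
    obtain ⟨q, hq, hqA⟩ := exists_mem hb hκ (h i hi)
    exact ⟨q, hq.of_child hb (Finset.mem_range.1 (ht hi)), hqA⟩

theorem exists_add_two_le_of_three_le_card {F : Finset ℕ} (hF : 3 ≤ F.card) :
    ∃ i ∈ F, ∃ j ∈ F, i + 2 ≤ j := by
  have hne : F.Nonempty := Finset.card_pos.1 (by omega)
  have hcard := Finset.card_le_card (t := Finset.Icc (F.min' hne) (F.max' hne)) fun i hi =>
    Finset.mem_Icc.2 ⟨F.min'_le i hi, F.le_max' i hi⟩
  rw [Nat.card_Icc] at hcard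
  exact ⟨_, F.min'_mem hne, _, F.max'_mem hne, by omega⟩

theorem exists_children_of_not_containsSubtree (hκ : κ + 2 ≤ N)
    (h : ¬ ContainsSubtree b N κ (n + 1) A p) :
    ∃ i j, i + 2 ≤ j ∧ j < N ∧ ¬ ContainsSubtree b N κ n A (child b N i p) ∧
      ¬ ContainsSubtree b N κ n A (child b N j p) := by
  classical
  have card_lt : ((Finset.range N).filter fun i =>
      ContainsSubtree b N κ n A (child b N i p)).card < κ := by
    by_contra! hκF
    exact h ⟨_, Finset.filter_subset _ _, hκF, fun i hi => (Finset.mem_filter.1 hi).2⟩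
  have card_add := Finset.card_filter_add_card_filter_not (s := Finset.range N)
    fun i => ContainsSubtree b N κ n A (child b N i p)
  rw [Finset.card_range] at card_add
  obtain ⟨i, hi, j, hj, hij⟩ := exists_add_two_le_of_three_le_card
    (F := (Finset.range N).filter fun i => ¬ ContainsSubtree b N κ n A (child b N i p)) (by omega)
  rw [Finset.mem_filter, Finset.mem_range] at hi hj
  exact ⟨i, j, hij, hj.1, hi.2, hj.2⟩

theorem child_leftMul (p q : Point) :
    child b N i (leftMul a b p q) = leftMul a b p (child b N i q) := by
  ext <;> simp only [child, leftMul, mul_add, exp_add] <;> ring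

theorem containsSubtree_leftMul : ∀ {n : ℕ} {q : Point},
    ContainsSubtree b N κ n A (leftMul a b p q) ↔
      ContainsSubtree b N κ n {r | leftMul a b p r ∈ A} q
  | 0, q => by simp [ContainsSubtree]
  | n + 1, q => by simp only [ContainsSubtree, child_leftMul, containsSubtree_leftMul]

theorem exists_mul_card_le_card_filter {ι : Type*} (hN : 0 < N) {F : Finset ι} {P : ℕ → ι → Prop}
    [∀ i, DecidablePred (P i)]
    (hP : ∀ γ ∈ F, ∃ t ⊆ Finset.range N, κ ≤ t.card ∧ ∀ i ∈ t, P i γ) :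
    ∃ i < N, κ * F.card ≤ N * (F.filter (P i)).card := by
  have hsum : κ * F.card ≤ ∑ i ∈ Finset.range N, (F.filter (P i)).card := by
    simp only [Finset.card_filter]
    rw [Finset.sum_comm, mul_comm, ← smul_eq_mul]
    refine Finset.card_nsmul_le_sum _ _ _ fun γ hγ => ?_
    obtain ⟨t, ht, hκ, htP⟩ := hP γ hγ
    rw [← Finset.card_filter]
    exact hκ.trans (Finset.card_le_card fun i hi => Finset.mem_filter.2 ⟨ht hi, htP i hi⟩)
  by_contra! hlt
  have := Finset.sum_lt_sum_of_nonempty (Finset.nonempty_range_iff.2 hN.ne') fun i hi =>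
    hlt i (Finset.mem_range.1 hi)
  rw [← Finset.mul_sum, Finset.sum_const, Finset.card_range, smul_eq_mul] at this
  exact (Nat.lt_of_mul_lt_mul_left this).not_ge hsum

theorem exists_common_leaf {ι : Type*} (hb : 0 < b) (hN : 0 < N) (A : ι → Set Point) :
    ∀ {n : ℕ} {p : Point} {F : Finset ι}, (∀ γ ∈ F, ContainsSubtree b N κ n (A γ) p) →
      ∃ q, IsDescendant b N n p q ∧
        ∃ F' ⊆ F, (∀ γ ∈ F', q ∈ A γ) ∧ κ ^ n * F.card ≤ N ^ n * F'.card
  | 0, p, F, h => ⟨p, isDescendant_refl b N p, F, subset_rfl, h, by simp⟩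
  | n + 1, p, F, h => by
    classical
    obtain ⟨i, hi, hcard⟩ := exists_mul_card_le_card_filter
      (P := fun i γ => ContainsSubtree b N κ n (A γ) (child b N i p)) hN h
    set G := F.filter fun γ => ContainsSubtree b N κ n (A γ) (child b N i p)
    obtain ⟨q, hq, F', hF', hA, hcard'⟩ := exists_common_leaf hb hN A (F := G)
      fun γ hγ => (Finset.mem_filter.1 hγ).2
    refine ⟨q, hq.of_child hb hi, F', hF'.trans (Finset.filter_subset _ _), hA, ?_⟩
    calc κ ^ (n + 1) * F.card = κ ^ n * (κ * F.card) := by ring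
      _ ≤ κ ^ n * (N * G.card) := Nat.mul_le_mul_left _ hcard
      _ = N * (κ ^ n * G.card) := by ring
      _ ≤ N * (N ^ n * F'.card) := Nat.mul_le_mul_left _ hcard'
      _ = N ^ (n + 1) * F'.card := by ring

end Trees

/-! ### The slope of the height along trees -/

/-- The assumptions on the parameters: the constants `a`, `b` of the group, the distortion `K` of
the coarse embeddings, the branching number `N` of the tree and the branching number `κ` of its
subtrees. -/
structure Params (a b K : ℝ) (N κ : ℕ) : Prop where
  a_pos : 0 < a
  b_pos : 0 < b
  one_le_K : 1 ≤ K
  one_le_κ : 1 ≤ κ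
  κ_add_two_le : κ + 2 ≤ N

/-- Along every tree of depth `n`, each coarse embedding gains the height `v` at the leaves of a
subtree with branching number `κ`. -/
def GainsHeight (a b K : ℝ) (N κ n : ℕ) (v : ℝ) : Prop :=
  ∀ φ, CoarseEmb a b K φ → ∀ p, ContainsSubtree b N κ n {q | (φ p).2.2 + v ≤ (φ q).2.2} p

/-- The supremum of the average height gains per level. The set is nonempty and bounded above, so
that `sSup` takes no junk value. -/
def levelSlope (a b K : ℝ) (N κ : ℕ) : ℝ :=
  sSup {x | ∃ n : ℕ, 1 ≤ n ∧ ∃ v, GainsHeight a b K N κ n v ∧ x = v / n}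

section Slope

variable {a b K : ℝ} {N κ n m : ℕ} {v w : ℝ}

theorem Params.one_lt_N (P : Params a b K N κ) : 1 < N := by
  have := P.κ_add_two_le
  omega

theorem Params.log_pos (P : Params a b K N κ) : 0 < log N :=
  Real.log_pos (by exact_mod_cast P.one_lt_N)

theorem Params.levelHeight_pos (P : Params a b K N κ) : 0 < levelHeight b N :=
  div_pos P.log_pos P.b_pos

theorem GainsHeight.mono (hb : 0 < b) (h : GainsHeight a b K N κ n v) (hw : w ≤ v) :
    GainsHeight a b K N κ n w := fun φ hφ p =>
  (h φ hφ p).mono hb fun _ _ hq => (add_le_add_right hw _).trans hq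

theorem GainsHeight.add (hb : 0 < b) (h : GainsHeight a b K N κ n v)
    (h' : GainsHeight a b K N κ m w) : GainsHeight a b K N κ (n + m) (v + w) := fun φ hφ p => by
  rw [containsSubtree_add]
  refine (h φ hφ p).mono hb fun q _ hq => (h' φ hφ q).mono hb fun r _ hr => ?_
  simp only [mem_ofPred_eq] at hq hr ⊢
  linarith

theorem gainsHeight_zero : GainsHeight a b K N κ 0 0 := fun φ _ p => by simp [ContainsSubtree]

theorem GainsHeight.mul (hb : 0 < b) (h : GainsHeight a b K N κ n v) (k : ℕ) :
    GainsHeight a b K N κ (k * n) (k * v) := by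
  induction k with
  | zero => simpa using gainsHeight_zero
  | succ k ih =>
    rw [Nat.succ_mul, Nat.cast_succ, add_one_mul]
    exact ih.add hb h

theorem Params.gainsHeight_neg (P : Params a b K N κ) (n : ℕ) :
    GainsHeight a b K N κ n (-(K * max 1 (n * levelHeight b N))) := fun φ hφ p => by
  refine containsSubtree_of_forall P.b_pos (by have := P.κ_add_two_le; omega) fun q hq => ?_
  have hpq : Near a b (max 1 (n * levelHeight b N)) p q := hq.near <| by
    rw [abs_of_nonneg (mul_nonneg n.cast_nonneg P.levelHeight_pos.le)]
    exact le_max_right _ _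
  have := (abs_le.1 (hφ.abs_height_sub_le (le_max_left _ _) hpq)).2
  simp only [mem_ofPred_eq]
  linarith

theorem GainsHeight.le (P : Params a b K N κ) (h : GainsHeight a b K N κ n v) :
    v ≤ n * levelHeight b N := by
  obtain ⟨q, hq, hqv⟩ := (h id (coarseEmb_id P.one_le_K) 0).exists_mem P.b_pos P.one_le_κ
  have := hq.2.1
  simp only [id, mem_ofPred_eq] at hqv
  linarith

theorem Params.not_gainsHeight_of_lt (P : Params a b K N κ) (hn : 1 ≤ n)
    (hv : levelSlope a b K N κ * n < v) : ¬ GainsHeight a b K N κ n v := fun h => by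
  have bddAbove : BddAbove {x | ∃ n : ℕ, 1 ≤ n ∧ ∃ v, GainsHeight a b K N κ n v ∧ x = v / n} := by
    refine ⟨levelHeight b N, ?_⟩
    rintro _ ⟨m, hm, w, hw, rfl⟩
    rw [div_le_iff₀' (by exact_mod_cast hm)]
    exact hw.le P
  exact hv.not_ge ((div_le_iff₀ (by exact_mod_cast hn)).1 (le_csSup bddAbove ⟨n, hn, v, h, rfl⟩))

theorem Params.exists_gainsHeight_of_mul_le (P : Params a b K N κ) {τ : ℝ} (hm : 0 < m)
    (hτ : τ * m ≤ v) (h : GainsHeight a b K N κ m v) :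
    ∃ c, 0 ≤ c ∧ ∀ n : ℕ, GainsHeight a b K N κ n (τ * n - c) := by
  have hK : 0 ≤ K := zero_le_one.trans P.one_le_K
  refine ⟨|τ| * m + K * max 1 (m * levelHeight b N), by positivity, fun n => ?_⟩
  have hdiv := (h.mul P.b_pos (n / m)).add P.b_pos (P.gainsHeight_neg (n % m))
  rw [Nat.div_add_mod'] at hdiv
  refine hdiv.mono P.b_pos ?_
  have mod_le : ((n % m : ℕ) : ℝ) ≤ m := by exact_mod_cast (Nat.mod_lt n hm).le
  have error_le : K * max 1 ((n % m : ℕ) * levelHeight b N) ≤ K * max 1 (m * levelHeight b N) := by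
    have := P.levelHeight_pos
    gcongr
  have quotient_le : (n / m : ℕ) * (τ * m) ≤ (n / m : ℕ) * v :=
    mul_le_mul_of_nonneg_left hτ (Nat.cast_nonneg _)
  have remainder_le : τ * (n % m : ℕ) ≤ |τ| * m :=
    mul_le_mul (le_abs_self τ) mod_le (Nat.cast_nonneg _) (abs_nonneg τ)
  have div_add_mod : (n : ℝ) = (n / m : ℕ) * m + (n % m : ℕ) := by
    exact_mod_cast (Nat.div_add_mod' n m).symm
  rw [div_add_mod]
  linarith

theorem Params.exists_gainsHeight (P : Params a b K N κ) {ε : ℝ} (hε : 0 < ε) :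
    ∃ c, 0 ≤ c ∧ ∀ n : ℕ, GainsHeight a b K N κ n ((levelSlope a b K N κ - ε) * n - c) := by
  obtain ⟨_, ⟨m, hm, v, hv, rfl⟩, lt_div⟩ := exists_lt_of_lt_csSup
    (s := {x | ∃ n : ℕ, 1 ≤ n ∧ ∃ v, GainsHeight a b K N κ n v ∧ x = v / n})
    ⟨_, 1, le_rfl, _, P.gainsHeight_neg 1, rfl⟩ (sub_lt_self (levelSlope a b K N κ) hε)
  refine P.exists_gainsHeight_of_mul_le hm ?_ hv
  exact ((lt_div_iff₀ (by exact_mod_cast hm)).1 lt_div).le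

theorem Params.exists_not_containsSubtree (P : Params a b K N κ) (hn : 1 ≤ n)
    (hv : levelSlope a b K N κ * n < v) :
    ∃ φ, CoarseEmb a b K φ ∧ φ 0 = 0 ∧ ¬ ContainsSubtree b N κ n {q | v ≤ (φ q).2.2} 0 := by
  have h := P.not_gainsHeight_of_lt hn hv
  simp only [GainsHeight, not_forall] at h
  obtain ⟨φ, hφ, p, hp⟩ := h
  refine ⟨_, hφ.leftDiv_comp_leftMul p (φ p), by rw [leftMul_zero, leftDiv_self], fun h₀ => hp ?_⟩
  rw [← leftMul_zero a b p, containsSubtree_leftMul, leftMul_zero]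
  refine h₀.mono P.b_pos fun q _ hq => ?_
  simp only [mem_ofPred_eq, leftDiv] at hq ⊢
  linarith

end Slope

/-! ### Pairs of lines of extremal slope -/

section Lines

variable {a b K : ℝ} {N κ J m n l : ℕ} {φ : Point → Point} {u : Point}

theorem exists_chain_of_not_containsSubtree (hb : 0 < b) (hφ : CoarseEmb a b K φ) {w : ℝ}
    (hw : GainsHeight a b K N κ m w) {A : Set Point} :
    ∀ {J : ℕ} {u : Point}, ¬ ContainsSubtree b N κ (J * m) A u →
      ∃ q : ℕ → Point, q 0 = u ∧ (∀ i ≤ J, ¬ ContainsSubtree b N κ ((J - i) * m) A (q i)) ∧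
        ∀ i < J, IsDescendant b N m (q i) (q (i + 1)) ∧ (φ (q i)).2.2 + w ≤ (φ (q (i + 1))).2.2
  | 0, u, h => ⟨fun _ => u, rfl, fun i _ => by simpa using h, fun i hi => absurd hi i.not_lt_zero⟩
  | J + 1, u, h => by
    have h' := h
    rw [Nat.succ_mul, add_comm, containsSubtree_add] at h'
    obtain ⟨r, hur, hgain, hr⟩ := (hw φ hφ u).exists_notMem hb h'
    obtain ⟨q, rfl, hqA, hq⟩ := exists_chain_of_not_containsSubtree hb hφ hw (J := J) hr
    refine ⟨fun i => Nat.casesOn i u q, rfl, fun i hi => ?_, fun i hi => ?_⟩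
    · cases i with
      | zero => simpa using h
      | succ i => simpa using hqA i (Nat.succ_le_succ_iff.1 hi)
    · cases i with
      | zero => exact ⟨hur, hgain⟩
      | succ i => exact hq i (Nat.succ_lt_succ_iff.1 hi)

theorem isDescendant_of_chain {q : ℕ → Point} (h : ∀ i < J, IsDescendant b N m (q i) (q (i + 1))) :
    ∀ i ≤ J, IsDescendant b N (i * m) (q 0) (q i)
  | 0, _ => by simpa using isDescendant_refl b N (q 0)
  | i + 1, hi => by
    rw [Nat.succ_mul]
    exact (isDescendant_of_chain h i (Nat.le_of_succ_le hi)).trans (h i hi)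

theorem add_mul_le_of_chain {f : ℕ → ℝ} {w : ℝ} (h : ∀ i < J, f i + w ≤ f (i + 1)) :
    ∀ i ≤ J, f 0 + i * w ≤ f i
  | 0, _ => by simp
  | i + 1, hi => by
    have := add_mul_le_of_chain h i (Nat.le_of_succ_le hi)
    push_cast
    linarith [h i hi]

theorem exists_mul_le_le_succ_mul {d δ : ℝ} (hd : 0 ≤ d) (hn : 1 ≤ n) (h : d ≤ n * δ) :
    ∃ i < n, i * δ ≤ d ∧ d ≤ (i + 1) * δ := by
  induction n, hn using Nat.le_induction with
  | base => exact ⟨0, one_pos, by simpa using hd, by simpa using h⟩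
  | succ n _ ih =>
    rcases le_total d (n * δ) with hle | hge
    · obtain ⟨i, hi, hi'⟩ := ih hle
      exact ⟨i, Nat.lt_succ_of_lt hi, hi'⟩
    · exact ⟨n, n.lt_succ_self, hge, by exact_mod_cast h⟩

theorem exists_isDescendant_of_not_containsSubtree (hb : 0 < b) (hN : 1 ≤ N) {A : Set Point}
    {y : ℝ} :
    ∀ {j : ℕ} {p : Point}, ¬ ContainsSubtree b N 1 (j + l) A p → p.2.1 ≤ y →
      y ≤ p.2.1 + exp (-b * p.2.2) → ∃ u, IsDescendant b N j p u ∧ u.2.1 ≤ y ∧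
        y ≤ u.2.1 + exp (-b * u.2.2) ∧ ¬ ContainsSubtree b N 1 l A u
  | 0, p, h, hy, hy' => ⟨p, isDescendant_refl b N p, hy, hy', by simpa using h⟩
  | j + 1, p, h, hy, hy' => by
    obtain ⟨i, hi, hle, hge⟩ := exists_mul_le_le_succ_mul (δ := exp (-b * p.2.2) / N)
      (sub_nonneg.2 hy) hN (by
        rw [mul_div_cancel₀ _ (by positivity)]
        linarith)
    have hchild : ¬ ContainsSubtree b N 1 (j + l) A (child b N i p) := fun hB => h <| by
      rw [Nat.add_right_comm]
      exact ⟨{i}, by simpa using hi, by simp, by simpa using hB⟩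
    rw [mul_div_left_comm] at hle
    obtain ⟨u, hu, hu'⟩ := exists_isDescendant_of_not_containsSubtree hb hN (y := y) hchild
      (by simp only [child]; linarith)
      (by
        simp only [child]
        rw [exp_child hb hN, ← mul_div_left_comm]
        linarith)
    exact ⟨u, hu.of_child hb hi, hu'⟩

-- Displacements in the first coordinate are contracted upwards: one of size `e^{az}` moves the
-- leaves at the height `z` by a bounded amount only.
theorem height_le_of_not_containsSubtree (hb : 0 < b) (hφ : CoarseEmb a b K φ) {w h : ℝ}
    (hw : GainsHeight a b K N κ l w) (hu : ¬ ContainsSubtree b N κ l {q | h ≤ (φ q).2.2} u) {x : ℝ}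
    (hx : |x - u.1| ≤ exp (a * (u.2.2 + l * levelHeight b N))) :
    (φ (x, u.2)).2.2 ≤ h + K - w := by
  have leftMul_eq (q : Point) : leftMul a b (x - u.1, 0, 0) q = (x - u.1 + q.1, q.2) := by
    ext <;> simp [leftMul]
  by_contra! hcon
  refine hu ?_
  have hsub := hw φ hφ (leftMul a b (x - u.1, 0, 0) u)
  rw [containsSubtree_leftMul] at hsub
  refine hsub.mono hb fun q hq hgain => ?_
  simp only [mem_ofPred_eq, leftMul_eq, sub_add_cancel] at hgain ⊢
  have hnear : Near a b 1 (x - u.1 + q.1, q.2) q := by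
    refine ⟨by simp, ?_, by simpa using (exp_pos _).le⟩
    rw [add_sub_cancel_right]
    exact hx.trans (exp_le_exp.2 (by rw [hq.2.1]; linarith))
  linarith [(abs_le.1 (hφ.abs_height_sub_le le_rfl hnear)).2]

/-- A chain of points, `m` levels apart and starting one level above the plane `z = 0`, on a
vertical line along which the height of the image under `φ` grows with the slope `levelSlope`. -/
structure IsLine (a b K : ℝ) (N κ : ℕ) (φ : Point → Point) (J m : ℕ) (q : ℕ → Point) : Prop where
  fst : ∀ i ≤ J, (q i).1 = 0
  height : ∀ i ≤ J, (q i).2.2 = (1 + i * m) * levelHeight b N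
  snd_nonneg : ∀ i ≤ J, 0 ≤ (q i).2.1
  snd_le_one : ∀ i ≤ J, (q i).2.1 ≤ 1
  isDescendant : ∀ i < J, IsDescendant b N m (q i) (q (i + 1))
  le_height : ∀ i ≤ J, levelSlope a b K N κ * (i * m) - 3 * m ≤ (φ (q i)).2.2
  height_le : ∀ i ≤ J, ∀ x, |x| ≤ exp (a * ((1 + J * m) * levelHeight b N)) →
    (φ (x, (q i).2)).2.2 ≤ levelSlope a b K N κ * (i * m) + 2 * m

theorem height_le_of_not_containsSubtree_levelSlope (hb : 0 < b) (hφ : CoarseEmb a b K φ)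
    (hJ : 1 ≤ J) {c : ℝ}
    (hc : ∀ n : ℕ, GainsHeight a b K N κ n ((levelSlope a b K N κ - 1 / J) * n - c))
    {k : ℕ} (hl : k + l = J * m + 1)
    (hu : ¬ ContainsSubtree b N κ l {q | levelSlope a b K N κ * (J * m + 1) + 1 ≤ (φ q).2.2} u)
    {x : ℝ} (hx : |x - u.1| ≤ exp (a * (u.2.2 + l * levelHeight b N))) :
    (φ (x, u.2)).2.2 ≤ levelSlope a b K N κ * k + m + (c + K + 2) := by
  have hJ' : (1 : ℝ) ≤ J := by exact_mod_cast hJ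
  have cast_eq : (k : ℝ) + l = J * m + 1 := by exact_mod_cast hl
  have div_le : (1 / J : ℝ) * l ≤ m + 1 := by
    rw [one_div_mul_eq_div, div_le_iff₀ (by linarith)]
    nlinarith [(Nat.cast_nonneg k : (0 : ℝ) ≤ k)]
  have := height_le_of_not_containsSubtree hb hφ (hc l) hu hx
  rw [← cast_eq] at this
  linarith

theorem Params.neg_le_height_child (P : Params a b K N κ) (hφ : CoarseEmb a b K φ) (hφ₀ : φ 0 = 0)
    {k : ℕ} (hk : k < N) :
    -(K * max 1 (levelHeight b N)) ≤ (φ (child b N k 0)).2.2 := by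
  have hnear : Near a b (max 1 (levelHeight b N)) 0 (child b N k 0) :=
    (isDescendant_child P.b_pos hk 0).near (by
      rw [Nat.cast_one, one_mul, abs_of_pos P.levelHeight_pos]
      exact le_max_right _ _)
  have := (abs_le.1 (hφ.abs_height_sub_le (le_max_left _ _) hnear)).2
  rw [hφ₀, Prod.snd_zero, Prod.snd_zero] at this
  linarith

theorem mul_sub_two_mul_le {σ c : ℝ} {i : ℕ} (hJ : 1 ≤ J) (hi : i ≤ J) (hc : 0 ≤ c)
    (hm : J * c ≤ m) : σ * (i * m) - 2 * m ≤ i * ((σ - 1 / J) * m - c) := by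
  have hi' : (i : ℝ) ≤ J := by exact_mod_cast hi
  have hJ' : (J : ℝ) ≠ 0 := by positivity
  have loss_le : i * ((m : ℝ) / J + c) ≤ J * (m / J + c) :=
    mul_le_mul_of_nonneg_right hi' (by positivity)
  have loss_eq : J * ((m : ℝ) / J + c) = m + J * c := by field_simp
  have gain_eq : i * ((σ - 1 / J) * m - c) = σ * (i * m) - i * ((m : ℝ) / J + c) := by ring
  linarith

theorem Params.exists_isLine (P : Params a b K N κ) (hφ : CoarseEmb a b K φ) (hφ₀ : φ 0 = 0)
    (hJ : 1 ≤ J) {c : ℝ} (hc₀ : 0 ≤ c)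
    (hc : ∀ n : ℕ, GainsHeight a b K N κ n ((levelSlope a b K N κ - 1 / J) * n - c))
    (hcm : J * c ≤ m) (hKm : c + K + 2 + |levelSlope a b K N κ| ≤ m)
    (hsm : K * max 1 (levelHeight b N) ≤ m) {k : ℕ} (hk : k < N)
    (hB : ¬ ContainsSubtree b N κ (J * m) {q | levelSlope a b K N κ * (J * m + 1) + 1 ≤ (φ q).2.2}
      (child b N k 0)) :
    ∃ q, IsLine a b K N κ φ J m q ∧ ∀ i ≤ J, (k : ℝ) / N ≤ (q i).2.1 ∧ (q i).2.1 ≤ (k + 1) / N := by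
  obtain ⟨q, hq₀, hqB, hq⟩ := exists_chain_of_not_containsSubtree P.b_pos hφ (hc m) hB
  have desc_child : ∀ i ≤ J, IsDescendant b N (i * m) (child b N k 0) (q i) :=
    hq₀ ▸ isDescendant_of_chain fun i hi => (hq i hi).1
  have desc i (hi : i ≤ J) := (desc_child i hi).of_child P.b_pos hk
  have fst i (hi : i ≤ J) : (q i).1 = 0 := (desc i hi).1
  have height i (hi : i ≤ J) : (q i).2.2 = (1 + i * m) * levelHeight b N := by
    rw [(desc i hi).2.1, Prod.snd_zero, Prod.snd_zero, zero_add, add_comm 1]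
    push_cast
    ring
  have snd_mem i (hi : i ≤ J) : (k : ℝ) / N ≤ (q i).2.1 ∧ (q i).2.1 ≤ (k + 1) / N := by
    have hlow := (desc_child i hi).2.2.1
    have hupp := (desc_child i hi).snd_add_exp_le P.b_pos hk
    simp only [child, Prod.snd_zero, Prod.fst_zero, mul_zero, exp_zero, one_mul, zero_add]
      at hlow hupp
    exact ⟨hlow, by linarith [exp_pos (-b * (q i).2.2)]⟩
  have snd_le_one i (hi : i ≤ J) : (q i).2.1 ≤ 1 :=
    (snd_mem i hi).2.trans (div_le_one_of_le₀ (by exact_mod_cast hk) N.cast_nonneg)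
  refine ⟨q, ⟨fst, height, fun i hi => (by positivity : (0 : ℝ) ≤ k / N).trans (snd_mem i hi).1,
    snd_le_one, fun i hi => (hq i hi).1, fun i hi => ?_, fun i hi x hx => ?_⟩, snd_mem⟩
  · have start := P.neg_le_height_child hφ hφ₀ hk
    have gain := add_mul_le_of_chain (f := fun i => (φ (q i)).2.2) (fun i hi => (hq i hi).2) i hi
    simp only [hq₀] at gain
    linarith [mul_sub_two_mul_le (σ := levelSlope a b K N κ) hJ hi hc₀ hcm]
  · have hl : i * m + 1 + (J - i) * m = J * m + 1 := by
      rw [Nat.add_right_comm, ← add_mul, Nat.add_sub_cancel' hi]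
    have := height_le_of_not_containsSubtree_levelSlope P.b_pos hφ hJ hc hl (hqB i hi) (x := x) (by
      rw [fst i hi, sub_zero, height i hi, Nat.cast_mul, Nat.cast_sub hi]
      exact hx.trans_eq (by ring_nf))
    push_cast at this
    linarith [le_abs_self (levelSlope a b K N κ)]

/-- Two lines of extremal slope for `φ` with separated second coordinates, at a scale `m` that is
large compared with all the constants. -/
structure LinePair (a b K : ℝ) (N κ J m : ℕ) (φ : Point → Point) (q q' : ℕ → Point) : Prop where
  coarseEmb : CoarseEmb a b K φ
  map_zero : φ 0 = 0
  left : IsLine a b K N κ φ J m q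
  right : IsLine a b K N κ φ J m q'
  separated : ∀ i ≤ J, 1 / (N : ℝ) ≤ |(q i).2.1 - (q' i).2.1|
  base_height_le : ∀ x, |x| ≤ exp (a * ((1 + J * m) * levelHeight b N)) → (φ (x, 0)).2.2 ≤ 3 * m
  height_le : κ = 1 → ∀ y z, 0 ≤ y → y ≤ 1 → 0 ≤ z → z ≤ (1 + J * m) * levelHeight b N →
    (φ (0, y, z)).2.2 ≤ levelSlope a b K N κ * (z / levelHeight b N) + 4 * m
  one_le : 1 ≤ m
  start_le : K * max 1 (levelHeight b N) ≤ m
  one_le_mul : 1 ≤ m * levelHeight b N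
  le_exp : 2 * (J : ℝ) + 4 ≤ exp m

theorem Params.height_le_of_not_containsSubtree_one (P : Params a b K N 1) (hφ : CoarseEmb a b K φ)
    (hJ : 1 ≤ J) {c : ℝ}
    (hc : ∀ n : ℕ, GainsHeight a b K N 1 n ((levelSlope a b K N 1 - 1 / J) * n - c))
    (hB : ¬ ContainsSubtree b N 1 (J * m + 1)
      {q | levelSlope a b K N 1 * (J * m + 1) + 1 ≤ (φ q).2.2} 0)
    {y z : ℝ} (hy : 0 ≤ y) (hy₁ : y ≤ 1) (hz : 0 ≤ z) (hz₁ : z ≤ (1 + J * m) * levelHeight b N) :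
    (φ (0, y, z)).2.2 ≤ levelSlope a b K N 1 * (z / levelHeight b N) + |levelSlope a b K N 1| +
      m + (c + K + 2) + K * max 1 (levelHeight b N) := by
  set s := levelHeight b N
  set σ := levelSlope a b K N 1
  have hs : 0 < s := P.levelHeight_pos
  have hzs : z / s * s = z := div_mul_cancel₀ _ hs.ne'
  obtain ⟨k, hk, hkz, hzk⟩ := exists_mul_le_le_succ_mul (n := J * m + 1) (δ := s) hz
    (by omega) (hz₁.trans (mul_le_mul_of_nonneg_right (by push_cast; linarith) hs.le))
  obtain ⟨l, hl⟩ := Nat.exists_eq_add_of_le hk.le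
  rw [hl] at hB
  obtain ⟨u, hu, huy, hyu, hul⟩ := exists_isDescendant_of_not_containsSubtree P.b_pos
    P.one_lt_N.le hB (y := y) (by simpa using hy) (by simpa using hy₁)
  have fst_u : u.1 = 0 := hu.1
  have height_u : u.2.2 = k * s := by simpa using hu.2.1
  have hφu := height_le_of_not_containsSubtree_levelSlope P.b_pos hφ hJ hc hl.symm hul (x := u.1)
    (by simpa using (exp_pos _).le)
  have hnear : Near a b (max 1 s) u (0, y, z) := by
    refine ⟨le_trans ?_ (le_max_right _ _), by simpa [fst_u] using (exp_pos _).le, ?_⟩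
    · rw [height_u, abs_le]
      constructor <;> simp only <;> linarith
    · rw [abs_sub_comm, abs_of_nonneg (sub_nonneg.2 huy)]
      calc y - u.2.1 ≤ exp (-b * u.2.2) := by linarith
        _ ≤ exp (-b * u.2.2 + max 1 s) := exp_le_exp.2 (by linarith [le_max_left 1 s])
  have level_le : σ * k ≤ σ * (z / s) + |σ| := by
    have abs_le_one : |(k : ℝ) - z / s| ≤ 1 := by
      rw [← mul_le_mul_iff_left₀ hs, ← abs_of_pos hs, ← abs_mul, abs_of_pos hs, sub_mul, hzs,
        abs_le]
      constructor <;> linarith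
    have := (le_abs_self (σ * (k - z / s))).trans_eq (abs_mul _ _)
    nlinarith [abs_nonneg σ]
  linarith [(abs_le.1 (hφ.abs_height_sub_le (le_max_left _ _) hnear)).1]

open Filter in
theorem Params.eventually_exists_linePair (P : Params a b K N κ) (hJ : 1 ≤ J) :
    ∀ᶠ m : ℕ in atTop, ∃ φ q q', LinePair a b K N κ J m φ q q' := by
  obtain ⟨c, hc₀, hc⟩ := P.exists_gainsHeight (one_div_pos.2 (by positivity : (0 : ℝ) < J))
  have eventually_le (C : ℝ) : ∀ᶠ m : ℕ in atTop, C ≤ m :=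
    tendsto_natCast_atTop_atTop.eventually_ge_atTop C
  filter_upwards [eventually_ge_atTop 1, eventually_le (J * c),
    eventually_le (c + K + 2 + |levelSlope a b K N κ|), eventually_le (K * max 1 (levelHeight b N)),
    eventually_le (1 / levelHeight b N), eventually_le (2 * J + 4)] with m hm hcm hKm hsm hm₁ hJm
  obtain ⟨φ, hφ, hφ₀, hB⟩ := P.exists_not_containsSubtree (n := J * m + 1) (by omega)
    (v := levelSlope a b K N κ * (J * m + 1) + 1) (by push_cast; linarith)
  obtain ⟨i, j, hij, hj, hBi, hBj⟩ := exists_children_of_not_containsSubtree P.κ_add_two_le hB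
  obtain ⟨q, hq, hqy⟩ := P.exists_isLine hφ hφ₀ hJ hc₀ hc hcm hKm hsm (by omega) hBi
  obtain ⟨q', hq', hqy'⟩ := P.exists_isLine hφ hφ₀ hJ hc₀ hc hcm hKm hsm hj hBj
  have gap : ((i : ℝ) + 1) / N + 1 / N ≤ j / N := by
    rw [← add_div]
    gcongr
    exact_mod_cast hij
  have slope_nonneg := abs_nonneg (levelSlope a b K N κ)
  refine ⟨φ, q, q', hφ, hφ₀, hq, hq', fun r hr => ?_, fun x hx => ?_, ?_, hm, hsm,
    (div_le_iff₀ P.levelHeight_pos).1 hm₁, by linarith [add_one_le_exp (m : ℝ)]⟩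
  · rw [abs_sub_comm]
    exact le_abs.2 (Or.inl (by linarith [(hqy r hr).2, (hqy' r hr).1]))
  · have := height_le_of_not_containsSubtree_levelSlope P.b_pos hφ hJ hc (zero_add _) hB (x := x)
      (by simpa [add_comm] using hx)
    rw [Nat.cast_zero, mul_zero] at this
    exact this.trans (by linarith)
  · rintro rfl y z hy hy₁ hz hz₁
    linarith [P.height_le_of_not_containsSubtree_one hφ hJ hc hB hy hy₁ hz hz₁]

end Lines

/-! ### Displacements of the images of a pair of lines -/

theorem abs_fst_sub_le_of_chain {a b L top : ℝ} (ha : 0 ≤ a) {w : ℕ → Point} {i j : ℕ} (hij : i ≤ j)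
    (h : ∀ k, i ≤ k → k < j → Near a b L (w k) (w (k + 1)) ∧ (w k).2.2 ≤ top) :
    |(w i).1 - (w j).1| ≤ (j - i) * exp (a * top + L) := by
  have := dist_le_Ico_sum_of_dist_le (f := fun k => (w k).1) (d := fun _ => exp (a * top + L)) hij
    fun {k} hk hkj => (h k hk hkj).1.2.1.trans <| exp_le_exp.2 <|
      add_le_add_left (mul_le_mul_of_nonneg_left (h k hk hkj).2 ha) L
  simpa [Real.dist_eq, Nat.cast_sub hij] using this

theorem abs_snd_sub_le_of_chain {a b L low : ℝ} (hb : 0 ≤ b) {w : ℕ → Point} {i j : ℕ} (hij : i ≤ j)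
    (h : ∀ k, i ≤ k → k < j → Near a b L (w k) (w (k + 1)) ∧ low ≤ (w k).2.2) :
    |(w i).2.1 - (w j).2.1| ≤ (j - i) * exp (-b * low + L) := by
  have := dist_le_Ico_sum_of_dist_le
    (f := fun k => (w k).2.1) (d := fun _ => exp (-b * low + L)) hij
    fun {k} hk hkj => (h k hk hkj).1.2.2.trans <| exp_le_exp.2 <|
      add_le_add_left (mul_le_mul_of_nonpos_left (h k hk hkj).2 (neg_nonpos.2 hb)) L
  simpa [Real.dist_eq, Nat.cast_sub hij] using this

theorem abs_sub_le_of_abs_sub_le {x y z w X Y : ℝ} (hxy : |x - y| ≤ X) (hzw : |z - w| ≤ X)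
    (hx : |x| ≤ Y) (hz : |z| ≤ Y) : |y - w| ≤ 2 * X + 2 * Y := by
  rw [abs_le] at *
  constructor <;> linarith

namespace LinePair

variable {a b K : ℝ} {N κ J m i j : ℕ} {φ : Point → Point} {q q' : ℕ → Point}

theorem swap (h : LinePair a b K N κ J m φ q q') : LinePair a b K N κ J m φ q' q :=
  { h with
    left := h.right
    right := h.left
    separated := fun i hi => by rw [abs_sub_comm]; exact h.separated i hi }

theorem one_le_cast (h : LinePair a b K N κ J m φ q q') : (1 : ℝ) ≤ m := by
  exact_mod_cast h.one_le

theorem zero_snd (h : LinePair a b K N κ J m φ q q') (hi : i ≤ J) : (0, (q i).2) = q i :=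
  Prod.ext (h.left.fst i hi).symm rfl

theorem image_height_le (h : LinePair a b K N κ J m φ q q') (hi : i ≤ J) :
    (φ (q i)).2.2 ≤ levelSlope a b K N κ * (i * m) + 2 * m := by
  rw [← h.zero_snd hi]
  exact h.left.height_le i hi 0 (by simpa using (exp_pos _).le)

theorem near_succ (h : LinePair a b K N κ J m φ q q') (x : ℝ) (hi : i < J) :
    Near a b (K * (m * levelHeight b N)) (φ (x, (q i).2)) (φ (x, (q (i + 1)).2)) := by
  refine (h.coarseEmb _ h.one_le_mul _ _).1 ?_
  have desc : IsDescendant b N m (x, (q i).2) (x, (q (i + 1)).2) :=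
    ⟨rfl, (h.left.isDescendant i hi).2⟩
  exact desc.near (abs_of_nonneg (zero_le_one.trans h.one_le_mul)).le

theorem near_start (P : Params a b K N κ) (h : LinePair a b K N κ J m φ q q') (x : ℝ) :
    Near a b m (φ (x, 0)) (φ (x, (q 0).2)) := by
  refine Near.mono ((h.coarseEmb _ (le_max_left _ _) _ _).1 ⟨?_, ?_, ?_⟩) h.start_le
  · simp [h.left.height 0 J.zero_le, abs_of_pos P.levelHeight_pos]
  · simpa using (exp_pos _).le
  · have one_le_exp : 1 ≤ exp (max 1 (levelHeight b N)) :=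
      Real.one_le_exp (zero_le_one.trans (le_max_left _ _))
    simpa [abs_of_nonneg (h.left.snd_nonneg 0 J.zero_le)] using
      (h.left.snd_le_one 0 J.zero_le).trans one_le_exp

theorem abs_start_le (P : Params a b K N κ) (h : LinePair a b K N κ J m φ q q') :
    |(φ (q 0)).1| ≤ exp m ∧ |(φ (q 0)).2.1| ≤ exp m := by
  have hnear := h.near_start P 0
  rw [h.zero_snd J.zero_le, Prod.mk_zero_zero, h.map_zero] at hnear
  simpa using hnear.2

theorem abs_fst_sub_le (P : Params a b K N κ) (h : LinePair a b K N κ J m φ q q') (x : ℝ)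
    (hij : i ≤ j) (hj : j ≤ J) {top : ℝ} (htop : ∀ k, i ≤ k → k < j → (φ (x, (q k).2)).2.2 ≤ top) :
    |(φ (x, (q i).2)).1 - (φ (x, (q j).2)).1| ≤
      J * exp (a * top + K * (m * levelHeight b N)) := by
  refine (abs_fst_sub_le_of_chain (b := b) P.a_pos.le (w := fun k => φ (x, (q k).2)) hij
    fun k hk hkj => ⟨h.near_succ x (hkj.trans_le hj), htop k hk hkj⟩).trans ?_
  gcongr
  linarith [(by exact_mod_cast hj : (j : ℝ) ≤ J), (i.cast_nonneg : (0 : ℝ) ≤ i)]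

theorem abs_snd_sub_le (P : Params a b K N κ) (h : LinePair a b K N κ J m φ q q')
    (hi : i ≤ J) {low : ℝ} (hlow : ∀ k < i, low ≤ (φ (q k)).2.2) :
    |(φ (q 0)).2.1 - (φ (q i)).2.1| ≤ J * exp (-b * low + K * (m * levelHeight b N)) := by
  refine (abs_snd_sub_le_of_chain (a := a) P.b_pos.le (w := fun k => φ (q k)) i.zero_le
    (L := K * (m * levelHeight b N)) fun k _ hki => ⟨?_, hlow k hki⟩).trans ?_
  · have := h.near_succ 0 (hki.trans_le hi)
    rwa [h.zero_snd (hki.trans_le hi).le, h.zero_snd (hki.trans_le hi)] at this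
  · gcongr
    simpa using hi

theorem two_mul_exp_add_le (h : LinePair a b K N κ J m φ q q') {X : ℝ} (hX : 0 ≤ X) :
    2 * (J * exp X) + 2 * exp m ≤ exp (X + 2 * m) := by
  have exp_X_le : exp X ≤ exp (X + m) := exp_le_exp.2 (by simp)
  have exp_m_le : exp m ≤ exp (X + m) := exp_le_exp.2 (by linarith)
  calc 2 * (J * exp X) + 2 * exp m ≤ (2 * J + 4) * exp (X + m) := by
        nlinarith [mul_le_mul_of_nonneg_left exp_X_le (Nat.cast_nonneg (α := ℝ) J),
          exp_pos (X + m)]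
    _ ≤ exp (X + m + m) := mul_exp_le_exp_add h.le_exp
    _ = exp (X + 2 * m) := by rw [add_assoc, ← two_mul]

theorem mul_levelHeight_nonneg (P : Params a b K N κ) (h : LinePair a b K N κ J m φ q q') :
    0 ≤ K * (m * levelHeight b N) :=
  mul_nonneg (zero_le_one.trans P.one_le_K) (zero_le_one.trans h.one_le_mul)

theorem abs_fst_sub_fst_le (P : Params a b K N κ) (h : LinePair a b K N κ J m φ q q')
    (hi : i ≤ J) {top : ℝ} (htop₀ : 0 ≤ top) (htop : ∀ k < i, (φ (q k)).2.2 ≤ top)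
    (htop' : ∀ k < i, (φ (q' k)).2.2 ≤ top) :
    |(φ (q i)).1 - (φ (q' i)).1| ≤ exp (a * top + K * (m * levelHeight b N) + 2 * m) := by
  have displacement := h.abs_fst_sub_le P 0 i.zero_le hi fun k _ hk => by
    simpa only [h.zero_snd (hk.le.trans hi)] using htop k hk
  have displacement' := h.swap.abs_fst_sub_le P 0 i.zero_le hi fun k _ hk => by
    simpa only [h.swap.zero_snd (hk.le.trans hi)] using htop' k hk
  rw [h.zero_snd hi, h.zero_snd J.zero_le] at displacement
  rw [h.swap.zero_snd hi, h.swap.zero_snd J.zero_le] at displacement'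
  refine (abs_sub_le_of_abs_sub_le displacement displacement' (h.abs_start_le P).1
    (h.swap.abs_start_le P).1).trans (h.two_mul_exp_add_le ?_)
  exact add_nonneg (mul_nonneg P.a_pos.le htop₀) (h.mul_levelHeight_nonneg P)

theorem abs_snd_sub_snd_le (P : Params a b K N κ) (h : LinePair a b K N κ J m φ q q')
    (hi : i ≤ J) {low : ℝ} (hlow₀ : low ≤ 0) (hlow : ∀ k < i, low ≤ (φ (q k)).2.2)
    (hlow' : ∀ k < i, low ≤ (φ (q' k)).2.2) :
    |(φ (q i)).2.1 - (φ (q' i)).2.1| ≤ exp (-b * low + K * (m * levelHeight b N) + 2 * m) := by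
  refine (abs_sub_le_of_abs_sub_le (h.abs_snd_sub_le P hi hlow) (h.swap.abs_snd_sub_le P hi hlow')
    (h.abs_start_le P).2 (h.swap.abs_start_le P).2).trans (h.two_mul_exp_add_le ?_)
  exact add_nonneg (mul_nonneg_of_nonpos_of_nonpos (neg_nonpos.2 P.b_pos.le) hlow₀)
    (h.mul_levelHeight_nonneg P)

theorem log_mul_le_of_near (P : Params a b K N κ) (h : LinePair a b K N κ J m φ q q')
    (hi : i ≤ J) {t : ℝ} (ht : 1 ≤ t) (hnear : Near a b t (φ (q i)) (φ (q' i))) :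
    log N * (i * m) ≤ K * t := by
  have gap_le := (h.separated i hi).trans ((h.coarseEmb t ht _ _).2 hnear).2.2
  have exp_neg_log : exp (-log N) = 1 / N := by
    rw [exp_neg, exp_log (by exact_mod_cast P.one_lt_N.pos), one_div]
  rw [← exp_neg_log, h.left.height i hi, exp_le_exp, neg_mul, mul_left_comm,
    mul_levelHeight P.b_pos] at gap_le
  linarith

theorem log_mul_le_of_abs_sub_le (P : Params a b K N κ) (h : LinePair a b K N κ J m φ q q')
    (hi : i ≤ J) {X Y t : ℝ} (ht : 5 * m ≤ t)
    (hX : |(φ (q i)).1 - (φ (q' i)).1| ≤ exp X) (hY : |(φ (q i)).2.1 - (φ (q' i)).2.1| ≤ exp Y)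
    (hXt : X ≤ a * (levelSlope a b K N κ * (i * m) - 3 * m) + t)
    (hYt : Y ≤ -b * (levelSlope a b K N κ * (i * m) + 2 * m) + t) :
    log N * (i * m) ≤ K * t := by
  have low := h.left.le_height i hi
  have low' := h.right.le_height i hi
  have top := h.image_height_le hi
  have top' := h.swap.image_height_le hi
  refine h.log_mul_le_of_near P hi (by linarith [h.one_le_cast]) ⟨?_, ?_, ?_⟩
  · rw [abs_le]
    constructor <;> linarith
  · refine hX.trans (exp_le_exp.2 (hXt.trans ?_))
    gcongr
    exact P.a_pos.le
  · refine hY.trans (exp_le_exp.2 (hYt.trans ?_))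
    rw [neg_mul, neg_mul]
    gcongr
    exact P.b_pos.le

theorem log_mul_le (P : Params a b K N κ) (h : LinePair a b K N κ J m φ q q') :
    log N * J ≤ K * ((a + b) * |levelSlope a b K N κ| * J +
      (5 * a + 5 * b + K * levelHeight b N + 5)) := by
  have ha := P.a_pos
  have hb := P.b_pos
  have hs := P.levelHeight_pos
  have hK := P.one_le_K
  have hm := h.one_le_cast
  set σ := levelSlope a b K N κ
  set s := levelHeight b N
  have hσ : 0 ≤ σ + |σ| := by linarith [neg_abs_le σ]
  have hσ' : σ - |σ| ≤ 0 := by linarith [le_abs_self σ]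
  have slope_bounds (k : ℕ) (hk : k < J) :
      σ * (k * m) ≤ (σ + |σ|) * (J * m) ∧ (σ - |σ|) * (J * m) ≤ σ * (k * m) := by
    have hkJ : (k : ℝ) * m ≤ J * m := by gcongr
    have hk₀ : 0 ≤ |σ| * ((k : ℝ) * m) := by positivity
    constructor <;> nlinarith
  have top {q q'} (h : LinePair a b K N κ J m φ q q') (k : ℕ) (hk : k < J) :
      (φ (q k)).2.2 ≤ (σ + |σ|) * (J * m) + 2 * m :=
    (h.image_height_le hk.le).trans (add_le_add_left (slope_bounds k hk).1 _)
  have low {q q'} (h : LinePair a b K N κ J m φ q q') (k : ℕ) (hk : k < J) :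
      (σ - |σ|) * (J * m) - 3 * m ≤ (φ (q k)).2.2 :=
    (sub_le_sub_right (slope_bounds k hk).2 _).trans (h.left.le_height k hk.le)
  have fst_le := h.abs_fst_sub_fst_le P le_rfl (by positivity) (top h) (top h.swap)
  have snd_le := h.abs_snd_sub_snd_le P le_rfl
    (by nlinarith [mul_nonneg (Nat.cast_nonneg (α := ℝ) J) (Nat.cast_nonneg (α := ℝ) m)])
    (low h) (low h.swap)
  have ham : 0 ≤ a * m := by positivity
  have hbm : 0 ≤ b * m := by positivity
  have haσ : 0 ≤ a * |σ| * (J * m) := by positivity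
  have hbσ : 0 ≤ b * |σ| * (J * m) := by positivity
  have hKsm : 0 ≤ K * s * m := by positivity
  refine le_of_mul_le_mul_right ?_ (zero_lt_one.trans_le hm)
  have := h.log_mul_le_of_abs_sub_le P le_rfl
    (t := ((a + b) * |σ| * J + (5 * a + 5 * b + K * s + 5)) * m) (by linarith) fst_le snd_le
    (by linarith) (by linarith)
  linarith

theorem exp_lt_abs_fst_sub (P : Params a b K N κ) (h : LinePair a b K N κ J m φ q q')
    (hσ : levelSlope a b K N κ < 0) (hi : i ≤ J)
    (hi' : K * (5 * a + 5 * b + K * levelHeight b N + 5) < log N * i) :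
    exp (a * (levelSlope a b K N κ * (i * m))) < |(φ (q J)).1 - (φ (q' J)).1| := by
  have ha := P.a_pos
  have hb := P.b_pos
  have hm := h.one_le_cast
  have hKsm := h.mul_levelHeight_nonneg P
  set σ := levelSlope a b K N κ
  set s := levelHeight b N
  by_contra! hclose
  have top {q q'} (h : LinePair a b K N κ J m φ q q') (k : ℕ) (hk : i ≤ k) (hkJ : k < J) :
      (φ (0, (q k).2)).2.2 ≤ σ * (i * m) + 2 * m := by
    rw [h.zero_snd hkJ.le]
    exact (h.image_height_le hkJ.le).trans
      (add_le_add_left (mul_le_mul_of_nonpos_left (by gcongr) hσ.le) _)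
  have low {q q'} (h : LinePair a b K N κ J m φ q q') (k : ℕ) (hk : k < i) :
      σ * (i * m) - 3 * m ≤ (φ (q k)).2.2 :=
    (sub_le_sub_right (mul_le_mul_of_nonpos_left (by gcongr) hσ.le) _).trans
      (h.left.le_height k (hk.le.trans hi))
  have him : σ * (i * m) ≤ 0 := mul_nonpos_of_nonpos_of_nonneg hσ.le (by positivity)
  have snd_le := h.abs_snd_sub_snd_le P hi (by linarith) (low h) (low h.swap)
  have ham : 0 ≤ a * m := by positivity
  have hbm : 0 ≤ b * m := by positivity
  have fst_le : |(φ (q i)).1 - (φ (q' i)).1| ≤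
      exp (a * (σ * (i * m) + 2 * m) + K * (m * s) + m) := by
    have displacement := h.abs_fst_sub_le P 0 hi le_rfl (top h)
    have displacement' := h.swap.abs_fst_sub_le P 0 hi le_rfl (top h.swap)
    rw [h.zero_snd le_rfl, h.zero_snd hi] at displacement
    rw [h.swap.zero_snd le_rfl, h.swap.zero_snd hi, abs_sub_comm] at displacement'
    set Z := a * (σ * (i * m) + 2 * m) + K * (m * s)
    have top_le : exp (a * (σ * (i * m))) ≤ exp Z := exp_le_exp.2 (by linarith)
    calc |(φ (q i)).1 - (φ (q' i)).1| ≤ |(φ (q i)).1 - (φ (q J)).1| +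
          (|(φ (q J)).1 - (φ (q' J)).1| + |(φ (q' J)).1 - (φ (q' i)).1|) :=
        (_root_.abs_sub_le _ _ _).trans (add_le_add_right (_root_.abs_sub_le _ _ _) _)
      _ ≤ (2 * J + 4) * exp Z := by linarith [exp_pos Z]
      _ ≤ exp (Z + m) := mul_exp_le_exp_add h.le_exp
  have := h.log_mul_le_of_abs_sub_le P hi (t := (5 * a + 5 * b + K * s + 5) * m)
    (by linarith) fst_le snd_le (by linarith) (by linarith)
  linarith [mul_lt_mul_of_pos_right hi' (by linarith : (0 : ℝ) < m)]

theorem height_le_start_add (P : Params a b K N κ) (h : LinePair a b K N κ J m φ q q') (x : ℝ) :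
    ∀ k ≤ J, (φ (x, (q k).2)).2.2 ≤ (φ (x, 0)).2.2 + m + k * (K * (m * levelHeight b N))
  | 0, _ => by
    rw [Nat.cast_zero, zero_mul]
    linarith [(abs_le.1 (h.near_start P x).1).1]
  | k + 1, hk => by
    have := h.height_le_start_add P x k (Nat.le_of_succ_le hk)
    have hnear := h.near_succ x hk
    push_cast
    linarith [(abs_le.1 hnear.1).1]

theorem abs_top_fst_sub_base_fst_le (P : Params a b K N κ) (h : LinePair a b K N κ J m φ q q')
    {x top : ℝ} (hx : |x| ≤ exp (a * ((1 + J * m) * levelHeight b N)))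
    (htop : ∀ k < J, (φ (x, (q k).2)).2.2 ≤ top) (htop_J : (φ (q J)).2.2 ≤ top)
    (htop_base : (φ (x, 0)).2.2 ≤ top) :
    |(φ (q J)).1 - (φ (x, 0)).1| ≤ (J + 2) * exp (a * top + K * (m * levelHeight b N) + m) := by
  have ha := P.a_pos
  have hKsm := h.mul_levelHeight_nonneg P
  have hKm : K ≤ m := by
    nlinarith [h.start_le, le_max_left 1 (levelHeight b N), P.one_le_K]
  have hnear : Near a b 1 (q J) (x, (q J).2) := by
    refine ⟨by simp, ?_, by simpa using (exp_pos _).le⟩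
    rw [h.left.fst J le_rfl, h.left.height J le_rfl, zero_sub, abs_neg]
    exact hx.trans (exp_le_exp.2 (by linarith))
  set Z := a * top + K * (m * levelHeight b N)
  have top_to_shift : |(φ (q J)).1 - (φ (x, (q J).2)).1| ≤ exp (Z + m) :=
    ((h.coarseEmb 1 le_rfl _ _).1 hnear).2.1.trans (exp_le_exp.2 (by nlinarith))
  have along_line : |(φ (x, (q 0).2)).1 - (φ (x, (q J).2)).1| ≤ J * exp (Z + m) := by
    refine (h.abs_fst_sub_le P x J.zero_le le_rfl fun k _ => htop k).trans ?_
    exact mul_le_mul_of_nonneg_left (exp_le_exp.2 (by linarith [h.one_le_cast])) J.cast_nonneg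
  have base_to_start : |(φ (x, 0)).1 - (φ (x, (q 0).2)).1| ≤ exp (Z + m) :=
    (h.near_start P x).2.1.trans (exp_le_exp.2 (by nlinarith))
  rw [abs_le] at *
  constructor <;> linarith

theorem neg_le_base_height (P : Params a b K N κ) (h : LinePair a b K N κ J m φ q q')
    (hσ : levelSlope a b K N κ < 0) (hj : j ≤ J)
    (hfar : exp (a * (levelSlope a b K N κ * (i * m))) < |(φ (q J)).1 - (φ (q' J)).1|)
    (hij : a * (-levelSlope a b K N κ) * i + 2 * a + K * levelHeight b N + 2 ≤
      a * (-levelSlope a b K N κ) * j) {x : ℝ}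
    (hx : |x| ≤ exp (a * ((1 + J * m) * levelHeight b N))) :
    -((-levelSlope a b K N κ + K * levelHeight b N) * j * m) ≤ (φ (x, 0)).2.2 := by
  have hm := h.one_le_cast
  have hKsm := h.mul_levelHeight_nonneg P
  set σ := levelSlope a b K N κ
  set s := levelHeight b N
  by_contra! hlow
  set top := σ * (j * m) + 2 * m
  have high_le {k : ℕ} (hk : j ≤ k) : σ * (k * m) + 2 * m ≤ top :=
    add_le_add_left (mul_le_mul_of_nonpos_left (by gcongr) hσ.le) _
  have base_le : (φ (x, 0)).2.2 + m + j * (K * (m * s)) ≤ top := by linarith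
  have near_base {q q'} (h : LinePair a b K N κ J m φ q q') :
      |(φ (q J)).1 - (φ (x, 0)).1| ≤ (J + 2) * exp (a * top + K * (m * s) + m) := by
    refine h.abs_top_fst_sub_base_fst_le P hx (fun k hk => ?_)
      ((h.image_height_le le_rfl).trans (high_le hj)) ?_
    · rcases le_total j k with hjk | hkj
      · exact (h.left.height_le k hk.le x hx).trans (high_le hjk)
      · have : (k : ℝ) * (K * (m * s)) ≤ j * (K * (m * s)) := by gcongr
        linarith [base_le, h.height_le_start_add P x k hk.le]
    · linarith [mul_nonneg (Nat.cast_nonneg (α := ℝ) j) hKsm]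
  set Z := a * top + K * (m * s) + m
  refine hfar.not_ge ?_
  calc |(φ (q J)).1 - (φ (q' J)).1|
    _ ≤ |(φ (q J)).1 - (φ (x, 0)).1| + |(φ (x, 0)).1 - (φ (q' J)).1| := _root_.abs_sub_le _ _ _
    _ ≤ (2 * J + 4) * exp Z := by
      rw [abs_sub_comm (φ (x, 0)).1]
      linarith [near_base h, near_base h.swap]
    _ ≤ exp (Z + m) := mul_exp_le_exp_add h.le_exp
    _ ≤ exp (a * (σ * (i * m))) := exp_le_exp.2 (by
      linarith [mul_le_mul_of_nonneg_right hij (zero_le_one.trans hm)])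

end LinePair

/-! ### A small slope reverses the height -/

/-- There are coarse embeddings that nearly preserve the height on a long horizontal segment in the
direction `x`, and that reverse the height with rate `ρ` along a vertical segment above it. -/
def HasFlip (a b K ρ : ℝ) : Prop :=
  ∀ δ > 0, ∀ R₀ : ℝ, ∃ R ≥ R₀, ∃ φ, CoarseEmb a b K φ ∧ φ 0 = 0 ∧
    (∀ x, |x| ≤ exp (a * R) → |(φ (x, 0)).2.2| ≤ δ * R) ∧
    ∃ y, 0 ≤ y ∧ y ≤ 1 ∧ |(φ (0, y, R)).2.2 + ρ * R| ≤ δ * R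

/-- The coarse embeddings of `HasFlip` can be chosen to reverse the height along all the vertical
segments over `0 ≤ y ≤ 1`, without bringing all of the tops together. -/
def HasWideFlip (a b K ρ : ℝ) : Prop :=
  ∀ δ > 0, ∀ R₀ : ℝ, ∃ R ≥ R₀, ∃ φ, CoarseEmb a b K φ ∧ φ 0 = 0 ∧
    (∀ x, |x| ≤ exp (a * R) → |(φ (x, 0)).2.2| ≤ δ * R) ∧
    (∀ y z, 0 ≤ y → y ≤ 1 → 0 ≤ z → z ≤ R → (φ (0, y, z)).2.2 ≤ -ρ * z + δ * R) ∧
    ∃ y y', 0 ≤ y ∧ y ≤ 1 ∧ 0 ≤ y' ∧ y' ≤ 1 ∧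
      exp (-δ * R) < |(φ (0, y, R)).1 - (φ (0, y', R)).1|

/-- The supremum of the average height gains per unit of height. -/
def slope (a b K : ℝ) (N κ : ℕ) : ℝ := levelSlope a b K N κ / levelHeight b N

section Flip

variable {a b K : ℝ} {N κ J m i j : ℕ} {φ : Point → Point} {q q' : ℕ → Point}

theorem Params.slope_mul_levelHeight (P : Params a b K N κ) :
    slope a b K N κ * levelHeight b N = levelSlope a b K N κ :=
  div_mul_cancel₀ _ P.levelHeight_pos.ne'

theorem Params.slope_neg_of_lt (P : Params a b K N κ)
    (h : slope a b K N κ < b / (K * (a + b))) : slope a b K N κ < 0 := by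
  have ha := P.a_pos
  have hb := P.b_pos
  have hs := P.levelHeight_pos
  have hK := zero_lt_one.trans_le P.one_le_K
  by_contra! slope_nonneg
  set σ := levelSlope a b K N κ
  have σ_nonneg : 0 ≤ σ := (mul_nonneg slope_nonneg hs.le).trans_eq P.slope_mul_levelHeight
  have gap : 0 < log N - K * ((a + b) * σ) := by
    rw [slope, div_lt_div_iff₀ hs (by positivity), mul_levelHeight hb] at h
    linarith
  obtain ⟨J, hJ⟩ := exists_nat_gt
    (K * (5 * a + 5 * b + K * levelHeight b N + 5) / (log N - K * ((a + b) * σ)))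
  have one_le_J : 1 ≤ J := by exact_mod_cast (div_nonneg (by positivity) gap.le).trans_lt hJ
  obtain ⟨m, φ, q, q', hl⟩ := (P.eventually_exists_linePair one_le_J).exists
  have := hl.log_mul_le P
  rw [abs_of_nonneg σ_nonneg] at this
  rw [div_lt_iff₀ gap] at hJ
  linarith

theorem LinePair.apply_top (h : LinePair a b K N κ J m φ q q') :
    φ (0, (q J).2.1, (1 + J * m) * levelHeight b N) = φ (q J) := by
  rw [← h.left.height J le_rfl, Prod.mk.eta, h.zero_snd le_rfl]

theorem LinePair.abs_base_height_le (P : Params a b K N κ) (h : LinePair a b K N κ J m φ q q')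
    (hσ : levelSlope a b K N κ < 0) (hj : j ≤ J)
    (hfar : exp (a * (levelSlope a b K N κ * (i * m))) < |(φ (q J)).1 - (φ (q' J)).1|)
    (hij : a * (-levelSlope a b K N κ) * i + 2 * a + K * levelHeight b N + 2 ≤
      a * (-levelSlope a b K N κ) * j) {t : ℝ} (ht : 3 * m ≤ t)
    (ht' : (-levelSlope a b K N κ + K * levelHeight b N) * j * m ≤ t) {x : ℝ}
    (hx : |x| ≤ exp (a * ((1 + J * m) * levelHeight b N))) : |(φ (x, 0)).2.2| ≤ t :=
  abs_le.2 ⟨(neg_le_neg ht').trans (h.neg_le_base_height P hσ hj hfar hij hx),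
    (h.base_height_le x hx).trans ht⟩

theorem Params.exists_linePair_mul_le (P : Params a b K N κ) (C : ℝ) {δ : ℝ} (hδ : 0 < δ)
    (J₀ : ℕ) (R₀ : ℝ) :
    ∃ J m : ℕ, ∃ φ q q', LinePair a b K N κ J m φ q q' ∧ J₀ ≤ J ∧
      R₀ ≤ (1 + J * m) * levelHeight b N ∧ C * m ≤ δ * ((1 + J * m) * levelHeight b N) := by
  have hs := P.levelHeight_pos
  obtain ⟨J, hJ, hJC⟩ := ((Filter.eventually_ge_atTop (max 1 J₀)).and
    (tendsto_natCast_atTop_atTop.eventually_ge_atTop (C / (δ * levelHeight b N)))).exists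
  have one_le_J : 1 ≤ J := (le_max_left _ _).trans hJ
  obtain ⟨m, ⟨φ, q, q', hl⟩, hm⟩ := ((P.eventually_exists_linePair one_le_J).and
    (tendsto_natCast_atTop_atTop.eventually_ge_atTop (R₀ / levelHeight b N))).exists
  rw [div_le_iff₀ (by positivity)] at hJC
  rw [div_le_iff₀ hs] at hm
  refine ⟨J, m, φ, q, q', hl, (le_max_right _ _).trans hJ, hm.trans ?_, ?_⟩
  · gcongr
    have : (m : ℝ) ≤ J * m := le_mul_of_one_le_left m.cast_nonneg (by exact_mod_cast one_le_J)
    linarith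
  · linarith [mul_le_mul_of_nonneg_right hJC (Nat.cast_nonneg (α := ℝ) m), mul_pos hδ hs]

theorem Params.exists_linePair_of_levelSlope_neg (P : Params a b K N κ)
    (hσ : levelSlope a b K N κ < 0) {δ : ℝ} (hδ : 0 < δ) (R₀ : ℝ) :
    ∃ J m : ℕ, ∃ φ q q', LinePair a b K N κ J m φ q q' ∧ R₀ ≤ (1 + J * m) * levelHeight b N ∧
      4 * m - levelSlope a b K N κ ≤ δ * ((1 + J * m) * levelHeight b N) ∧
      (∀ x, |x| ≤ exp (a * ((1 + J * m) * levelHeight b N)) →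
        |(φ (x, 0)).2.2| ≤ δ * ((1 + J * m) * levelHeight b N)) ∧
      exp (-δ * ((1 + J * m) * levelHeight b N)) < |(φ (q J)).1 - (φ (q' J)).1| := by
  have ha := P.a_pos
  have hK := zero_lt_one.trans_le P.one_le_K
  have hs := P.levelHeight_pos
  set σ := levelSlope a b K N κ
  set s := levelHeight b N
  have hσ' : 0 < -σ := neg_pos.2 hσ
  obtain ⟨i, hi⟩ := exists_nat_gt (K * (5 * a + 5 * b + K * s + 5) / log N)
  rw [div_lt_iff₀' P.log_pos] at hi
  obtain ⟨j, hj⟩ := exists_nat_ge ((a * -σ * i + 2 * a + K * s + 2) / (a * -σ))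
  rw [div_le_iff₀' (by positivity)] at hj
  obtain ⟨J, m, φ, q, q', hl, hJ, hR, hC⟩ :=
    P.exists_linePair_mul_le (4 - σ + (-σ + K * s) * j + a * -σ * i) hδ (max i j) R₀
  have hm := hl.one_le_cast
  have base_term : 0 ≤ (-σ + K * s) * j * m := by positivity
  have top_term : 0 ≤ a * -σ * i * m := by positivity
  have slope_term : -σ ≤ -σ * m := le_mul_of_one_le_right hσ'.le hm
  have hfar := hl.exp_lt_abs_fst_sub P hσ ((le_max_left i j).trans hJ) hi
  refine ⟨J, m, φ, q, q', hl, hR, by linarith, fun x hx =>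
    hl.abs_base_height_le P hσ ((le_max_right i j).trans hJ) hfar hj (by linarith) (by linarith) hx,
    (exp_le_exp.2 ?_).trans_lt hfar⟩
  linarith

theorem Params.levelSlope_neg (P : Params a b K N κ) (h : slope a b K N κ < 0) :
    levelSlope a b K N κ < 0 :=
  P.slope_mul_levelHeight ▸ mul_neg_of_neg_of_pos h P.levelHeight_pos

theorem Params.hasFlip (P : Params a b K N κ) (h : slope a b K N κ < 0) :
    HasFlip a b K (-slope a b K N κ) := by
  intro δ hδ R₀
  obtain ⟨J, m, φ, q, q', hl, hR, hm, hbase, -⟩ :=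
    P.exists_linePair_of_levelSlope_neg (P.levelSlope_neg h) hδ R₀
  refine ⟨_, hR, φ, hl.coarseEmb, hl.map_zero, hbase, (q J).2.1,
    hl.left.snd_nonneg J le_rfl, hl.left.snd_le_one J le_rfl, ?_⟩
  rw [hl.apply_top, neg_mul, mul_left_comm, P.slope_mul_levelHeight, abs_le]
  constructor <;>
    linarith [hl.left.le_height J le_rfl, hl.image_height_le le_rfl, P.levelSlope_neg h]

theorem Params.hasWideFlip (P : Params a b K N 1) (h : slope a b K N 1 < 0) :
    HasWideFlip a b K (-slope a b K N 1) := by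
  intro δ hδ R₀
  obtain ⟨J, m, φ, q, q', hl, hR, hm, hbase, hfar⟩ :=
    P.exists_linePair_of_levelSlope_neg (P.levelSlope_neg h) hδ R₀
  refine ⟨_, hR, φ, hl.coarseEmb, hl.map_zero, hbase, fun y z hy₀ hy₁ hz₀ hz => ?_,
    (q J).2.1, (q' J).2.1, hl.left.snd_nonneg J le_rfl, hl.left.snd_le_one J le_rfl,
    hl.right.snd_nonneg J le_rfl, hl.right.snd_le_one J le_rfl, ?_⟩
  · have := hl.height_le rfl y z hy₀ hy₁ hz₀ hz
    have slope_mul : levelSlope a b K N 1 * (z / levelHeight b N) = - -slope a b K N 1 * z := by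
      rw [slope]
      ring
    linarith [P.levelSlope_neg h]
  · rwa [hl.apply_top, hl.swap.apply_top]

end Flip

/-! ### The slope is positive when `a ≠ b` -/

/-- From every point, some coarsely vertical path going down by `R` gains at most the height `ρ * R`
in the image, up to a small linear error. -/
def DownwardGainLE (a b K ρ : ℝ) : Prop :=
  ∀ ε > 0, ∃ c : ℝ, ∀ φ, CoarseEmb a b K φ → ∀ p : Point, ∀ R, 0 ≤ R →
    ∃ u, 0 ≤ u ∧ u ≤ exp (a * p.2.2) ∧
      (φ (p.1 + u, p.2.1, p.2.2 - R)).2.2 ≤ (φ p).2.2 + (ρ + ε) * R + c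

section Positive

variable {a b K : ℝ} {N κ : ℕ} {φ : Point → Point}

theorem near_vertical {x y z z' ℓ : ℝ} (h : |z - z'| ≤ ℓ) : Near a b ℓ (x, y, z) (x, y, z') :=
  ⟨h, by simpa using (exp_pos _).le, by simpa using (exp_pos _).le⟩

theorem near_snd {x y y' z ℓ : ℝ} (hl : 0 ≤ ℓ) (h : |y - y'| ≤ exp (-b * z + ℓ)) :
    Near a b ℓ (x, y, z) (x, y', z) :=
  ⟨by simpa using hl, by simpa using (exp_pos _).le, h⟩

theorem near_snd_base {x y y' : ℝ} (h : |y - y'| ≤ 1) : Near a b 1 (x, y, 0) (x, y', 0) :=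
  near_snd zero_le_one (h.trans (by simp))

theorem mul_le_mul_floor_add {τ s R : ℝ} (hs : 0 < s) (hR : 0 ≤ R) :
    τ * R ≤ τ * (⌊R / s⌋₊ * s) + |τ| * s := by
  have floor_le : (⌊R / s⌋₊ : ℝ) * s ≤ R := (le_div_iff₀ hs).1 (Nat.floor_le (by positivity))
  have le_floor : R ≤ (⌊R / s⌋₊ + 1) * s := (div_le_iff₀ hs).1 (Nat.lt_floor_add_one _).le
  nlinarith [le_abs_self τ, abs_nonneg τ]

theorem Params.downwardGainLE (P : Params b a K N κ) :
    DownwardGainLE a b K (-slope b a K N κ) := by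
  intro ε hε
  have hs := P.levelHeight_pos
  obtain ⟨c, -, hc⟩ := P.exists_gainsHeight (mul_pos hε hs)
  rw [← P.slope_mul_levelHeight, ← sub_mul] at hc
  set τ := slope b a K N κ
  set s := levelHeight a N
  refine ⟨c + K * max 1 s + |τ - ε| * s, fun φ hφ p R hR => ?_⟩
  obtain ⟨q, hq, hqφ⟩ := (hc ⌊R / s⌋₊ _ hφ.mirror (mirror p)).exists_mem P.b_pos P.one_le_κ
  have q_fst : q.1 = p.2.1 := hq.1
  have q_height : q.2.2 = -p.2.2 + ⌊R / s⌋₊ * s := hq.2.1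
  have q_snd : p.1 ≤ q.2.1 ∧ q.2.1 ≤ p.1 + exp (a * p.2.2) := by
    have := hq.2.2
    simp only [mirror, neg_mul_neg] at this
    exact ⟨this.1, by linarith [exp_pos (-a * q.2.2)]⟩
  have image_height : -(φ p).2.2 + ((τ - ε) * s * ⌊R / s⌋₊ - c) ≤ -(φ (mirror q)).2.2 := by
    simp only [mem_ofPred_eq, mirror_mirror] at hqφ
    exact hqφ
  refine ⟨q.2.1 - p.1, by linarith, by linarith, ?_⟩
  have hnear : Near a b (max 1 s) (p.1 + (q.2.1 - p.1), p.2.1, p.2.2 - R) (mirror q) := by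
    rw [add_sub_cancel, mirror, q_fst]
    refine near_vertical (le_trans (abs_le.2 ?_) (le_max_right 1 s))
    have floor_le := (le_div_iff₀ hs).1 (Nat.floor_le (by positivity : 0 ≤ R / s))
    have le_floor := (div_le_iff₀ hs).1 (Nat.lt_floor_add_one (R / s)).le
    constructor <;> linarith
  have := (abs_le.1 (hφ.abs_height_sub_le (le_max_left _ _) hnear)).2
  linarith [mul_le_mul_floor_add (τ := τ - ε) hs hR]

theorem le_height_of_base_of_downward {ρ ε T R c : ℝ} (ha : 0 < a) (hφ : CoarseEmb a b K φ)
    (hbase : ∀ x, |x| ≤ exp (a * R) → -T ≤ (φ (x, 0)).2.2)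
    (hdown : ∀ p : Point, ∀ R, 0 ≤ R → ∃ u, 0 ≤ u ∧ u ≤ exp (a * p.2.2) ∧
      (φ (p.1 + u, p.2.1, p.2.2 - R)).2.2 ≤ (φ p).2.2 + (ρ + ε) * R + c)
    {y z : ℝ} (hy₀ : 0 ≤ y) (hy₁ : y ≤ 1) (hz₀ : 0 ≤ z) (hz : z ≤ R) :
    -(ρ + ε) * z - (T + c + K) ≤ (φ (0, y, z)).2.2 := by
  obtain ⟨u, hu₀, hu, huφ⟩ := hdown (0, y, z) z hz₀
  simp only [zero_add, sub_self] at hu huφ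
  have hnear : Near a b 1 (u, y, 0) (u, 0) :=
    near_snd_base (by simpa [abs_of_nonneg hy₀] using hy₁)
  have shift := (abs_le.1 (hφ.abs_height_sub_le le_rfl hnear)).1
  have base := hbase u <| by
    rw [abs_of_nonneg hu₀]
    exact hu.trans (exp_le_exp.2 (by gcongr))
  linarith

theorem HasFlip.le_of_downwardGainLE (ha : 0 < a) {ρ ρ' : ℝ} (h : HasFlip a b K ρ)
    (h' : DownwardGainLE a b K ρ') : ρ ≤ ρ' := by
  by_contra! hlt
  obtain ⟨c, hc⟩ := h' ((ρ - ρ') / 4) (by linarith)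
  obtain ⟨R, hR, φ, hφ, -, hbase, y, hy₀, hy₁, hy⟩ := h ((ρ - ρ') / 8) (by linarith)
    (max 0 ((c + K + 1) * 2 / (ρ - ρ')))
  have hR₀ : 0 ≤ R := (le_max_left _ _).trans hR
  have hR' := (le_max_right _ _).trans hR
  rw [div_le_iff₀ (by linarith)] at hR'
  have := le_height_of_base_of_downward ha hφ (fun x hx => (abs_le.1 (hbase x hx)).1) (hc φ hφ)
    hy₀ hy₁ hR₀ le_rfl
  linarith [(abs_le.1 hy).2]

theorem CoarseEmb.abs_fst_sub_le_of_horizontal (ha : 0 < a) (hb : 0 < b) (hφ : CoarseEmb a b K φ)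
    {R top : ℝ} (hR : 0 ≤ R) (htop : ∀ y ∈ Icc (0 : ℝ) 1, (φ (0, y, R)).2.2 ≤ top)
    {y y' : ℝ} (hy : y ∈ Icc (0 : ℝ) 1) (hy' : y' ∈ Icc (0 : ℝ) 1) :
    |(φ (0, y, R)).1 - (φ (0, y', R)).1| ≤ exp (a * top + K + (b * R + 1)) := by
  have one_le_exp : 1 ≤ exp (b * R) := Real.one_le_exp (by positivity)
  set M := ⌈exp (b * R)⌉₊
  have le_M : exp (b * R) ≤ M := Nat.le_ceil _
  have M_lt : (M : ℝ) < exp (b * R) + 1 := Nat.ceil_lt_add_one (by linarith)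
  have M_pos : (0 : ℝ) < M := by linarith
  have hsub : |y - y'| ≤ 1 := abs_le.2 ⟨by linarith [hy.1, hy'.2], by linarith [hy.2, hy'.1]⟩
  have chain := abs_fst_sub_le_of_chain (b := b) (L := K * 1) ha.le M.zero_le
    (w := fun k => φ (0, y + (k / M : ℝ) • (y' - y), R)) fun k _ hk => by
      have div_le : (k / M : ℝ) ≤ 1 := (div_le_one M_pos).2 (by exact_mod_cast hk.le)
      refine ⟨(hφ 1 le_rfl _ _).1 (near_snd zero_le_one ?_),
        htop _ ((convex_Icc 0 1).add_smul_sub_mem hy hy' ⟨by positivity, div_le⟩)⟩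
      have step : y + (k / M : ℝ) • (y' - y) - (y + ((k + 1 : ℕ) / M : ℝ) • (y' - y)) =
          (y - y') / M := by
        simp only [smul_eq_mul]
        push_cast
        ring
      rw [step, abs_div, abs_of_pos M_pos, div_le_iff₀ M_pos]
      calc |y - y'| ≤ exp (-b * R) * exp (b * R) := by rwa [← exp_add, neg_mul, neg_add_cancel,
            exp_zero]
        _ ≤ exp (-b * R + 1) * M := by gcongr; linarith
  simp only [Nat.cast_zero, zero_div, zero_smul, add_zero, sub_zero, div_self M_pos.ne', one_smul,
    mul_one, add_sub_cancel] at chain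
  refine chain.trans (mul_exp_le_exp_add ?_)
  rw [exp_add]
  nlinarith [Real.add_one_le_exp (1 : ℝ)]

theorem HasWideFlip.mul_le (ha : 0 < a) (hb : 0 < b) {ρ : ℝ} (h : HasWideFlip a b K ρ) :
    a * ρ ≤ b := by
  by_contra! hlt
  have gap : 0 < a * ρ - b := sub_pos.2 hlt
  set δ := (a * ρ - b) / (2 * (a + 1))
  have hδ : δ * (2 * (a + 1)) = a * ρ - b := div_mul_cancel₀ _ (by positivity)
  obtain ⟨R, hR, φ, hφ, -, -, htop, y, y', hy₀, hy₁, hy₀', hy₁', hfar⟩ :=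
    h δ (by positivity) (max 0 ((K + 1) * 2 / (a * ρ - b)))
  have hR₀ : 0 ≤ R := (le_max_left _ _).trans hR
  have hR' := (le_max_right _ _).trans hR
  rw [div_le_iff₀ gap, ← hδ] at hR'
  have := hfar.trans_le <| hφ.abs_fst_sub_le_of_horizontal ha hb hR₀
    (fun y hy => htop y R hy.1 hy.2 hR₀ le_rfl) ⟨hy₀, hy₁⟩ ⟨hy₀', hy₁'⟩
  rw [exp_lt_exp] at this
  linarith [congrArg (· * R) hδ]

/-- The height of `φ` is `-ρ * z` up to the error `T` along the vertical segments of length `R` over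
`0 ≤ y ≤ 1`. -/
structure IsFlip (a b K ρ T R : ℝ) (φ : Point → Point) : Prop where
  coarseEmb : CoarseEmb a b K φ
  map_zero : φ 0 = 0
  abs_height_add_le : ∀ y ∈ Icc (0 : ℝ) 1, ∀ z ∈ Icc 0 R, |(φ (0, y, z)).2.2 + ρ * z| ≤ T

theorem natCast_le_of_separated {n : ℕ} {f : ℕ → ℝ} {X g : ℝ} (hg : 0 < g) (hX₀ : 0 ≤ X)
    (hX : ∀ k < n, |f k| ≤ X) (hsep : ∀ k < n, ∀ l < n, k ≠ l → g < |f k - f l|) :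
    (n : ℝ) ≤ 2 * X / g + 1 := by
  have nonneg k (hk : k < n) : 0 ≤ (f k + X) / g :=
    div_nonneg (by linarith [(abs_le.1 (hX k hk)).1]) hg.le
  have card_le : (Finset.range n).card ≤ (Finset.range (⌊2 * X / g⌋₊ + 1)).card := by
    refine Finset.card_le_card_of_injOn (fun k => ⌊(f k + X) / g⌋₊) (fun k hk => ?_)
      fun k hk l hl hkl => ?_
    · rw [Finset.coe_range, mem_Iio] at hk
      rw [Finset.coe_range, mem_Iio]
      refine Nat.lt_succ_of_le (Nat.floor_le_floor ?_)
      gcongr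
      linarith [(abs_le.1 (hX k hk)).2]
    · rw [Finset.coe_range, mem_Iio] at hk hl
      by_contra hne
      have := Int.abs_sub_lt_one_of_floor_eq_floor (a := (f k + X) / g) (b := (f l + X) / g) <| by
        rw [← Int.natCast_floor_eq_floor (nonneg k hk), ← Int.natCast_floor_eq_floor (nonneg l hl)]
        exact congrArg Nat.cast hkl
      rw [← sub_div, add_sub_add_right_eq_sub, abs_div, abs_of_pos hg, div_lt_one hg] at this
      exact this.not_gt (hsep k hk l hl hne)
  rw [Finset.card_range, Finset.card_range] at card_le
  calc (n : ℝ) ≤ ⌊2 * X / g⌋₊ + 1 := by exact_mod_cast card_le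
    _ ≤ 2 * X / g + 1 := by linarith [Nat.floor_le (by positivity : 0 ≤ 2 * X / g)]

namespace IsFlip

variable {ρ T R y y' : ℝ}

theorem near_vertical_succ (hφ : CoarseEmb a b K φ) (k : ℕ) :
    Near a b K (φ (0, y, min k R)) (φ (0, y, min (k + 1 : ℕ) R)) := by
  refine mul_one K ▸ (hφ 1 le_rfl _ _).1 (near_vertical ((abs_min_sub_min_le_max _ _ _ _).trans ?_))
  simp

theorem abs_fst_le (ha : 0 < a) (hρ : 0 ≤ ρ) (h : IsFlip a b K ρ T R φ) (hR : 0 ≤ R) (hK : K ≤ T)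
    (hT : 2 * R + 3 ≤ exp T) (hK₀ : 0 ≤ K) (hy : y ∈ Icc (0 : ℝ) 1) :
    |(φ (0, y, R)).1| ≤ exp ((a + 2) * T) := by
  have chain := abs_fst_sub_le_of_chain (b := b) (L := K) (top := T) ha.le ⌈R⌉₊.zero_le
    (w := fun k => φ (0, y, min k R)) fun k _ _ => ⟨near_vertical_succ h.coarseEmb k, by
      have hk : 0 ≤ min (k : ℝ) R := le_min k.cast_nonneg hR
      linarith [(abs_le.1 (h.abs_height_add_le y hy _ ⟨hk, min_le_right _ _⟩)).2, mul_nonneg hρ hk]⟩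
  rw [Nat.cast_zero, min_eq_left hR, min_eq_right (Nat.le_ceil R), sub_zero] at chain
  have start : |(φ (0, y, 0)).1| ≤ exp K := by
    have := ((h.coarseEmb 1 le_rfl _ _).1 (near_snd_base (a := a) (x := 0) (y := 0) (y' := y)
      (by simpa [abs_of_nonneg hy.1] using hy.2))).2.1
    rwa [Prod.mk_zero_zero, Prod.mk_zero_zero, h.map_zero, Prod.snd_zero, Prod.snd_zero,
      Prod.fst_zero, mul_zero, zero_add, mul_one, zero_sub, abs_neg] at this
  have start_le : exp K ≤ exp (a * T + K) :=
    exp_le_exp.2 (le_add_of_nonneg_left (mul_nonneg ha.le (hK₀.trans hK)))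
  calc |(φ (0, y, R)).1| ≤ |(φ (0, y, 0)).1| + |(φ (0, y, 0)).1 - (φ (0, y, R)).1| := by
        linarith [abs_sub_abs_le_abs_sub (φ (0, y, R)).1 (φ (0, y, 0)).1,
          abs_sub_comm (φ (0, y, R)).1 (φ (0, y, 0)).1]
    _ ≤ (⌈R⌉₊ + 1) * exp (a * T + K) := by linarith
    _ ≤ exp (a * T + K + T) := mul_exp_le_exp_add (by linarith [Nat.ceil_lt_add_one hR])
    _ ≤ exp ((a + 2) * T) := exp_le_exp.2 (by linarith)

theorem abs_snd_sub_le (hb : 0 < b) (hρ : 0 ≤ ρ) (h : IsFlip a b K ρ T R φ) (hR : 0 ≤ R)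
    (hy : y ∈ Icc (0 : ℝ) 1) :
    |(φ (0, y, 0)).2.1 - (φ (0, y, R)).2.1| ≤ (R + 1) * exp (b * (ρ * R + T) + K) := by
  have chain := abs_snd_sub_le_of_chain (a := a) (L := K) (low := -(ρ * R + T)) hb.le ⌈R⌉₊.zero_le
    (w := fun k => φ (0, y, min k R)) fun k _ _ => ⟨near_vertical_succ h.coarseEmb k, by
      have hk : min (k : ℝ) R ≤ R := min_le_right _ _
      linarith [(abs_le.1 (h.abs_height_add_le y hy _ ⟨le_min k.cast_nonneg hR, hk⟩)).1,
        mul_le_mul_of_nonneg_left hk hρ]⟩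
  rw [Nat.cast_zero, min_eq_left hR, min_eq_right (Nat.le_ceil R), sub_zero, neg_mul_neg] at chain
  refine chain.trans ?_
  gcongr
  exact (Nat.ceil_lt_add_one hR).le

theorem abs_snd_top_sub_le (hb : 0 < b) (hρ : 0 ≤ ρ) (h : IsFlip a b K ρ T R φ) (hR : 0 ≤ R)
    (hT : 2 * R + 3 ≤ exp T) (hy : y ∈ Icc (0 : ℝ) 1) (hy' : y' ∈ Icc (0 : ℝ) 1) :
    |(φ (0, y, R)).2.1 - (φ (0, y', R)).2.1| ≤ exp (b * (ρ * R + T) + K + T) := by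
  have base : |(φ (0, y, 0)).2.1 - (φ (0, y', 0)).2.1| ≤ exp (b * (ρ * R + T) + K) := by
    refine ((h.coarseEmb 1 le_rfl _ _).1 (near_snd_base ?_)).2.2.trans (exp_le_exp.2 ?_)
    · exact abs_le.2 ⟨by linarith [hy.1, hy'.2], by linarith [hy.2, hy'.1]⟩
    · have := (abs_le.1 (h.abs_height_add_le y hy 0 ⟨le_rfl, hR⟩)).1
      have : 0 ≤ b * (ρ * R) := by positivity
      nlinarith
  refine le_trans ?_ (mul_exp_le_exp_add hT)
  have segment := h.abs_snd_sub_le hb hρ hR hy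
  have segment' := h.abs_snd_sub_le hb hρ hR hy'
  rw [abs_le] at *
  constructor <;> linarith

theorem abs_sub_le (ha : 0 < a) (hb : 0 < b) (hρ : 0 ≤ ρ) (h : IsFlip a b K ρ T R φ) (hR : 0 ≤ R)
    (hK₁ : 1 ≤ K) (hK : K ≤ T) (hT : 2 * R + 3 ≤ exp T)
    (hy : y ∈ Icc (0 : ℝ) 1) (hy' : y' ∈ Icc (0 : ℝ) 1)
    (hfst : |(φ (0, y, R)).1 - (φ (0, y', R)).1| ≤ exp (-(a * (ρ * R)))) :
    |y - y'| ≤ exp (-b * R + K * ((a + 2 * b + 2) * T)) := by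
  have top := abs_le.1 (h.abs_height_add_le y hy R ⟨hR, le_rfl⟩)
  have top' := abs_le.1 (h.abs_height_add_le y' hy' R ⟨hR, le_rfl⟩)
  have haT : 0 ≤ a * T := by nlinarith
  have hbT : 0 ≤ b * T := by nlinarith
  suffices hnear : Near a b ((a + 2 * b + 2) * T) (φ (0, y, R)) (φ (0, y', R)) from
    ((h.coarseEmb _ (by linarith) _ _).2 hnear).2.2
  refine ⟨?_, ?_, ?_⟩
  · rw [abs_le]
    constructor <;> linarith
  · exact hfst.trans (exp_le_exp.2 (by nlinarith))
  · exact (h.abs_snd_top_sub_le hb hρ hR hT hy hy').trans (exp_le_exp.2 (by nlinarith))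

theorem mul_le (ha : 0 < a) (hb : 0 < b) (hρ : 0 ≤ ρ) (h : IsFlip a b K ρ T R φ) (hR : 0 ≤ R)
    (hK₁ : 1 ≤ K) (hK : K ≤ T) (hT : 2 * R + 3 ≤ exp T) :
    b * R ≤ a * ρ * R + (K * (a + 2 * b + 2) + a + 2) * T + 3 := by
  set Q := K * ((a + 2 * b + 2) * T)
  set η := exp (-b * R + Q + 1)
  have η_pos : 0 < η := exp_pos _
  have mem (k : ℕ) (hk : k < ⌊1 / η⌋₊ + 1) : k * η ∈ Icc (0 : ℝ) 1 :=
    ⟨by positivity, (le_div_iff₀ η_pos).1 <|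
      (Nat.le_floor_iff (by positivity)).1 (Nat.lt_succ_iff.1 hk)⟩
  have count := natCast_le_of_separated (n := ⌊1 / η⌋₊ + 1) (f := fun k => (φ (0, k * η, R)).1)
    (exp_pos (-(a * (ρ * R)))) (exp_pos ((a + 2) * T)).le
    (fun k hk => h.abs_fst_le ha hρ hR hK hT (by linarith) (mem k hk)) fun k hk l hl hkl => by
      by_contra! hclose
      have close := h.abs_sub_le ha hb hρ hR hK₁ hK hT (mem k hk) (mem l hl) hclose
      have one_le : 1 ≤ |(k : ℝ) - l| := by
        exact_mod_cast Int.one_le_abs (sub_ne_zero.2 (Nat.cast_injective.ne hkl))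
      have lt_η : exp (-b * R + Q) < η := exp_lt_exp.2 (lt_add_one _)
      rw [← sub_mul, abs_mul, abs_of_pos η_pos] at close
      nlinarith
  rw [mul_div_assoc, ← exp_sub, sub_neg_eq_add] at count
  have le_count : exp (b * R - Q - 1) ≤ (⌊1 / η⌋₊ + 1 : ℕ) := by
    have inv_η : 1 / η = exp (b * R - Q - 1) := by
      rw [one_div, ← exp_neg]
      ring_nf
    push_cast
    exact inv_η ▸ (Nat.lt_floor_add_one (1 / η)).le
  have count_le : 2 * exp ((a + 2) * T + a * (ρ * R)) + 1 ≤
      exp ((a + 2) * T + a * (ρ * R) + 2) := by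
    rw [exp_add _ 2]
    have : 1 ≤ exp ((a + 2) * T + a * (ρ * R)) := Real.one_le_exp <| by
      have : 0 ≤ T := by linarith
      positivity
    nlinarith [Real.add_one_le_exp (2 : ℝ)]
  have := exp_le_exp.1 (le_count.trans (count.trans count_le))
  linarith

end IsFlip

theorem eventually_two_mul_add_three_le_exp {δ : ℝ} (hδ : 0 < δ) :
    ∀ᶠ R : ℝ in Filter.atTop, 2 * R + 3 ≤ exp (δ * R) := by
  filter_upwards [(isLittleO_pow_exp_pos_mul_atTop 1 hδ).bound (c := 1 / 5) (by norm_num),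
    Filter.eventually_ge_atTop 1] with R hR one_le
  rw [pow_one, norm_of_nonneg (by linarith), norm_of_nonneg (exp_pos _).le] at hR
  linarith

theorem HasWideFlip.le_mul (ha : 0 < a) (hb : 0 < b) (hK : 1 ≤ K) {ρ : ℝ} (hρ : 0 < ρ)
    (h : HasWideFlip a b K ρ) (h' : DownwardGainLE a b K ρ) : b ≤ a * ρ := by
  by_contra! hlt
  have gap : 0 < b - a * ρ := sub_pos.2 hlt
  set C := K * (a + 2 * b + 2) + a + 2
  set δ := (b - a * ρ) / (6 * C)
  have hC : 0 < C := by positivity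
  have hδ : 0 < δ := div_pos gap (mul_pos (by norm_num) hC)
  have hδC : δ * (6 * C) = b - a * ρ := div_mul_cancel₀ _ (mul_pos (by norm_num) hC).ne'
  obtain ⟨c, hc⟩ := h' δ hδ
  obtain ⟨R₀, hR₀⟩ := Filter.eventually_atTop.1 <|
    (eventually_two_mul_add_three_le_exp (δ := 3 * δ) (by positivity)).and <|
    (Filter.eventually_ge_atTop ((K + |c|) / δ)).and <|
    Filter.eventually_gt_atTop (6 / (b - a * ρ))
  obtain ⟨R, hR, φ, hφ, hφ₀, hbase, htop, -⟩ := h δ hδ R₀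
  obtain ⟨hexp, hcR, hgap⟩ := hR₀ R hR
  rw [div_le_iff₀ hδ] at hcR
  rw [div_lt_iff₀ gap] at hgap
  have hR_nonneg : 0 ≤ R := by nlinarith [abs_nonneg c]
  have flip : IsFlip a b K ρ (3 * δ * R) R φ := by
    refine ⟨hφ, hφ₀, fun y hy z hz => abs_le.2 ⟨?_, ?_⟩⟩
    · have := le_height_of_base_of_downward ha hφ (fun x hx => (abs_le.1 (hbase x hx)).1) (hc φ hφ)
        hy.1 hy.2 hz.1 hz.2
      linarith [mul_le_mul_of_nonneg_left hz.2 hδ.le, le_abs_self c]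
    · linarith [htop y z hy.1 hy.2 hz.1 hz.2, mul_nonneg hδ.le hR_nonneg]
  have := flip.mul_le ha hb hρ.le hR_nonneg hK
    (by linarith [abs_nonneg c, mul_nonneg hδ.le hR_nonneg]) hexp
  linarith [congrArg (· * R) hδC]

theorem Params.swap (P : Params a b K N κ) : Params b a K N κ :=
  { P with
    a_pos := P.b_pos
    b_pos := P.a_pos }

theorem Params.one (P : Params a b K N κ) : Params a b K N 1 :=
  { P with
    one_le_κ := le_rfl
    κ_add_two_le := (Nat.add_le_add_right P.one_le_κ 2).trans P.κ_add_two_le }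

theorem Params.slope_one_nonneg (P : Params a b K N 1) (hab : a ≠ b) : 0 ≤ slope a b K N 1 := by
  by_contra! h
  have le := (P.hasFlip h).le_of_downwardGainLE P.a_pos P.swap.downwardGainLE
  have h' : slope b a K N 1 < 0 := by linarith
  have ge := (P.swap.hasFlip h').le_of_downwardGainLE P.b_pos P.downwardGainLE
  have slope_eq : slope b a K N 1 = slope a b K N 1 := by linarith
  have hflip := P.hasWideFlip h
  have hflip' := P.swap.hasWideFlip h'
  have hdown := P.swap.downwardGainLE
  rw [slope_eq] at hflip' hdown
  set ρ := -slope a b K N 1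
  have hρ : 0 < ρ := neg_pos.2 h
  have a_eq : a * ρ = b := le_antisymm (hflip.mul_le P.a_pos P.b_pos)
    (hflip.le_mul P.a_pos P.b_pos P.one_le_K hρ hdown)
  have b_eq : b * ρ = a := le_antisymm (hflip'.mul_le P.b_pos P.a_pos)
    (hflip'.le_mul P.b_pos P.a_pos P.one_le_K hρ P.downwardGainLE)
  refine hab (mul_right_cancel₀ (by linarith : 1 + ρ ≠ 0) ?_)
  linarith

theorem Params.le_slope (P : Params a b K N κ) (hab : a ≠ b) :
    b / (K * (a + b)) ≤ slope a b K N κ := by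
  by_contra! h
  have slope_neg := P.slope_neg_of_lt h
  have le := (P.hasFlip slope_neg).le_of_downwardGainLE P.a_pos P.one.swap.downwardGainLE
  linarith [P.one.swap.slope_one_nonneg hab.symm]

end Positive

/-! ### Comparison of `d_{a,b}` with `Near` -/

theorem norm_sub_le_integral_of_pieces {E : Type*} [NormedAddCommGroup E] [NormedSpace ℝ E]
    {f : ℝ → E} {B : ℝ → ℝ} {n : ℕ} {τ : ℕ → ℝ} (hτ : ∀ i < n, τ i ≤ τ (i + 1))
    (hf : ∀ i < n, ContDiffOn ℝ 1 f (Icc (τ i) (τ (i + 1))))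
    (hB : ∀ i < n, IntervalIntegrable B MeasureTheory.volume (τ i) (τ (i + 1)))
    (hd : ∀ t ∈ Icc (τ 0) (τ n), ‖deriv f t‖ ≤ B t) {t : ℝ} (ht : t ∈ Icc (τ 0) (τ n)) :
    ‖f t - f (τ 0)‖ ≤ ∫ t in (τ 0)..t, B t := by
  induction n generalizing t with
  | zero => obtain rfl : t = τ 0 := le_antisymm ht.2 ht.1; simp
  | succ n ih =>
    have hτn := hτ n n.lt_succ_self
    have hτ0 : τ 0 ≤ τ n := monotoneOn_of_le_add_one (s := Iic n) ordConnected_Iic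
      (fun i _ _ hi => hτ i (by simp only [mem_Iic] at hi; omega)) (by simp) (by simp) n.zero_le
    have ih {t : ℝ} (ht : t ∈ Icc (τ 0) (τ n)) : ‖f t - f (τ 0)‖ ≤ ∫ t in (τ 0)..t, B t :=
      ih (fun i hi => hτ i (by omega)) (fun i hi => hf i (by omega)) (fun i hi => hB i (by omega))
        (fun t ht => hd t ⟨ht.1, ht.2.trans hτn⟩) ht
    obtain htn | htn := le_total t (τ n)
    · exact ih ⟨ht.1, htn⟩
    have before : IntervalIntegrable B MeasureTheory.volume (τ 0) (τ n) :=
      IntervalIntegrable.trans_iterate fun i hi => hB i (by omega)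
    have after : IntervalIntegrable B MeasureTheory.volume (τ n) t :=
      (hB n n.lt_succ_self).mono_set (by
        rw [uIcc_of_le htn, uIcc_of_le hτn]
        exact Icc_subset_Icc_right ht.2)
    have hf' := (hf n n.lt_succ_self).mono (Icc_subset_Icc_right ht.2)
    have last_piece : ‖f t - f (τ n)‖ ≤ ∫ t in (τ n)..t, B t :=
      norm_sub_le_integral_of_norm_deriv_le_of_le htn hf'.continuousOn
        ((hf'.differentiableOn one_ne_zero).mono Ioo_subset_Icc_self)
        (.of_forall fun x hx => hd x ⟨hτ0.trans hx.1.le, hx.2.le.trans ht.2⟩) after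
    calc ‖f t - f (τ 0)‖ ≤ ‖f t - f (τ n)‖ + ‖f (τ n) - f (τ 0)‖ :=
        norm_sub_le_norm_sub_add_norm_sub ..
      _ ≤ (∫ t in (τ n)..t, B t) + ∫ t in (τ 0)..(τ n), B t :=
        add_le_add last_piece (ih ⟨hτ0, le_rfl⟩)
      _ = ∫ t in (τ 0)..t, B t := by
        rw [add_comm, intervalIntegral.integral_add_adjacent_intervals before after]

theorem abs_sub_le_integral_of_pieces {f s : ℝ → ℝ} {n : ℕ} {τ : ℕ → ℝ} {C : ℝ} (h0 : τ 0 = 0)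
    (hn : τ n = 1) (hτ : ∀ i < n, τ i ≤ τ (i + 1))
    (hf : ∀ i < n, ContDiffOn ℝ 1 f (Icc (τ i) (τ (i + 1))))
    (hs : ∀ i < n, IntervalIntegrable s MeasureTheory.volume (τ i) (τ (i + 1)))
    (hs0 : ∀ t, 0 ≤ s t) (hC : 0 ≤ C) (hd : ∀ t ∈ Icc (0 : ℝ) 1, |deriv f t| ≤ C * s t) {t : ℝ}
    (ht : t ∈ Icc (0 : ℝ) 1) : |f t - f 0| ≤ C * ∫ t in (0 : ℝ)..1, s t := by
  have := norm_sub_le_integral_of_pieces (B := fun t => C * s t) hτ hf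
    (fun i hi => (hs i hi).const_mul C) (by simpa only [h0, hn, norm_eq_abs] using hd)
    (by rwa [h0, hn])
  rw [h0, intervalIntegral.integral_const_mul] at this
  refine this.trans (mul_le_mul_of_nonneg_left ?_ hC)
  refine intervalIntegral.integral_mono_interval le_rfl ht.1 ht.2 (.of_forall hs0) ?_
  rw [← h0, ← hn]
  exact IntervalIntegrable.trans_iterate hs

section Speed

variable {a b : ℝ}

/-- The speed of a path in `G_{a,b}`, which is the integrand of `abLength`. -/
def abSpeed (a b : ℝ) (γ : ℝ → Point) (t : ℝ) : ℝ :=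
  √(exp (-2 * a * (γ t).2.2) * deriv (fun s => (γ s).1) t ^ 2 +
    exp (2 * b * (γ t).2.2) * deriv (fun s => (γ s).2.1) t ^ 2 +
    deriv (fun s => (γ s).2.2) t ^ 2)

theorem abLength_eq_integral (γ : ℝ → Point) :
    abLength a b γ = ∫ t in (0 : ℝ)..1, abSpeed a b γ t := rfl

theorem abSpeed_nonneg (γ : ℝ → Point) (t : ℝ) : 0 ≤ abSpeed a b γ t := sqrt_nonneg _

theorem abLength_nonneg (γ : ℝ → Point) : 0 ≤ abLength a b γ :=
  intervalIntegral.integral_nonneg zero_le_one fun t _ => abSpeed_nonneg γ t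

theorem abSpeed_eq_sqrt_sum_sq (γ : ℝ → Point) (t : ℝ) :
    abSpeed a b γ t = √((exp (-(a * (γ t).2.2)) * deriv (fun s => (γ s).1) t) ^ 2 +
      (exp (b * (γ t).2.2) * deriv (fun s => (γ s).2.1) t) ^ 2 +
      deriv (fun s => (γ s).2.2) t ^ 2) := by
  have hx : exp (-2 * a * (γ t).2.2) = exp (-(a * (γ t).2.2)) ^ 2 := by
    rw [← exp_nat_mul]; push_cast; ring_nf
  have hy : exp (2 * b * (γ t).2.2) = exp (b * (γ t).2.2) ^ 2 := by
    rw [← exp_nat_mul]; push_cast; ring_nf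
  rw [abSpeed, mul_pow, mul_pow, hx, hy]

theorem abs_deriv_fst_le (a b : ℝ) (γ : ℝ → Point) (t : ℝ) :
    |deriv (fun s => (γ s).1) t| ≤ exp (a * (γ t).2.2) * abSpeed a b γ t := by
  rw [← inv_mul_le_iff₀ (exp_pos _), ← exp_neg, ← abs_of_pos (exp_pos (-_)), ← abs_mul,
    abSpeed_eq_sqrt_sum_sq]
  refine abs_le_sqrt ?_
  rw [add_assoc]
  exact le_add_of_nonneg_right (by positivity)

theorem abs_deriv_snd_le (a b : ℝ) (γ : ℝ → Point) (t : ℝ) :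
    |deriv (fun s => (γ s).2.1) t| ≤ exp (-(b * (γ t).2.2)) * abSpeed a b γ t := by
  rw [exp_neg, le_inv_mul_iff₀ (exp_pos _), ← abs_of_pos (exp_pos _), ← abs_mul,
    abSpeed_eq_sqrt_sum_sq]
  refine abs_le_sqrt ?_
  rw [add_right_comm]
  exact le_add_of_nonneg_left (by positivity)

theorem abs_deriv_height_le (γ : ℝ → Point) (t : ℝ) :
    |deriv (fun s => (γ s).2.2) t| ≤ abSpeed a b γ t :=
  abs_le_sqrt (le_add_of_nonneg_left (by positivity))

theorem abSpeed_le (γ : ℝ → Point) (t : ℝ) :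
    abSpeed a b γ t ≤ |exp (-(a * (γ t).2.2)) * deriv (fun s => (γ s).1) t| +
      |exp (b * (γ t).2.2) * deriv (fun s => (γ s).2.1) t| + |deriv (fun s => (γ s).2.2) t| := by
  rw [abSpeed_eq_sqrt_sum_sq, sqrt_le_left (by positivity)]
  have add_sq_le {x y : ℝ} (hx : 0 ≤ x) (hy : 0 ≤ y) : x ^ 2 + y ^ 2 ≤ (x + y) ^ 2 := by
    nlinarith [mul_nonneg hx hy]
  simp only [← sq_abs (exp _ * _), ← sq_abs (deriv (fun s => (γ s).2.2) t)]
  refine le_trans ?_ (add_sq_le (by positivity) (by positivity))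
  exact add_le_add_left (add_sq_le (by positivity) (by positivity)) _

theorem intervalIntegrable_abSpeed {γ : ℝ → Point} {u v : ℝ} (huv : u ≤ v)
    (h : ContDiffOn ℝ 1 γ (Icc u v)) :
    IntervalIntegrable (abSpeed a b γ) MeasureTheory.volume u v := by
  obtain rfl | huv := huv.eq_or_lt
  · simp
  have continuousOn_derivWithin {f : ℝ → ℝ} (hf : ContDiffOn ℝ 1 f (Icc u v)) :
      ContinuousOn (derivWithin f (Icc u v)) (Icc u v) :=
    hf.continuousOn_derivWithin (uniqueDiffOn_Icc huv) le_rfl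
  have := continuousOn_derivWithin (f := fun t => (γ t).1) (by fun_prop)
  have := continuousOn_derivWithin (f := fun t => (γ t).2.1) (by fun_prop)
  have := continuousOn_derivWithin (f := fun t => (γ t).2.2) (by fun_prop)
  have hγ := h.continuousOn
  have : ContinuousOn (fun t => √(exp (-2 * a * (γ t).2.2) *
      derivWithin (fun s => (γ s).1) (Icc u v) t ^ 2 +
      exp (2 * b * (γ t).2.2) * derivWithin (fun s => (γ s).2.1) (Icc u v) t ^ 2 +
      derivWithin (fun s => (γ s).2.2) (Icc u v) t ^ 2)) (uIcc u v) := by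
    rw [uIcc_of_le huv.le]
    fun_prop
  refine this.intervalIntegrable.congr_uIoo fun t ht => ?_
  rw [uIoo_of_le huv.le] at ht
  simp only [abSpeed, derivWithin_of_mem_nhds (Icc_mem_nhds ht.1 ht.2)]

theorem near_of_piecewiseC1 (ha : 0 < a) (hb : 0 < b) {γ : ℝ → Point} (hγ : PiecewiseC1 γ) :
    Near a b ((1 + a + b) * abLength a b γ) (γ 0) (γ 1) := by
  obtain ⟨n, τ, h0, hn, hτ, hγ⟩ := hγ
  set ℓ := abLength a b γ
  have le_length {f : ℝ → ℝ} (hf : ∀ i < n, ContDiffOn ℝ 1 f (Icc (τ i) (τ (i + 1)))) {C : ℝ}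
      (hC : 0 ≤ C) (hd : ∀ t ∈ Icc (0 : ℝ) 1, |deriv f t| ≤ C * abSpeed a b γ t) :
      ∀ t ∈ Icc (0 : ℝ) 1, |f t - f 0| ≤ C * ℓ := fun t ht =>
    abs_sub_le_integral_of_pieces h0 hn hτ hf
      (fun i hi => intervalIntegrable_abSpeed (hτ i hi) (hγ i hi)) (abSpeed_nonneg γ) hC hd ht
  have height_le : ∀ t ∈ Icc (0 : ℝ) 1, |(γ t).2.2 - (γ 0).2.2| ≤ ℓ := by
    simpa only [one_mul] using le_length (f := fun t => (γ t).2.2)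
      (fun i hi => by have := hγ i hi; fun_prop) zero_le_one
      fun t _ => by rw [one_mul]; exact abs_deriv_height_le γ t
  have horizontal_le {f : ℝ → ℝ} (hf : ∀ i < n, ContDiffOn ℝ 1 f (Icc (τ i) (τ (i + 1)))) {c k : ℝ}
      (hd : ∀ t ∈ Icc (0 : ℝ) 1, |deriv f t| ≤ exp c * abSpeed a b γ t) (hk : c + ℓ ≤ k) :
      |f 0 - f 1| ≤ exp k := by
    rw [abs_sub_comm]
    refine (le_length hf (exp_pos c).le hd 1 (right_mem_Icc.2 zero_le_one)).trans ?_
    rw [mul_comm]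
    exact (mul_exp_le_exp_add (by linarith [add_one_le_exp ℓ])).trans (exp_le_exp.2 hk)
  have hℓ0 : 0 ≤ ℓ := abLength_nonneg γ
  have haℓ := mul_nonneg ha.le hℓ0
  have hbℓ := mul_nonneg hb.le hℓ0
  refine ⟨?_, horizontal_le (f := fun t => (γ t).1) (c := a * ((γ 0).2.2 + ℓ))
    (fun i hi => by have := hγ i hi; fun_prop) (fun t ht => ?_) (by linarith),
    horizontal_le (f := fun t => (γ t).2.1) (c := -(b * ((γ 0).2.2 - ℓ)))
    (fun i hi => by have := hγ i hi; fun_prop) (fun t ht => ?_) (by linarith)⟩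
  · rw [abs_sub_comm]
    linarith [height_le 1 (right_mem_Icc.2 zero_le_one)]
  · refine (abs_deriv_fst_le a b γ t).trans ?_
    gcongr
    · exact abSpeed_nonneg γ t
    · linarith [(abs_le.1 (height_le t ht)).2]
  · refine (abs_deriv_snd_le a b γ t).trans ?_
    gcongr
    · exact abSpeed_nonneg γ t
    · linarith [(abs_le.1 (height_le t ht)).1]

theorem piecewiseC1_of_contDiff {E : Type*} [NormedAddCommGroup E] [NormedSpace ℝ E] {γ : ℝ → E}
    (hγ : ContDiff ℝ 1 γ) : PiecewiseC1 γ :=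
  ⟨1, fun i => i, by simp, by simp, fun i _ => by simp, fun i _ => hγ.contDiffOn⟩

theorem near_of_dAB_le (ha : 0 < a) (hb : 0 < b) {p q : Point} {ℓ : ℝ} (h : dAB a b p q ≤ ℓ) :
    Near a b ((1 + a + b) * (ℓ + 1)) p q := by
  obtain ⟨_, ⟨γ, rfl, rfl, hγ, rfl⟩, hlt⟩ := exists_lt_of_csInf_lt
    (s := {ℓ : ℝ | ∃ γ : ℝ → Point, γ 0 = p ∧ γ 1 = q ∧ PiecewiseC1 γ ∧ abLength a b γ = ℓ})
    ⟨_, fun t => p + t • (q - p), by simp, by simp, piecewiseC1_of_contDiff (by fun_prop), rfl⟩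
    (h.trans_lt (lt_add_one ℓ))
  exact (near_of_piecewiseC1 ha hb hγ).mono (by gcongr)

theorem dAB_le_abLength {γ : ℝ → Point} (hγ : PiecewiseC1 γ) :
    dAB a b (γ 0) (γ 1) ≤ abLength a b γ :=
  csInf_le ⟨0, by rintro _ ⟨γ, -, -, -, rfl⟩; exact abLength_nonneg γ⟩ ⟨γ, rfl, rfl, hγ, rfl⟩

theorem abLength_le_of_abSpeed_le {γ : ℝ → Point} {c : ℝ}
    (h : ∀ t ∈ Icc (0 : ℝ) 1, abSpeed a b γ t ≤ c) : abLength a b γ ≤ c := by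
  have := intervalIntegral.norm_integral_le_of_norm_le_const (a := (0 : ℝ)) (b := 1) (C := c)
    (f := abSpeed a b γ) fun t ht => by
      rw [uIoc_of_le zero_le_one] at ht
      rw [norm_of_nonneg (abSpeed_nonneg γ t)]
      exact h t (Ioc_subset_Icc_self ht)
  rw [abLength_eq_integral]
  exact (le_norm_self _).trans (by simpa using this)

end Speed

/-- The reparametrization of `[0, 1]` with speed proportional to `w`. -/
def warp (w : ℝ → ℝ) (t : ℝ) : ℝ := (∫ s in (0 : ℝ)..t, w s) / ∫ s in (0 : ℝ)..1, w s

theorem hasDerivAt_warp {w : ℝ → ℝ} (hw : Continuous w) (t : ℝ) :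
    HasDerivAt (warp w) (w t / ∫ s in (0 : ℝ)..1, w s) t :=
  (intervalIntegral.integral_hasDerivAt_right (hw.intervalIntegrable _ _)
    (hw.stronglyMeasurableAtFilter _ _) hw.continuousAt).div_const _

theorem contDiff_warp {w : ℝ → ℝ} (hw : Continuous w) : ContDiff ℝ 1 (warp w) := by
  rw [contDiff_one_iff_deriv]
  refine ⟨fun t => (hasDerivAt_warp hw t).differentiableAt, ?_⟩
  rw [funext fun t => (hasDerivAt_warp hw t).deriv]
  fun_prop

section HeightProfile

variable {a b : ℝ} {p q : Point} {z : ℝ → ℝ}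

/-- The path from `p` to `q` with height profile `z` that distributes its motion in the two
horizontal coordinates in such a way that the speed in each of them is constant. -/
def liftPath (a b : ℝ) (p q : Point) (z : ℝ → ℝ) (t : ℝ) : Point :=
  (p.1 + (q.1 - p.1) * warp (fun t => exp (a * z t)) t,
    p.2.1 + (q.2.1 - p.2.1) * warp (fun t => exp (-(b * z t))) t, z t)

theorem abs_exp_mul_mul_exp_div_le_one {x y c : ℝ} (hc : 0 < c) (h : |x| ≤ c) :
    |exp (-y) * (x * (exp y / c))| ≤ 1 := by
  have : exp (-y) * (x * (exp y / c)) = x / c := by rw [exp_neg]; field_simp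
  rwa [this, abs_div, abs_of_pos hc, div_le_one hc]

theorem dAB_le_of_height_profile {c : ℝ} (hz : ContDiff ℝ 1 z) (hz0 : z 0 = p.2.2)
    (hz1 : z 1 = q.2.2) (hdz : ∀ t ∈ Icc (0 : ℝ) 1, |deriv z t| ≤ c)
    (hx : |q.1 - p.1| ≤ ∫ t in (0 : ℝ)..1, exp (a * z t))
    (hy : |q.2.1 - p.2.1| ≤ ∫ t in (0 : ℝ)..1, exp (-(b * z t))) : dAB a b p q ≤ 2 + c := by
  have hcz := hz.continuous
  have hu : Continuous fun t => exp (a * z t) := by fun_prop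
  have hv : Continuous fun t => exp (-(b * z t)) := by fun_prop
  have integral_pos {w : ℝ → ℝ} (hw : Continuous fun t => exp (w t)) :
      0 < ∫ t in (0 : ℝ)..1, exp (w t) :=
    intervalIntegral.intervalIntegral_pos_of_pos (hw.intervalIntegrable _ _)
      (fun t => exp_pos _) zero_lt_one
  have contDiff_liftPath : ContDiff ℝ 1 (liftPath a b p q z) := by
    have := contDiff_warp hu
    have := contDiff_warp hv
    unfold liftPath
    fun_prop
  have liftPath_zero : liftPath a b p q z 0 = p := by simp [liftPath, warp, hz0]
  have liftPath_one : liftPath a b p q z 1 = q := by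
    simp [liftPath, warp, hz1, div_self (integral_pos hu).ne', div_self (integral_pos hv).ne']
  have deriv_fst (t : ℝ) : deriv (fun s => (liftPath a b p q z s).1) t = _ :=
    (((hasDerivAt_warp hu t).const_mul _).const_add _).deriv
  have deriv_snd (t : ℝ) : deriv (fun s => (liftPath a b p q z s).2.1) t = _ :=
    (((hasDerivAt_warp hv t).const_mul _).const_add _).deriv
  calc dAB a b p q ≤ abLength a b (liftPath a b p q z) := by
        simpa only [liftPath_zero, liftPath_one] using
          dAB_le_abLength (piecewiseC1_of_contDiff contDiff_liftPath)
    _ ≤ 1 + 1 + c := by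
        refine abLength_le_of_abSpeed_le fun t ht => (abSpeed_le _ t).trans ?_
        rw [deriv_fst, deriv_snd]
        refine add_le_add (add_le_add ?_ ?_) (hdz t ht)
        · exact abs_exp_mul_mul_exp_div_le_one (integral_pos hu) hx
        · rw [← neg_neg (b * _)]
          exact abs_exp_mul_mul_exp_div_le_one (integral_pos hv) hy
    _ = 2 + c := by norm_num

end HeightProfile

section Excursion

variable {a b : ℝ}

/-- A height profile on `[0, 1]` from `u` to `v` that first climbs to a height of order `M` and then
descends to a depth of order `M`. -/
def excursion (u v M t : ℝ) : ℝ := u + (v - u) * t + M * (t * (1 - t) * (1 - 2 * t))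

theorem contDiff_excursion (u v M : ℝ) : ContDiff ℝ 1 (excursion u v M) := by
  unfold excursion
  fun_prop

theorem deriv_excursion (u v M t : ℝ) :
    deriv (excursion u v M) t = (v - u) + M * (1 - 6 * t + 6 * t ^ 2) := by
  have cubic : HasDerivAt (fun t : ℝ => t * (1 - t) * (1 - 2 * t)) (1 - 6 * t + 6 * t ^ 2) t := by
    refine (((hasDerivAt_id t).mul ((hasDerivAt_id t).const_sub 1)).mul
      (((hasDerivAt_id t).const_mul 2).const_sub 1)).congr_deriv ?_
    simp only [id, Pi.mul_apply]
    ring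
  have linear := ((hasDerivAt_id t).const_mul (v - u)).const_add u
  rw [mul_one] at linear
  exact (linear.add (cubic.const_mul M)).deriv

variable {u v M ℓ t : ℝ}

theorem abs_deriv_excursion_le (hM : 0 ≤ M) (huv : |u - v| ≤ ℓ) (ht : t ∈ Icc (0 : ℝ) 1) :
    |deriv (excursion u v M) t| ≤ ℓ + M := by
  have : |1 - 6 * t + 6 * t ^ 2| ≤ 1 := by
    rw [abs_le]
    constructor <;> nlinarith [ht.1, ht.2, sq_nonneg (t - 1 / 2)]
  rw [deriv_excursion]
  refine (abs_add_le _ _).trans (add_le_add (by rwa [abs_sub_comm]) ?_)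
  rw [abs_mul, abs_of_nonneg hM]
  exact mul_le_of_le_one_right hM this

theorem abs_mul_le_of_mem_Icc (huv : |u - v| ≤ ℓ) (ht : t ∈ Icc (0 : ℝ) 1) :
    |(v - u) * t| ≤ ℓ := by
  rw [abs_mul, abs_sub_comm, abs_of_nonneg ht.1]
  exact (mul_le_of_le_one_right (abs_nonneg _) ht.2).trans huv

theorem le_excursion (hM : 0 ≤ M) (huv : |u - v| ≤ ℓ) (ht : t ∈ Icc (1 / 8 : ℝ) (1 / 4)) :
    u + (3 / 64 * M - ℓ) ≤ excursion u v M t := by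
  have cubic : 3 / 64 ≤ t * (1 - t) * (1 - 2 * t) := by
    nlinarith [ht.1, ht.2, mul_nonneg (sub_nonneg.2 ht.1) (sub_nonneg.2 ht.2)]
  have := (abs_le.1 (abs_mul_le_of_mem_Icc huv ⟨by linarith [ht.1], by linarith [ht.2]⟩)).1
  have := mul_le_mul_of_nonneg_left cubic hM
  unfold excursion
  linarith

theorem excursion_le (hM : 0 ≤ M) (huv : |u - v| ≤ ℓ) (ht : t ∈ Icc (3 / 4 : ℝ) (7 / 8)) :
    excursion u v M t ≤ u - (3 / 64 * M - ℓ) := by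
  have cubic : t * (1 - t) * (1 - 2 * t) ≤ -(3 / 64) := by
    nlinarith [ht.1, ht.2, mul_nonneg (sub_nonneg.2 ht.1) (sub_nonneg.2 ht.2)]
  have := (abs_le.1 (abs_mul_le_of_mem_Icc huv ⟨by linarith [ht.1], by linarith [ht.2]⟩)).2
  have := mul_le_mul_of_nonneg_left cubic hM
  unfold excursion
  linarith

theorem exp_le_integral_exp {g : ℝ → ℝ} (hg : Continuous g) {u v c : ℝ} (hu : 0 ≤ u)
    (hv : v ≤ 1) (huv : u + 1 / 8 ≤ v) (h : ∀ t ∈ Icc u v, c + 3 ≤ g t) :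
    exp c ≤ ∫ t in (0 : ℝ)..1, exp (g t) := by
  have hc : Continuous fun t => exp (g t) := by fun_prop
  have le_exp_three : (8 : ℝ) ≤ exp 3 := by
    have := pow_le_pow_left₀ zero_le_two (by linarith [add_one_le_exp 1] : (2 : ℝ) ≤ exp 1) 3
    rw [← exp_nat_mul] at this
    norm_num at this
    exact this
  have huv' : u ≤ v := by linarith
  calc exp c ≤ (v - u) * exp (c + 3) := by
        nlinarith [mul_exp_le_exp_add (x := c) le_exp_three, exp_pos c, exp_pos (c + 3)]
    _ = ∫ _ in u..v, exp (c + 3) := by simp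
    _ ≤ ∫ t in u..v, exp (g t) :=
      intervalIntegral.integral_mono_on huv' (by simp) (hc.intervalIntegrable _ _)
        fun t ht => exp_le_exp.2 (h t ht)
    _ ≤ _ := intervalIntegral.integral_mono_interval hu huv' hv
      (.of_forall fun t => (exp_pos _).le) (hc.intervalIntegrable _ _)

theorem dAB_le_of_near (ha : 0 ≤ a) (hb : 0 ≤ b) {p q : Point} (hM : 0 ≤ M)
    (haM : ℓ + 3 ≤ a * (3 / 64 * M - ℓ)) (hbM : ℓ + 3 ≤ b * (3 / 64 * M - ℓ))
    (h : Near a b ℓ p q) : dAB a b p q ≤ 2 + (ℓ + M) := by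
  obtain ⟨hz, hx, hy⟩ := h
  have contDiff := contDiff_excursion p.2.2 q.2.2 M
  have continuous := contDiff.continuous
  refine dAB_le_of_height_profile contDiff (by simp [excursion]) (by simp [excursion])
    (fun t ht => abs_deriv_excursion_le hM hz ht) ?_ ?_ <;> rw [abs_sub_comm]
  · refine hx.trans (exp_le_integral_exp (u := 1 / 8) (v := 1 / 4) (by fun_prop) (by norm_num)
      (by norm_num) (by norm_num) fun t ht => ?_)
    linarith [mul_le_mul_of_nonneg_left (le_excursion hM hz ht) ha]
  · refine hy.trans (exp_le_integral_exp (u := 3 / 4) (v := 7 / 8) (by fun_prop) (by norm_num)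
      (by norm_num) (by norm_num) fun t ht => ?_)
    linarith [mul_le_mul_of_nonneg_left (excursion_le hM hz ht) hb]

theorem exists_dAB_le (ha : 0 < a) (hb : 0 < b) :
    ∃ C, 1 ≤ C ∧ ∀ p q ℓ, 1 ≤ ℓ → Near a b ℓ p q → dAB a b p q ≤ C * ℓ := by
  set c := 64 / 3 * (1 + 4 / a + 4 / b) with hc
  have hc0 : 0 ≤ c := by positivity
  refine ⟨3 + c, by linarith, fun p q ℓ hℓ h => ?_⟩
  have ha' : a * (3 / 64 * (c * ℓ) - ℓ) = 4 * ℓ + a * (4 / b * ℓ) := by rw [hc]; field_simp; ring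
  have hb' : b * (3 / 64 * (c * ℓ) - ℓ) = 4 * ℓ + b * (4 / a * ℓ) := by rw [hc]; field_simp; ring
  have : 0 ≤ a * (4 / b * ℓ) := by positivity
  have : 0 ≤ b * (4 / a * ℓ) := by positivity
  linarith [dAB_le_of_near (M := c * ℓ) ha.le hb.le (by positivity) (by linarith) (by linarith) h]

end Excursion

/-! ### Counting points in boxes -/

section Boxes

variable {a b : ℝ}

/-- The index of the cell of `p` in a decomposition of `G_{a,b}` into cells of bounded size. -/
def cell (a b : ℝ) (p : Point) : ℤ × ℤ × ℤ :=
  (⌊exp (-(a * ⌊p.2.2⌋)) * p.1⌋, ⌊exp (b * ⌊p.2.2⌋) * p.2.1⌋, ⌊p.2.2⌋)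

/-- The lowest corner of the cell with the index `c`. -/
def corner (a b : ℝ) (c : ℤ × ℤ × ℤ) : Point :=
  (exp (a * c.2.2) * c.1, exp (-b * c.2.2) * c.2.1, c.2.2)

theorem abs_floor_sub_le_one (x : ℝ) : |(⌊x⌋ : ℝ) - x| ≤ 1 := by
  rw [abs_sub_comm, Int.self_sub_floor, abs_of_nonneg (Int.fract_nonneg x)]
  exact (Int.fract_lt_one x).le

theorem near_corner_cell (p : Point) : Near a b 1 (corner a b (cell a b p)) p := by
  have scale (c x : ℝ) : |exp c * ⌊exp (-c) * x⌋ - x| ≤ exp (c + 1) := by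
    have : exp c * (exp (-c) * x) = x := by rw [← mul_assoc, ← exp_add]; simp
    nth_rw 2 [← this]
    exact abs_exp_mul_sub_exp_mul_le_iff.2 ((abs_floor_sub_le_one _).trans (one_le_exp zero_le_one))
  refine ⟨abs_floor_sub_le_one _, scale _ _, ?_⟩
  have := scale (-b * ⌊p.2.2⌋) p.2.1
  rwa [neg_mul, neg_neg, ← neg_mul] at this

/-- The indices of the cells with height index `k` that meet `{(x, y, z) | |x| ≤ X ∧ |y| ≤ X}`. -/
def slab (a b X : ℝ) (k : ℤ) : Finset (ℤ × ℤ × ℤ) :=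
  Finset.Icc ⌊-(exp (-(a * k)) * X)⌋ ⌊exp (-(a * k)) * X⌋ ×ˢ
    Finset.Icc ⌊-(exp (b * k) * X)⌋ ⌊exp (b * k) * X⌋ ×ˢ {k}

theorem cell_mem_slab {X : ℝ} {p : Point} (hx : |p.1| ≤ X) (hy : |p.2.1| ≤ X) :
    cell a b p ∈ slab a b X ⌊p.2.2⌋ := by
  obtain ⟨hx₁, hx₂⟩ := abs_le.1 hx
  obtain ⟨hy₁, hy₂⟩ := abs_le.1 hy
  simp only [cell, slab, Finset.mem_product, Finset.mem_Icc, Finset.mem_singleton, and_true,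
    ← mul_neg]
  refine ⟨⟨?_, ?_⟩, ?_, ?_⟩ <;> gcongr

theorem card_Icc_floor_le {u v : ℝ} (h : u ≤ v) :
    ((Finset.Icc ⌊u⌋ ⌊v⌋).card : ℝ) ≤ v - u + 2 := by
  have card_eq : ((Finset.Icc ⌊u⌋ ⌊v⌋).card : ℤ) = ⌊v⌋ + 1 - ⌊u⌋ :=
    Int.card_Icc_of_le _ _ (by linarith [Int.floor_mono h])
  have : ((Finset.Icc ⌊u⌋ ⌊v⌋).card : ℝ) = ⌊v⌋ + 1 - ⌊u⌋ := by exact_mod_cast card_eq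
  linarith [Int.floor_le v, Int.lt_floor_add_one u]

theorem card_slab_le {X : ℝ} {k : ℤ} (hx : 1 ≤ exp (-(a * k)) * X) (hy : 1 ≤ exp (b * k) * X) :
    ((slab a b X k).card : ℝ) ≤ 16 * X ^ 2 * exp (-((a - b) * k)) := by
  have card_le {u : ℝ} (hu : 1 ≤ u) : ((Finset.Icc ⌊-u⌋ ⌊u⌋).card : ℝ) ≤ 4 * u := by
    linarith [card_Icc_floor_le (u := -u) (v := u) (by linarith)]
  rw [slab, Finset.card_product, Finset.card_product, Finset.card_singleton, mul_one, Nat.cast_mul]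
  calc _ ≤ 4 * (exp (-(a * k)) * X) * (4 * (exp (b * k) * X)) := by
        gcongr
        exacts [card_le hx, card_le hy]
    _ = 16 * X ^ 2 * exp (-(a * k) + b * k) := by rw [exp_add]; ring
    _ = _ := by ring_nf

theorem card_le_of_box {ι : Type*} {f : ι → Point} {m : ℕ} (ha : 0 ≤ a) (hb : 0 ≤ b) (hba : b ≤ a)
    (hm : ∀ p, ∀ F : Finset ι, (∀ g ∈ F, Near a b 1 p (f g)) → F.card ≤ m) {G : Finset ι}
    {X low high : ℝ} (hlow : low ≤ high)
    (hG : ∀ g ∈ G, (f g).2.2 ∈ Icc low high ∧ |(f g).1| ≤ X ∧ |(f g).2.1| ≤ X)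
    (hX : exp (a * high) ≤ X) (hX' : exp (b * (1 - low)) ≤ X) :
    (G.card : ℝ) ≤ m * ((high - low + 2) * (16 * X ^ 2 * exp (-((a - b) * (low - 1))))) := by
  classical
  set T := (Finset.Icc ⌊low⌋ ⌊high⌋).biUnion (slab a b X)
  have card_le_mul : G.card ≤ m * T.card := by
    refine Finset.card_le_mul_card_image_of_maps_to (f := fun g => cell a b (f g))
      (fun g hg => ?_) m fun c _ => hm (corner a b c) _ fun g hg => ?_
    · obtain ⟨⟨hz₁, hz₂⟩, hx, hy⟩ := hG g hg
      exact Finset.mem_biUnion.2 ⟨⌊(f g).2.2⌋,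
        Finset.mem_Icc.2 ⟨Int.floor_mono hz₁, Int.floor_mono hz₂⟩, cell_mem_slab hx hy⟩
    · rw [← (Finset.mem_filter.1 hg).2]
      exact near_corner_cell _
  have slab_le (k : ℤ) (hk : k ∈ Finset.Icc ⌊low⌋ ⌊high⌋) :
      ((slab a b X k).card : ℝ) ≤ 16 * X ^ 2 * exp (-((a - b) * (low - 1))) := by
    obtain ⟨hk₁, hk₂⟩ := Finset.mem_Icc.1 hk
    have low_le : low - 1 ≤ k := by
      linarith [Int.lt_floor_add_one low, (by exact_mod_cast hk₁ : (⌊low⌋ : ℝ) ≤ k)]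
    have le_high : (k : ℝ) ≤ high := Int.le_floor.1 hk₂
    have one_le {c : ℝ} (h : exp (-c) ≤ X) : 1 ≤ exp c * X := by
      rwa [exp_neg, inv_le_iff_one_le_mul₀' (exp_pos c)] at h
    refine (card_slab_le (one_le ?_) (one_le ?_)).trans ?_
    · exact (exp_le_exp.2 (by nlinarith)).trans hX
    · exact (exp_le_exp.2 (by nlinarith)).trans hX'
    · gcongr
  have card_T_le : (T.card : ℝ) ≤
      (high - low + 2) * (16 * X ^ 2 * exp (-((a - b) * (low - 1)))) := by
    calc (T.card : ℝ) ≤ ∑ k ∈ Finset.Icc ⌊low⌋ ⌊high⌋, ((slab a b X k).card : ℝ) := by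
          exact_mod_cast Finset.card_biUnion_le
      _ ≤ (Finset.Icc ⌊low⌋ ⌊high⌋).card * (16 * X ^ 2 * exp (-((a - b) * (low - 1)))) := by
          rw [← nsmul_eq_mul]
          exact Finset.sum_le_card_nsmul _ _ _ slab_le
      _ ≤ _ := by
          gcongr
          exact card_Icc_floor_le hlow
  calc (G.card : ℝ) ≤ m * T.card := by exact_mod_cast card_le_mul
    _ ≤ _ := by gcongr

end Boxes

/-! ### Groups coarsely identified with `G_{a,b}` -/

/-- `f` identifies the group `Γ` with `G_{a,b}` up to bounded distortion: left multiplications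
distort `Near` by a bounded factor, the image of `f` is coarsely dense, and `f` is uniformly
finite-to-one on the scale `1`. -/
structure CoarseModel {Γ : Type*} [Group Γ] (a b A : ℝ) (f : Γ → Point) : Prop where
  one_le : 1 ≤ A
  near_mul : ∀ ℓ, 1 ≤ ℓ → ∀ γ g h, Near a b ℓ (f g) (f h) →
    Near a b (A * ℓ) (f (γ * g)) (f (γ * h))
  exists_near : ∀ p, ∃ g, Near a b A p (f g)
  card_le : ∃ m : ℕ, ∀ p, ∀ F : Finset Γ, (∀ g ∈ F, Near a b 1 p (f g)) → F.card ≤ m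

section CoarseModel

variable {a b : ℝ}

theorem near_of_near_of_near (ha : 0 < a) (hb : 0 < b) {B ℓ : ℝ} (hB : 1 ≤ B) (hℓ : 1 ≤ ℓ)
    {p p' q q' : Point} (hp : Near a b B p p') (hq : Near a b B q q') (h : Near a b ℓ p q) :
    Near a b (5 * (1 + a + b) ^ 2 * B * ℓ) p' q' := by
  refine ((hp.symm ha hb).trans ha hb (h.trans ha hb hq)).mono ?_
  set w := 1 + a + b
  have hw : 1 ≤ w := by linarith
  have hw' : w ≤ w ^ 2 := le_self_pow₀ hw two_ne_zero
  have hBℓ : 1 ≤ B * ℓ := one_le_mul_of_one_le_of_one_le hB hℓ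
  have first : w ^ 2 * B ≤ w ^ 2 * (B * ℓ) := by
    gcongr; exact le_mul_of_one_le_right (by linarith) hℓ
  have second : w * ℓ ≤ w ^ 2 * (B * ℓ) := by
    gcongr; exact le_mul_of_one_le_left (by linarith) hB
  have third : B ≤ w ^ 2 * (B * ℓ) := by nlinarith
  have : 1 ≤ w ^ 2 * (B * ℓ) := one_le_mul_of_one_le_of_one_le (by linarith) hBℓ
  linarith

variable {Γ : Type*} [Group Γ] {A : ℝ} {f : Γ → Point}

theorem CoarseModel.mirror (h : CoarseModel a b A f) :
    CoarseModel b a A fun g => mirror (f g) where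
  one_le := h.one_le
  near_mul ℓ hℓ γ g g' := by simpa only [near_mirror] using h.near_mul ℓ hℓ γ g g'
  exists_near p := by
    obtain ⟨g, hg⟩ := h.exists_near (Gab.mirror p)
    exact ⟨g, by rwa [← near_mirror, mirror_mirror] at hg⟩
  card_le := by
    obtain ⟨m, hm⟩ := h.card_le
    exact ⟨m, fun p F hF => hm (Gab.mirror p) F fun g hg => by
      rw [← near_mirror, mirror_mirror]; exact hF g hg⟩

theorem CoarseModel.coarseEmb (h : CoarseModel a b A f) (ha : 0 < a) (hb : 0 < b)
    {s : Point → Γ} (hs : ∀ p, Near a b A p (f (s p))) (γ : Γ) :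
    CoarseEmb a b (5 * (1 + a + b) ^ 3 * A ^ 2) fun p => f (γ * s p) := by
  intro ℓ hℓ p q
  have hA := h.one_le
  have hw : 1 ≤ 1 + a + b := by linarith
  refine ⟨fun hpq => ?_, fun hpq => ?_⟩
  · refine (h.near_mul _ ?_ γ _ _ (near_of_near_of_near ha hb hA hℓ (hs p) (hs q) hpq)).mono ?_
    · exact one_le_mul_of_one_le_of_one_le (one_le_mul_of_one_le_of_one_le
        (one_le_mul_of_one_le_of_one_le (by norm_num) (one_le_pow₀ hw)) hA) hℓ
    · calc A * (5 * (1 + a + b) ^ 2 * A * ℓ) = 5 * (1 + a + b) ^ 2 * A ^ 2 * ℓ := by ring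
        _ ≤ _ := by gcongr; norm_num
  · have hpq' := h.near_mul ℓ hℓ γ⁻¹ _ _ hpq
    simp only [inv_mul_cancel_left] at hpq'
    refine (near_of_near_of_near ha hb (one_le_mul_of_one_le_of_one_le hw hA)
      (one_le_mul_of_one_le_of_one_le hA hℓ) ((hs p).symm ha hb) ((hs q).symm ha hb) hpq').mono ?_
    exact le_of_eq (by ring)

theorem eq_of_abs_mul_natCast_sub_le {r x : ℝ} (hr : 0 < r) {i j : ℕ}
    (hi : |3 * r * i - x| ≤ r) (hj : |3 * r * j - x| ≤ r) : i = j := by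
  by_contra hne
  have one_le : (1 : ℝ) ≤ |(i : ℝ) - j| := by
    exact_mod_cast Int.one_le_abs (sub_ne_zero.2 (Nat.cast_injective.ne hne))
  have : 3 * r * |(i : ℝ) - j| ≤ r + r := calc
    3 * r * |(i : ℝ) - j| = |3 * r * i - 3 * r * j| := by
      rw [← mul_sub, abs_mul, abs_of_pos (by positivity : 0 < 3 * r)]
    _ ≤ r + r := (abs_sub_le _ x _).trans (add_le_add hi (by rwa [abs_sub_comm]))
  nlinarith

theorem CoarseModel.exists_finset_card_eq (h : CoarseModel a b A f) (g₀ : Γ) (T : ℕ) :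
    ∃ F : Finset Γ, F.card = T ^ 2 ∧ ∀ γ ∈ F, |(f (γ * g₀)).1| ≤ 4 * exp A * T ∧
      |(f (γ * g₀)).2.1| ≤ 4 * exp A * T ∧ |(f (γ * g₀)).2.2| ≤ A := by
  classical
  choose g hg using fun i : ℕ × ℕ => h.exists_near (3 * exp A * i.1, 3 * exp A * i.2, 0)
  simp only [Near, mul_zero, zero_add, zero_sub, abs_neg] at hg
  have g_injective : Function.Injective g := fun i j hij =>
    Prod.ext (eq_of_abs_mul_natCast_sub_le (exp_pos A) (hg i).2.1 (hij ▸ (hg j).2.1))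
      (eq_of_abs_mul_natCast_sub_le (exp_pos A) (hg i).2.2 (hij ▸ (hg j).2.2))
  have coord_le {i : ℕ} (hi : i < T) {x : ℝ} (hx : |3 * exp A * i - x| ≤ exp A) :
      |x| ≤ 4 * exp A * T := by
    have hiT : (i : ℝ) + 1 ≤ T := by exact_mod_cast hi
    have := abs_sub_abs_le_abs_sub x (3 * exp A * i)
    rw [abs_sub_comm, abs_of_nonneg (by positivity : 0 ≤ 3 * exp A * i)] at this
    nlinarith [exp_pos A]
  have mul_injective : Function.Injective fun i => g i * g₀⁻¹ :=
    (mul_left_injective g₀⁻¹).comp g_injective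
  refine ⟨(Finset.range T ×ˢ Finset.range T).image fun i => g i * g₀⁻¹, ?_, fun γ hγ => ?_⟩
  · rw [Finset.card_image_of_injective _ mul_injective, Finset.card_product, Finset.card_range, sq]
  · obtain ⟨i, hi, rfl⟩ := Finset.mem_image.1 hγ
    obtain ⟨hi₁, hi₂⟩ := Finset.mem_product.1 hi
    rw [inv_mul_cancel_right]
    exact ⟨coord_le (Finset.mem_range.1 hi₁) (hg i).2.1,
      coord_le (Finset.mem_range.1 hi₂) (hg i).2.2, (hg i).1⟩

end CoarseModel

/-! ### The counting argument -/

section Counting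

variable {a b K A : ℝ} {κ n : ℕ} {Γ : Type*} [Group Γ] {f : Γ → Point}

/- On a tree that branches `2κ`-fold, requiring the gain for half of the children at each level
costs a factor `2 ^ n` in the counting argument, while the gain `n / (a - b)` shrinks volumes by
the factor `e ^ n`. -/
theorem exists_gainsHeight_div (ha : 0 < a) (hb : 0 < b) (hba : b < a) (hK : 1 ≤ K) :
    ∃ κ : ℕ, 0 < κ ∧ ∃ c : ℝ, ∀ n : ℕ, GainsHeight a b K (2 * κ) κ n (n / (a - b) - c) := by
  have hab : 0 < a - b := sub_pos.2 hba
  obtain ⟨κ, hκ⟩ := exists_nat_gt (max 2 (exp (2 * K * (a + b) / (a - b))))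
  obtain ⟨two_lt, exp_lt⟩ := max_lt_iff.1 hκ
  have two_lt' : 2 < κ := by exact_mod_cast two_lt
  have P : Params a b K (2 * κ) κ := ⟨ha, hb, hK, by omega, by omega⟩
  have le_log : 2 * K * (a + b) / (a - b) ≤ b * levelHeight b (2 * κ) := by
    rw [mul_levelHeight hb, le_log_iff_exp_le (by push_cast; positivity)]
    push_cast
    linarith
  have le_levelSlope : 2 / (a - b) ≤ levelSlope a b K (2 * κ) κ := calc
    2 / (a - b) = 2 * K * (a + b) / (a - b) / (K * (a + b)) := by field_simp
    _ ≤ b * levelHeight b (2 * κ) / (K * (a + b)) := by gcongr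
    _ = b / (K * (a + b)) * levelHeight b (2 * κ) := by ring
    _ ≤ slope a b K (2 * κ) κ * levelHeight b (2 * κ) := by
      gcongr
      exacts [P.levelHeight_pos.le, P.le_slope hba.ne']
    _ = levelSlope a b K (2 * κ) κ := P.slope_mul_levelHeight
  obtain ⟨c, -, hc⟩ := P.exists_gainsHeight (one_div_pos.2 hab)
  refine ⟨κ, by omega, c, fun n => (hc n).mono hb (sub_le_sub_right ?_ c)⟩
  calc (n : ℝ) / (a - b) = (2 / (a - b) - 1 / (a - b)) * n := by ring
    _ ≤ _ := by gcongr

theorem CoarseModel.exists_finset_box (h : CoarseModel a b A f) (ha : 0 < a) (hb : 0 < b)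
    {s : Point → Γ} (hφ : ∀ γ, CoarseEmb a b K fun p => f (γ * s p)) (hκ : 0 < κ) {H L : ℝ}
    (hgain : GainsHeight a b K (2 * κ) κ n H) (hL : K * (n * levelHeight b (2 * κ) + 1) = L)
    {T : ℕ} (hT : exp ((a + b) * A + L) ≤ 4 * exp A * T) :
    ∃ G : Finset Γ, T ^ 2 ≤ 2 ^ n * G.card ∧ ∀ g ∈ G, (f g).2.2 ∈ Icc (H - A) (A + L) ∧
      |(f g).1| ≤ 8 * exp A * T ∧ |(f g).2.1| ≤ 8 * exp A * T := by
  classical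
  obtain ⟨F, hF, hbox⟩ := h.exists_finset_card_eq (s 0) T
  obtain ⟨q, hq, F', hF', hleaf, hcard⟩ := exists_common_leaf hb (by omega : 0 < 2 * κ)
    (fun γ => {q | (f (γ * s 0)).2.2 + H ≤ (f (γ * s q)).2.2}) (F := F)
    fun γ _ => hgain _ (hφ γ) 0
  have levelHeight_nonneg : 0 ≤ levelHeight b (2 * κ) := div_nonneg (log_natCast_nonneg _) hb.le
  have near : Near a b (n * levelHeight b (2 * κ) + 1) 0 q :=
    hq.near (by rw [abs_of_nonneg (by positivity)]; linarith)
  have abs_le_of_abs_sub_le {x y e : ℝ} (he : e ≤ (a + b) * A + L) (hx : |x| ≤ 4 * exp A * T)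
      (hxy : |x - y| ≤ exp e) : |y| ≤ 8 * exp A * T := by
    linarith [abs_sub_abs_le_abs_sub y x, abs_sub_comm x y, exp_le_exp.2 he]
  refine ⟨F'.image (· * s q), ?_, fun g hg => ?_⟩
  · rw [Finset.card_image_of_injective _ (mul_left_injective _), ← hF]
    rw [mul_pow, mul_right_comm, mul_comm] at hcard
    exact le_of_mul_le_mul_right hcard (by positivity)
  · obtain ⟨γ, hγ, rfl⟩ := Finset.mem_image.1 hg
    obtain ⟨hx, hy, hz⟩ := hbox γ (hF' hγ)
    have near' := (hφ γ _ (by linarith [mul_nonneg n.cast_nonneg levelHeight_nonneg]) 0 q).1 near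
    rw [hL] at near'
    obtain ⟨dz, dx, dy⟩ := near'
    obtain ⟨hz₁, hz₂⟩ := abs_le.1 hz
    have gain : (f (γ * s 0)).2.2 + H ≤ (f (γ * s q)).2.2 := hleaf γ hγ
    exact ⟨⟨by linarith, by linarith [(abs_le.1 dz).1]⟩,
      abs_le_of_abs_sub_le (by nlinarith) hx dx, abs_le_of_abs_sub_le (by nlinarith) hy dy⟩

theorem CoarseModel.one_le_mul_of_gainsHeight (h : CoarseModel a b A f) (ha : 0 < a) (hb : 0 < b)
    (hba : b ≤ a) {m : ℕ} (hm : ∀ p, ∀ F : Finset Γ, (∀ g ∈ F, Near a b 1 p (f g)) → F.card ≤ m)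
    {s : Point → Γ} (hφ : ∀ γ, CoarseEmb a b K fun p => f (γ * s p)) (hκ : 0 < κ) {H L : ℝ}
    (hgain : GainsHeight a b K (2 * κ) κ n H) (hL : K * (n * levelHeight b (2 * κ) + 1) = L) :
    1 ≤ 2 ^ n * (m * ((A + L - (H - A) + 2) *
      (16 * (8 * exp A) ^ 2 * exp (-((a - b) * (H - A - 1)))))) := by
  have one_le_exp_A : 1 ≤ exp A := one_le_exp (zero_le_one.trans h.one_le)
  obtain ⟨T, hT⟩ := exists_nat_ge (1 + exp ((a + b) * A + L) + exp (a * (A + L)) +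
    exp (b * (1 - (H - A))))
  have T_le : (T : ℝ) ≤ exp A * T := le_mul_of_one_le_left T.cast_nonneg one_le_exp_A
  have pos₁ := exp_pos ((a + b) * A + L)
  have pos₂ := exp_pos (a * (A + L))
  have pos₃ := exp_pos (b * (1 - (H - A)))
  have T_pos : (0 : ℝ) < T ^ 2 := pow_pos (by linarith) 2
  obtain ⟨G, hG, hbox⟩ := h.exists_finset_box ha hb hφ hκ hgain hL (T := T) (by linarith)
  have hG' : (T : ℝ) ^ 2 ≤ 2 ^ n * G.card := by exact_mod_cast hG
  have G_nonempty : G.Nonempty := by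
    rw [Finset.nonempty_iff_ne_empty]
    rintro rfl
    simp only [Finset.card_empty, Nat.cast_zero, mul_zero] at hG'
    linarith
  obtain ⟨g, hg⟩ := G_nonempty
  have card_le := card_le_of_box ha.le hb.le hba hm (nonempty_Icc.1 ⟨_, (hbox g hg).1⟩) hbox
    (by linarith) (by linarith)
  refine le_of_mul_le_mul_left ?_ T_pos
  calc (T : ℝ) ^ 2 * 1 ≤ 2 ^ n * G.card := by rwa [mul_one]
    _ ≤ 2 ^ n * (m * ((A + L - (H - A) + 2) *
        (16 * (8 * exp A * T) ^ 2 * exp (-((a - b) * (H - A - 1)))))) := by gcongr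
    _ = _ := by ring

theorem exists_linear_mul_pow_lt (c₀ c₁ c₂ : ℝ) :
    ∃ n : ℕ, c₀ * (c₁ * n + c₂) * (2 ^ n * exp (-n)) < 1 := by
  have ratio_lt_one : 2 * exp (-1) < 1 := by
    rw [exp_neg, ← div_eq_mul_inv, div_lt_one (exp_pos _)]
    linarith [exp_one_gt_d9]
  have tendsto_zero :=
    ((tendsto_self_mul_const_pow_of_lt_one (by positivity) ratio_lt_one).const_mul (c₀ * c₁)).add
      ((tendsto_pow_atTop_nhds_zero_of_lt_one (by positivity) ratio_lt_one).const_mul (c₀ * c₂))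
  simp only [mul_zero, add_zero] at tendsto_zero
  obtain ⟨n, hn⟩ := (tendsto_zero.eventually_lt_const zero_lt_one).exists
  refine ⟨n, lt_of_eq_of_lt ?_ hn⟩
  rw [mul_pow, ← exp_nat_mul, mul_neg, mul_one]
  ring

theorem CoarseModel.not_lt (h : CoarseModel a b A f) (ha : 0 < a) (hb : 0 < b) : ¬ b < a := by
  intro hba
  have hA := h.one_le
  choose s hs using h.exists_near
  obtain ⟨m, hm⟩ := h.card_le
  set K := 5 * (1 + a + b) ^ 3 * A ^ 2
  have hK : 1 ≤ K := one_le_mul_of_one_le_of_one_le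
    (one_le_mul_of_one_le_of_one_le (by norm_num) (one_le_pow₀ (by linarith))) (one_le_pow₀ hA)
  obtain ⟨κ, hκ, c, hgain⟩ := exists_gainsHeight_div ha hb hba hK
  obtain ⟨n, hn⟩ := exists_linear_mul_pow_lt
    (m * (16 * (8 * exp A) ^ 2 * exp ((a - b) * (c + A + 1))))
    (K * levelHeight b (2 * κ) - 1 / (a - b)) (K + 2 * A + c + 2)
  have one_le := h.one_le_mul_of_gainsHeight ha hb hba.le hm (h.coarseEmb ha hb hs) hκ (hgain n) rfl
  have exponent_eq : -((a - b) * (n / (a - b) - c - A - 1)) = (a - b) * (c + A + 1) + -n := by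
    field_simp [(sub_pos.2 hba).ne']
    ring
  rw [exponent_eq, exp_add] at one_le
  refine hn.not_ge (one_le.trans_eq ?_)
  ring

end Counting

/-! ### Word metrics -/

section WordMetric

variable {Γ : Type*} [Group Γ] {S : Set Γ}

theorem wordDist_mul_left (γ g h : Γ) : wordDist S (γ * g) (γ * h) = wordDist S g h := by
  rw [wordDist, wordDist, mul_inv_rev, mul_assoc, inv_mul_cancel_left]

theorem exists_list_length_eq_wordNorm (hS : IsFinSymmGen S) (g : Γ) :
    ∃ l : List Γ, (∀ x ∈ l, x ∈ S) ∧ l.prod = g ∧ l.length = wordNorm S g := by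
  refine Nat.sInf_mem
    (s := {m | ∃ l : List Γ, (∀ x ∈ l, x ∈ S) ∧ l.prod = g ∧ l.length = m}) ?_
  obtain ⟨l, hl, hg⟩ := Submonoid.exists_list_of_mem_closure (s := S ∪ S⁻¹) (x := g)
    (by rw [← Subgroup.closure_toSubmonoid, hS.2.2]; trivial)
  exact ⟨l.length, l, fun x hx => (hl x hx).elim id fun h => inv_inv x ▸ hS.2.1 _ h, hg, rfl⟩

theorem finite_wordNorm_le (hS : IsFinSymmGen S) (r : ℝ) : {g | (wordNorm S g : ℝ) ≤ r}.Finite := by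
  have := hS.1.to_subtype
  refine ((List.finite_length_le S ⌊r⌋₊).image fun l => (l.map Subtype.val).prod).subset ?_
  intro g hg
  obtain ⟨l, hl, hg', hlen⟩ := exists_list_length_eq_wordNorm hS g
  lift l to List S using hl
  refine ⟨l, ?_, hg'⟩
  rw [mem_ofPred_eq, ← List.length_map (as := l) Subtype.val, hlen]
  exact Nat.le_floor hg

variable {a b K C : ℝ} {f : Γ → Point}

theorem exists_wordDist_le (ha : 0 < a) (hb : 0 < b) (hK : 1 ≤ K) (hC : 0 ≤ C)
    (hf : IsQIE (wordDist S) (dAB a b) K C f) :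
    ∃ D, 1 ≤ D ∧ ∀ ℓ, 1 ≤ ℓ → ∀ g h, Near a b ℓ (f g) (f h) → wordDist S g h ≤ D * ℓ := by
  obtain ⟨C₁, one_le, dAB_le⟩ := exists_dAB_le ha hb
  refine ⟨K * (C₁ + C), one_le_mul_of_one_le_of_one_le hK (by linarith), fun ℓ hℓ g h near => ?_⟩
  have wordDist_le : 1 / K * wordDist S g h ≤ C₁ * ℓ + C * ℓ := by
    linarith [(hf g h).1, dAB_le _ _ ℓ hℓ near, le_mul_of_one_le_right hC hℓ]
  rw [one_div, inv_mul_le_iff₀ (by linarith)] at wordDist_le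
  linarith

theorem exists_card_le (ha : 0 < a) (hb : 0 < b) (hK : 1 ≤ K) (hC : 0 ≤ C) (hS : IsFinSymmGen S)
    (hf : IsQIE (wordDist S) (dAB a b) K C f) :
    ∃ m : ℕ, ∀ p, ∀ F : Finset Γ, (∀ g ∈ F, Near a b 1 p (f g)) → F.card ≤ m := by
  obtain ⟨D, -, wordDist_le⟩ := exists_wordDist_le ha hb hK hC hf
  set ℓ := (1 + a + b) * ((1 + a + b) * 1) + 1 + 1
  have one_le : 1 ≤ ℓ := by nlinarith [sq_nonneg (1 + a + b)]
  refine ⟨(finite_wordNorm_le hS (D * ℓ)).toFinset.card, fun p F hF => ?_⟩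
  obtain rfl | ⟨g₀, hg₀⟩ := F.eq_empty_or_nonempty
  · exact Nat.zero_le _
  · refine Finset.card_le_card_of_injOn (g₀⁻¹ * ·) (fun g hg => ?_) (mul_right_injective g₀⁻¹).injOn
    simpa [wordDist] using
      wordDist_le ℓ one_le g₀ g (((hF g₀ hg₀).symm ha hb).trans ha hb (hF g hg))

theorem exists_coarseModel (ha : 0 < a) (hb : 0 < b) (hK : 1 ≤ K) (hC : 0 ≤ C)
    (hS : IsFinSymmGen S) (hf : IsQI (wordDist S) (dAB a b) K C f) :
    ∃ A, CoarseModel a b A f := by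
  obtain ⟨D, hD, wordDist_le⟩ := exists_wordDist_le ha hb hK hC hf.1
  set w := 1 + a + b
  have hw : 1 ≤ w := by linarith
  have hKD : 1 ≤ K * D := one_le_mul_of_one_le_of_one_le hK hD
  have hB : 1 ≤ w * (K * D + C + 1) := one_le_mul_of_one_le_of_one_le hw (by linarith)
  refine ⟨w * (w * (K * D + C + 1)), one_le_mul_of_one_le_of_one_le hw hB,
    fun ℓ hℓ γ g h near => ?_, fun p => ?_, exists_card_le ha hb hK hC hS hf.1⟩
  · have dAB_le : dAB a b (f (γ * g)) (f (γ * h)) ≤ (K * D + C) * ℓ := calc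
      dAB a b (f (γ * g)) (f (γ * h)) ≤ K * wordDist S g h + C := by
        simpa only [wordDist_mul_left] using (hf.1 (γ * g) (γ * h)).2
      _ ≤ K * (D * ℓ) + C * ℓ := by
        gcongr
        exacts [wordDist_le ℓ hℓ g h near, le_mul_of_one_le_right hC hℓ]
      _ = (K * D + C) * ℓ := by ring
    refine (near_of_dAB_le ha hb dAB_le).mono ?_
    calc w * ((K * D + C) * ℓ + 1) ≤ w * ((K * D + C) * ℓ + ℓ) := by gcongr
      _ = w * (K * D + C + 1) * ℓ := by ring
      _ ≤ w * (w * (K * D + C + 1)) * ℓ := by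
        gcongr
        exact le_mul_of_one_le_left (by linarith) hw
  · obtain ⟨g, hg⟩ := hf.2 p
    refine ⟨g, ((near_of_dAB_le ha hb hg).symm ha hb).mono ?_⟩
    gcongr
    linarith

end WordMetric

end Gab

/-- **Theorem (Eskin–Fisher–Whyte).** For `a, b > 0` with `a ≠ b`, no finitely generated group
is quasi-isometric to the solvable Lie group `G_{a,b} = ℝ ⋉ ℝ²`,
`z·(x,y) = (e^{az} x, e^{-bz} y)`. -/
theorem no_finitely_generated_group_qi_to_Gab
    (a b : ℝ) (ha : 0 < a) (hb : 0 < b) (hab : a ≠ b)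
    (Γ : Type*) [Group Γ] (S : Set Γ) (hS : IsFinSymmGen S) :
    ¬ QuasiIsometric (wordDist S) (dAB a b) := by
  rintro ⟨K, C, f, hK, hC, hf⟩
  obtain ⟨A, hA⟩ := Gab.exists_coarseModel ha hb hK hC hS hf
  rcases lt_or_gt_of_ne hab with h | h
  · exact hA.mirror.not_lt hb ha h
  · exact hA.not_lt ha hb h

end
end

section
/- Subdivision Lemma for Sol: for all K ≥ 1, C ≥ 0 and ε > 0 there exist a positive integer n₀ and a real r₀ > 0, depending only on K, C and ε, such that for every r ≥ r₀, every integer n ≥ n₀, and every (K,C)-quasi-geodesic segment α : [0,r] → Sol that is not ε-monotone, one has Σ_{j=0}^{n−1} |h(α((j+1)r/n)) − h(α(jr/n))| ≥ |h(α(0)) − h(α(r))| + ε·r/(8K²). -/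
open Set

noncomputable section

/-- The `Sol` length of a path `γ(t) = (x(t), y(t), z(t))`, for the metric
`ds² = e^{-z} dx² + e^{z} dy² + dz²`. -/
def solLength (γ : ℝ → ℝ × ℝ × ℝ) : ℝ :=
  ∫ t in (0:ℝ)..1,
    Real.sqrt (Real.exp (-(γ t).2.2) * (deriv (fun s => (γ s).1) t) ^ 2 +
      Real.exp ((γ t).2.2) * (deriv (fun s => (γ s).2.1) t) ^ 2 +
      (deriv (fun s => (γ s).2.2) t) ^ 2)

/-- The left-invariant distance on `Sol = ℝ³`. -/
def dSol (p q : ℝ × ℝ × ℝ) : ℝ :=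
  sInf {ℓ : ℝ | ∃ γ : ℝ → ℝ × ℝ × ℝ,
    γ 0 = p ∧ γ 1 = q ∧ PiecewiseC1 γ ∧ solLength γ = ℓ}

/-- Height function on `Sol`. -/
def solHeight (p : ℝ × ℝ × ℝ) : ℝ := p.2.2

/-- `α` is a `(K,C)`-quasi-geodesic segment on `[0, L]` with respect to the distance `dX`. -/
def IsQGeoOn {X : Type*} (dX : X → X → ℝ) (K C : ℝ) (α : ℝ → X) (L : ℝ) : Prop :=
  ∀ s ∈ Set.Icc (0:ℝ) L, ∀ t ∈ Set.Icc (0:ℝ) L,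
    (1 / K) * |s - t| - C ≤ dX (α s) (α t) ∧ dX (α s) (α t) ≤ K * |s - t| + C

/-- `α : [0,r] → Sol` is `ε`-monotone: equal heights occur only at parameters within `ε·r`. -/
def EpsMonotone (α : ℝ → ℝ × ℝ × ℝ) (ε r : ℝ) : Prop :=
  ∀ t₁ ∈ Set.Icc (0:ℝ) r, ∀ t₂ ∈ Set.Icc (0:ℝ) r,
    solHeight (α t₁) = solHeight (α t₂) → |t₁ - t₂| < ε * r

/-! In a thin slab of heights `Sol` is exponentially distorted in the horizontal directions. A
quasi-geodesic of duration `T` that stays within `M` of a height `h` moves its horizontal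
coordinates by at most about `T * exp ((M ± h) / 2)`, and a path that climbs to `h + A`, descends to
`h - A` and comes back covers such a displacement at cost `O(A) + T * exp ((M - A) / 2)`. With `A` a
little larger than `M` the last term is negligible, so two points of the quasi-geodesic at equal
heights, whose distance is at least about `T / K`, force `M` to be of order `T / K`. Hence between
two such points the height makes an excursion of order `ε * r / K` and returns; a sufficiently fine
subdivision records this excursion twice, on top of the height difference of the endpoints. -/

section Development

open Real MeasureTheory Filter Topology

section PiecewiseC1

variable {E F : Type*} [NormedAddCommGroup E] [NormedSpace ℝ E] [NormedAddCommGroup F]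
  [NormedSpace ℝ F] {γ : ℝ → E}

theorem PiecewiseC1.of_contDiff (h : ContDiff ℝ 1 γ) : PiecewiseC1 γ :=
  ⟨1, fun i => i, by simp, by simp, fun i _ => by simp, fun _ _ => h.contDiffOn⟩

theorem PiecewiseC1.contDiff_comp (h : PiecewiseC1 γ) {g : E → F} (hg : ContDiff ℝ 1 g) :
    PiecewiseC1 fun t => g (γ t) :=
  let ⟨n, τ, h0, h1, hmono, hC⟩ := h
  ⟨n, τ, h0, h1, hmono, fun i hi => hg.comp_contDiffOn (hC i hi)⟩

theorem PiecewiseC1.norm_sub_le_integral_of_norm_deriv_le (h : PiecewiseC1 γ) {g : ℝ → ℝ}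
    (hg : IntervalIntegrable g volume 0 1) (hγg : ∀ t ∈ Ioo (0 : ℝ) 1, ‖deriv γ t‖ ≤ g t) {a : ℝ}
    (ha : a ∈ Icc (0 : ℝ) 1) : ‖γ a - γ 0‖ ≤ ∫ t in (0 : ℝ)..a, g t := by
  obtain ⟨n, τ, h0, h1, hmono, hC⟩ := h
  have hgi : ∀ {b c : ℝ}, 0 ≤ b → b ≤ c → c ≤ 1 → IntervalIntegrable g volume b c :=
    fun hb hbc hc => hg.mono_set <| by
      rw [uIcc_of_le hbc, uIcc_of_le zero_le_one]
      exact Icc_subset_Icc hb hc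
  have key : ∀ k ≤ n, 0 ≤ τ k ∧ ∀ a ∈ Icc (0 : ℝ) 1, a ≤ τ k →
      ‖γ a - γ 0‖ ≤ ∫ t in (0 : ℝ)..a, g t := by
    intro k
    induction k with
    | zero =>
      refine fun _ => ⟨h0.ge, fun a ha hak => ?_⟩
      obtain rfl : a = 0 := le_antisymm (hak.trans_eq h0) ha.1
      simp
    | succ k ih =>
      intro hk
      obtain ⟨hk0, ih⟩ := ih (by omega)
      refine ⟨hk0.trans (hmono k (by omega)), fun a ha hak => ?_⟩
      rcases le_or_gt a (τ k) with hle | hlt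
      · exact ih a ha hle
      have hγ := (hC k (by omega)).mono (Icc_subset_Icc_right hak)
      have hpiece : ‖γ a - γ (τ k)‖ ≤ ∫ t in τ k..a, g t :=
        norm_sub_le_integral_of_norm_deriv_le_of_le hlt.le hγ.continuousOn
          ((hγ.differentiableOn one_ne_zero).mono Ioo_subset_Icc_self)
          (.of_forall fun t ht => hγg t ⟨hk0.trans_lt ht.1, ht.2.trans_le ha.2⟩)
          (hgi hk0 hlt.le ha.2)
      calc ‖γ a - γ 0‖ ≤ ‖γ a - γ (τ k)‖ + ‖γ (τ k) - γ 0‖ := norm_sub_le_norm_sub_add_norm_sub ..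
        _ ≤ (∫ t in τ k..a, g t) + ∫ t in (0 : ℝ)..τ k, g t :=
          add_le_add hpiece (ih _ ⟨hk0, hlt.le.trans ha.2⟩ le_rfl)
        _ = ∫ t in (0 : ℝ)..a, g t := by
          rw [add_comm, intervalIntegral.integral_add_adjacent_intervals
            (hgi le_rfl hk0 (hlt.le.trans ha.2)) (hgi hk0 hlt.le ha.2)]
  exact (key n le_rfl).2 a ha (ha.2.trans_eq h1.symm)

end PiecewiseC1

/-- The length, in the `Sol` metric, of a tangent vector `(a, b, c)` at a point of height `z`. -/
def solNorm (z a b c : ℝ) : ℝ :=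
  √(exp (-z) * a ^ 2 + exp z * b ^ 2 + c ^ 2)

theorem solNorm_nonneg (z a b c : ℝ) : 0 ≤ solNorm z a b c := sqrt_nonneg _

theorem solNorm_eq_sqrt_add_sq (z a b c : ℝ) :
    solNorm z a b c = √((exp (-z / 2) * a) ^ 2 + (exp (z / 2) * b) ^ 2 + c ^ 2) := by
  have hexp : ∀ w : ℝ, exp w = exp (w / 2) ^ 2 := fun w => by rw [← exp_nat_mul]; ring_nf
  rw [solNorm, hexp (-z), hexp z, mul_pow, mul_pow]

theorem solNorm_neg_swap (z a b c : ℝ) : solNorm (-z) b a (-c) = solNorm z a b c := by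
  rw [solNorm, solNorm, neg_neg, neg_sq, add_comm (exp z * b ^ 2)]

theorem abs_fst_le_solNorm (z a b c : ℝ) : |a| ≤ exp (z / 2) * solNorm z a b c := by
  have h : |exp (-z / 2) * a| ≤ solNorm z a b c := by
    rw [solNorm_eq_sqrt_add_sq, add_assoc]
    exact abs_le_sqrt (le_add_of_nonneg_right (by positivity))
  rw [abs_mul, abs_exp, neg_div, exp_neg] at h
  rwa [inv_mul_le_iff₀ (exp_pos _)] at h

theorem abs_height_le_solNorm (z a b c : ℝ) : |c| ≤ solNorm z a b c :=
  abs_le_sqrt (le_add_of_nonneg_left (by positivity))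

theorem solNorm_le_add_abs (z a b c : ℝ) :
    solNorm z a b c ≤ |exp (-z / 2) * a| + |exp (z / 2) * b| + |c| := by
  rw [solNorm_eq_sqrt_add_sq, sqrt_le_iff]
  refine ⟨by positivity, ?_⟩
  have hsq : ∀ {u v : ℝ}, 0 ≤ u → 0 ≤ v → u ^ 2 + v ^ 2 ≤ (u + v) ^ 2 := fun hu hv => by
    rw [add_sq']
    exact le_add_of_nonneg_right (by positivity)
  rw [← sq_abs (_ * a), ← sq_abs (_ * b), ← sq_abs c]
  exact (add_le_add_left (hsq (abs_nonneg _) (abs_nonneg _)) _).trans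
    (hsq (by positivity) (abs_nonneg _))

/-- The speed of a path with respect to the `Sol` metric. As `deriv` is `0` at points of
non-differentiability, the speed is meaningful only away from the breakpoints of the path. -/
def solSpeed (γ : ℝ → ℝ × ℝ × ℝ) (t : ℝ) : ℝ :=
  solNorm (γ t).2.2 (deriv (fun s => (γ s).1) t) (deriv (fun s => (γ s).2.1) t)
    (deriv (fun s => (γ s).2.2) t)

theorem solLength_eq_integral_solSpeed (γ : ℝ → ℝ × ℝ × ℝ) :
    solLength γ = ∫ t in (0 : ℝ)..1, solSpeed γ t := rfl

theorem solSpeed_nonneg (γ : ℝ → ℝ × ℝ × ℝ) (t : ℝ) : 0 ≤ solSpeed γ t := solNorm_nonneg ..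

theorem solLength_nonneg (γ : ℝ → ℝ × ℝ × ℝ) : 0 ≤ solLength γ :=
  intervalIntegral.integral_nonneg zero_le_one fun t _ => solSpeed_nonneg γ t

namespace PiecewiseC1

variable {γ : ℝ → ℝ × ℝ × ℝ}

theorem intervalIntegrable_solSpeed (h : PiecewiseC1 γ) :
    IntervalIntegrable (solSpeed γ) volume 0 1 := by
  obtain ⟨n, τ, h0, h1, hmono, hC⟩ := h
  rw [← h0, ← h1]
  refine IntervalIntegrable.trans_iterate fun k hk => ?_
  rcases (hmono k hk).eq_or_lt with heq | hlt
  · rw [heq]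
  set I := Icc (τ k) (τ (k + 1))
  have hγ : ContDiffOn ℝ 1 γ I := hC k hk
  have hderiv : ∀ {f : ℝ → ℝ}, ContDiffOn ℝ 1 f I → ContinuousOn (derivWithin f I) I :=
    fun hf => hf.continuousOn_derivWithin (uniqueDiffOn_Icc hlt) le_rfl
  have hz : ContinuousOn (fun t => (γ t).2.2) I := hγ.snd.snd.continuousOn
  have hspeed : ContinuousOn (fun t => solNorm (γ t).2.2 (derivWithin (fun s => (γ s).1) I t)
      (derivWithin (fun s => (γ s).2.1) I t) (derivWithin (fun s => (γ s).2.2) I t)) I :=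
    (((hz.neg.rexp.mul ((hderiv hγ.fst).pow 2)).add
      (hz.rexp.mul ((hderiv hγ.snd.fst).pow 2))).add ((hderiv hγ.snd.snd).pow 2)).sqrt
  refine (hspeed.intervalIntegrable_of_Icc hlt.le).congr_uIoo fun t ht => ?_
  rw [uIoo_of_le hlt.le] at ht
  have hI : I ∈ 𝓝 t := Icc_mem_nhds ht.1 ht.2
  simp only [solSpeed, derivWithin_of_mem_nhds hI]

theorem abs_height_sub_le_solLength (h : PiecewiseC1 γ) {a : ℝ} (ha : a ∈ Icc (0 : ℝ) 1) :
    |(γ a).2.2 - (γ 0).2.2| ≤ solLength γ :=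
  calc |(γ a).2.2 - (γ 0).2.2| ≤ ∫ t in (0 : ℝ)..a, solSpeed γ t :=
        (h.contDiff_comp (g := fun p => p.2.2) (by fun_prop)).norm_sub_le_integral_of_norm_deriv_le
          h.intervalIntegrable_solSpeed (fun _ _ => abs_height_le_solNorm ..) ha
    _ ≤ solLength γ := intervalIntegral.integral_mono_interval le_rfl ha.1 ha.2
        (.of_forall (solSpeed_nonneg γ)) h.intervalIntegrable_solSpeed

theorem abs_fst_sub_le (h : PiecewiseC1 γ) :
    |(γ 1).1 - (γ 0).1| ≤ exp (((γ 0).2.2 + solLength γ) / 2) * solLength γ := by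
  rw [solLength_eq_integral_solSpeed γ, ← intervalIntegral.integral_const_mul,
    ← solLength_eq_integral_solSpeed γ]
  refine (h.contDiff_comp contDiff_fst).norm_sub_le_integral_of_norm_deriv_le
    (h.intervalIntegrable_solSpeed.const_mul _) (fun t ht => ?_) (right_mem_Icc.2 zero_le_one)
  have hheight := (abs_le.1 (h.abs_height_sub_le_solLength (Ioo_subset_Icc_self ht))).2
  calc |deriv (fun s => (γ s).1) t| ≤ exp ((γ t).2.2 / 2) * solSpeed γ t := abs_fst_le_solNorm ..
    _ ≤ exp (((γ 0).2.2 + solLength γ) / 2) * solSpeed γ t := by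
      gcongr
      · exact solSpeed_nonneg γ t
      · linarith

end PiecewiseC1

theorem dSol_le_solLength {γ : ℝ → ℝ × ℝ × ℝ} (h : PiecewiseC1 γ) :
    dSol (γ 0) (γ 1) ≤ solLength γ :=
  csInf_le ⟨0, by rintro _ ⟨γ, _, _, _, rfl⟩; exact solLength_nonneg γ⟩ ⟨γ, rfl, rfl, h, rfl⟩

theorem exists_path_solLength_lt {p q : ℝ × ℝ × ℝ} {D : ℝ} (h : dSol p q < D) :
    ∃ γ : ℝ → ℝ × ℝ × ℝ, γ 0 = p ∧ γ 1 = q ∧ PiecewiseC1 γ ∧ solLength γ < D := by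
  have hne : {ℓ : ℝ | ∃ γ : ℝ → ℝ × ℝ × ℝ,
      γ 0 = p ∧ γ 1 = q ∧ PiecewiseC1 γ ∧ solLength γ = ℓ}.Nonempty :=
    ⟨_, fun t => p + t • (q - p), by simp, by simp, .of_contDiff (by fun_prop), rfl⟩
  obtain ⟨ℓ, ⟨γ, h0, h1, hγ, rfl⟩, hlt⟩ := exists_lt_of_csInf_lt hne h
  exact ⟨γ, h0, h1, hγ, hlt⟩

theorem abs_solHeight_sub_le_dSol (p q : ℝ × ℝ × ℝ) :
    |solHeight p - solHeight q| ≤ dSol p q := by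
  refine le_of_forall_gt fun D hD => ?_
  obtain ⟨γ, rfl, rfl, hγ, hlt⟩ := exists_path_solLength_lt hD
  rw [abs_sub_comm]
  exact (hγ.abs_height_sub_le_solLength (right_mem_Icc.2 zero_le_one)).trans_lt hlt

theorem dSol_nonneg (p q : ℝ × ℝ × ℝ) : 0 ≤ dSol p q :=
  (abs_nonneg _).trans (abs_solHeight_sub_le_dSol p q)

theorem abs_fst_sub_le_of_dSol_le {p q : ℝ × ℝ × ℝ} {D : ℝ} (h : dSol p q ≤ D) :
    |p.1 - q.1| ≤ exp ((solHeight p + D) / 2) * D := by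
  have hlt : ∀ D' > D, |p.1 - q.1| ≤ exp ((solHeight p + D') / 2) * D' := by
    intro D' hD'
    obtain ⟨γ, rfl, rfl, hγ, hlt⟩ := exists_path_solLength_lt (h.trans_lt hD')
    have := solLength_nonneg γ
    rw [abs_sub_comm]
    refine hγ.abs_fst_sub_le.trans ?_
    unfold solHeight
    gcongr
  have hcont : Continuous fun D' => exp ((solHeight p + D') / 2) * D' := by fun_prop
  exact ge_of_tendsto (hcont.continuousWithinAt (s := Ioi D)) (eventually_mem_nhdsWithin.mono hlt)

/-- The isometry `(x, y, z) ↦ (y, x, -z)` of `Sol`; it transfers estimates on the first coordinate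
to the second one. -/
def solFlip (p : ℝ × ℝ × ℝ) : ℝ × ℝ × ℝ := (p.2.1, p.1, -p.2.2)

theorem solLength_solFlip (γ : ℝ → ℝ × ℝ × ℝ) :
    solLength (fun t => solFlip (γ t)) = solLength γ := by
  simp only [solLength_eq_integral_solSpeed, solSpeed, solFlip, deriv.fun_neg, solNorm_neg_swap]

theorem dSol_solFlip_le (p q : ℝ × ℝ × ℝ) : dSol (solFlip p) (solFlip q) ≤ dSol p q := by
  refine le_of_forall_gt fun D hD => ?_
  obtain ⟨γ, rfl, rfl, hγ, hlt⟩ := exists_path_solLength_lt hD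
  refine (dSol_le_solLength (hγ.contDiff_comp (g := solFlip) ?_)).trans_lt ?_
  · unfold solFlip
    fun_prop
  · rwa [solLength_solFlip]

section Chain

variable {p : ℕ → ℝ × ℝ × ℝ} {N : ℕ} {D : ℝ}

theorem abs_fst_sub_le_of_chain {H : ℝ} (hstep : ∀ k < N, dSol (p k) (p (k + 1)) ≤ D)
    (hH : ∀ k < N, solHeight (p k) ≤ H) :
    |(p N).1 - (p 0).1| ≤ N * (exp ((H + D) / 2) * D) := by
  have hsum := dist_le_range_sum_of_dist_le (f := fun k => (p k).1)
    (d := fun _ => exp ((H + D) / 2) * D) N fun {k} hk => by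
      have hD : 0 ≤ D := (dSol_nonneg _ _).trans (hstep k hk)
      refine (abs_fst_sub_le_of_dSol_le (hstep k hk)).trans ?_
      have := hH k hk
      gcongr
  simpa [dist_comm, Real.dist_eq] using hsum

theorem abs_snd_fst_sub_le_of_chain {H : ℝ} (hstep : ∀ k < N, dSol (p k) (p (k + 1)) ≤ D)
    (hH : ∀ k < N, H ≤ solHeight (p k)) :
    |(p N).2.1 - (p 0).2.1| ≤ N * (exp ((-H + D) / 2) * D) :=
  abs_fst_sub_le_of_chain (p := fun k => solFlip (p k))
    (fun k hk => (dSol_solFlip_le _ _).trans (hstep k hk)) fun k hk => neg_le_neg (hH k hk)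

end Chain

theorem contDiff_one_integral {f : ℝ → ℝ} (hf : Continuous f) :
    ContDiff ℝ 1 fun t => ∫ s in (0 : ℝ)..t, f s := by
  have hderiv : deriv (fun t => ∫ s in (0 : ℝ)..t, f s) = f := funext (hf.deriv_integral f 0)
  rw [contDiff_one_iff_deriv, hderiv]
  exact ⟨fun t => (hf.integral_hasStrictDerivAt 0 t).hasDerivAt.differentiableAt, hf⟩

/-- The path from `p` to `q` with height profile `z` along which the two horizontal components of
the velocity have constant length in the `Sol` metric. -/
def solLift (z : ℝ → ℝ) (p q : ℝ × ℝ × ℝ) (t : ℝ) : ℝ × ℝ × ℝ :=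
  (p.1 + (q.1 - p.1) / (∫ s in (0 : ℝ)..1, exp (z s / 2)) * ∫ s in (0 : ℝ)..t, exp (z s / 2),
    p.2.1 + (q.2.1 - p.2.1) / (∫ s in (0 : ℝ)..1, exp (-z s / 2)) *
      ∫ s in (0 : ℝ)..t, exp (-z s / 2),
    z t)

section SolLift

variable {z : ℝ → ℝ} {p q : ℝ × ℝ × ℝ}

theorem contDiff_solLift (hz : ContDiff ℝ 1 z) : ContDiff ℝ 1 (solLift z p q) := by
  have hzc := hz.continuous
  have hx := contDiff_one_integral (f := fun s => exp (z s / 2)) (by fun_prop)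
  have hy := contDiff_one_integral (f := fun s => exp (-z s / 2)) (by fun_prop)
  unfold solLift
  fun_prop

theorem integral_exp_pos {f : ℝ → ℝ} (hf : Continuous f) :
    0 < ∫ s in (0 : ℝ)..1, exp (f s) :=
  intervalIntegral.intervalIntegral_pos_of_pos (hf.rexp.intervalIntegrable _ _)
    (fun _ => exp_pos _) one_pos

theorem solLift_zero (hz0 : z 0 = p.2.2) : solLift z p q 0 = p := by
  simp [solLift, hz0]

theorem solLift_one (hz : Continuous z) (hz1 : z 1 = q.2.2) : solLift z p q 1 = q := by
  have hF := (integral_exp_pos (f := fun s => z s / 2) (by fun_prop)).ne'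
  have hG := (integral_exp_pos (f := fun s => -z s / 2) (by fun_prop)).ne'
  simp [solLift, hz1, hF, hG]

theorem solSpeed_solLift_le (hz : Continuous z) (t : ℝ) :
    solSpeed (solLift z p q) t ≤ |q.1 - p.1| / (∫ s in (0 : ℝ)..1, exp (z s / 2)) +
      |q.2.1 - p.2.1| / (∫ s in (0 : ℝ)..1, exp (-z s / 2)) + |deriv z t| := by
  have hf : Continuous fun s => exp (z s / 2) := by fun_prop
  have hg : Continuous fun s => exp (-z s / 2) := by fun_prop
  have hF := integral_exp_pos (f := fun s => z s / 2) (by fun_prop)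
  have hG := integral_exp_pos (f := fun s => -z s / 2) (by fun_prop)
  have hx : deriv (fun s => (solLift z p q s).1) t = _ :=
    (((hf.integral_hasStrictDerivAt 0 t).hasDerivAt.const_mul _).const_add p.1).deriv
  have hy : deriv (fun s => (solLift z p q s).2.1) t = _ :=
    (((hg.integral_hasStrictDerivAt 0 t).hasDerivAt.const_mul _).const_add p.2.1).deriv
  have hcancel : ∀ w c : ℝ, exp (-w) * (c * exp w) = c := fun w c => by
    rw [mul_left_comm, ← exp_add, neg_add_cancel, exp_zero, mul_one]
  rw [solSpeed, hx, hy]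
  refine (solNorm_le_add_abs ..).trans_eq ?_
  have hz' : (solLift z p q t).2.2 / 2 = -(-z t / 2) := by simp only [solLift]; ring
  rw [hz', hcancel, neg_div, hz', neg_neg, neg_div, hcancel, abs_div, abs_div, abs_of_pos hF,
    abs_of_pos hG]
  rfl

theorem dSol_le_of_height_profile (hz : ContDiff ℝ 1 z) (hz0 : z 0 = p.2.2)
    (hz1 : z 1 = q.2.2) :
    dSol p q ≤ |q.1 - p.1| / (∫ s in (0 : ℝ)..1, exp (z s / 2)) +
      |q.2.1 - p.2.1| / (∫ s in (0 : ℝ)..1, exp (-z s / 2)) +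
        ∫ s in (0 : ℝ)..1, |deriv z s| := by
  have hpath : PiecewiseC1 (solLift z p q) := .of_contDiff (contDiff_solLift hz)
  have hderiv : IntervalIntegrable (fun s => |deriv z s|) volume 0 1 :=
    (hz.continuous_deriv le_rfl).abs.intervalIntegrable _ _
  have hlength := dSol_le_solLength hpath
  rw [solLift_zero hz0, solLift_one hz.continuous hz1] at hlength
  refine hlength.trans ((intervalIntegral.integral_mono_on zero_le_one
    hpath.intervalIntegrable_solSpeed (intervalIntegrable_const.add hderiv)
    fun t _ => solSpeed_solLift_le hz.continuous t).trans_eq ?_)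
  rw [intervalIntegral.integral_add intervalIntegrable_const hderiv]
  simp

end SolLift

section Oscillation

variable {θ A : ℝ}

theorem le_integral_exp_sin (hθ₀ : 0 ≤ θ) (hθ₁ : θ ≤ 1) (hA : 0 ≤ A) (z₀ : ℝ) :
    (1 - θ) / 4 * exp ((z₀ + θ * A) / 2) ≤
      ∫ t in (0 : ℝ)..1, exp ((z₀ + A * sin (2 * π * t)) / 2) := by
  have hcont : Continuous fun t => exp ((z₀ + A * sin (2 * π * t)) / 2) := by fun_prop
  have hsin : ∀ t ∈ Icc (θ / 4) (1 / 4), θ ≤ sin (2 * π * t) := by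
    intro t ht
    have ht0 : 0 ≤ t := by linarith [ht.1]
    calc θ ≤ 4 * t := by linarith [ht.1]
      _ = 2 / π * (2 * π * t) := by field_simp; ring
      _ ≤ sin (2 * π * t) := mul_le_sin (by positivity) (by nlinarith [ht.2, pi_pos])
  calc (1 - θ) / 4 * exp ((z₀ + θ * A) / 2)
      = ∫ _ in (θ / 4)..(1 / 4), exp ((z₀ + θ * A) / 2) := by simp; ring
    _ ≤ ∫ t in (θ / 4)..(1 / 4), exp ((z₀ + A * sin (2 * π * t)) / 2) :=
        intervalIntegral.integral_mono_on (by linarith) intervalIntegrable_const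
          (hcont.intervalIntegrable _ _) fun t ht => by
            have := mul_le_mul_of_nonneg_right (hsin t ht) hA
            exact exp_le_exp.2 (by linarith)
    _ ≤ ∫ t in (0 : ℝ)..1, exp ((z₀ + A * sin (2 * π * t)) / 2) :=
        intervalIntegral.integral_mono_interval (by positivity) (by linarith) (by norm_num)
          (.of_forall fun _ => (exp_pos _).le) (hcont.intervalIntegrable _ _)

theorem le_integral_exp_neg_sin (hθ₀ : 0 ≤ θ) (hθ₁ : θ ≤ 1) (hA : 0 ≤ A) (z₀ : ℝ) :
    (1 - θ) / 4 * exp ((-z₀ + θ * A) / 2) ≤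
      ∫ t in (0 : ℝ)..1, exp (-(z₀ + A * sin (2 * π * t)) / 2) := by
  have hreflect : ∀ t, sin (2 * π * (1 - t)) = -sin (2 * π * t) := fun t => by
    rw [mul_one_sub, sin_two_pi_sub]
  refine (le_integral_exp_sin hθ₀ hθ₁ hA (-z₀)).trans_eq ?_
  have hsub := intervalIntegral.integral_comp_sub_left (a := 0) (b := 1)
    (fun t => exp ((-z₀ + A * sin (2 * π * t)) / 2)) 1
  rw [sub_self, sub_zero] at hsub
  rw [← hsub]
  simp only [hreflect, mul_neg, neg_add]

theorem integral_abs_deriv_add_sin_le (hA : 0 ≤ A) (z₀ : ℝ) :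
    ∫ t in (0 : ℝ)..1, |deriv (fun s => z₀ + A * sin (2 * π * s)) t| ≤ 2 * π * A := by
  have hderiv : ∀ t, deriv (fun s => z₀ + A * sin (2 * π * s)) t =
      A * (cos (2 * π * t) * (2 * π * 1)) := fun t =>
    (((((hasDerivAt_id t).const_mul (2 * π)).sin).const_mul A).const_add z₀).deriv
  have hbound : ∀ t, |deriv (fun s => z₀ + A * sin (2 * π * s)) t| ≤ 2 * π * A := fun t => by
    rw [hderiv, abs_mul, abs_mul, abs_of_nonneg hA, mul_one, abs_of_pos two_pi_pos, mul_comm]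
    exact mul_le_mul_of_nonneg_right
      (mul_le_of_le_one_left two_pi_pos.le (abs_cos_le_one _)) hA
  have hnorm := intervalIntegral.norm_integral_le_of_norm_le_const (a := 0) (b := 1)
    (f := fun t => |deriv (fun s => z₀ + A * sin (2 * π * s)) t|)
    fun t _ => (abs_abs _).trans_le (hbound t)
  simpa using (le_norm_self _).trans hnorm

-- Go from `p` to `q` along a full oscillation of the height with amplitude `A`.
theorem dSol_le_of_solHeight_eq {p q : ℝ × ℝ × ℝ} (hpq : solHeight p = solHeight q)
    (hθ₀ : 0 ≤ θ) (hθ₁ : θ < 1) (hA : 0 ≤ A) :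
    dSol p q ≤ 4 / (1 - θ) * (|q.1 - p.1| * exp (-(solHeight p + θ * A) / 2) +
      |q.2.1 - p.2.1| * exp (-(-solHeight p + θ * A) / 2)) + 2 * π * A := by
  have hθ : 0 < 1 - θ := sub_pos.2 hθ₁
  have hdiv : ∀ {d w I : ℝ}, 0 ≤ d → (1 - θ) / 4 * exp (w / 2) ≤ I →
      d / I ≤ 4 / (1 - θ) * (d * exp (-w / 2)) := fun {d w I} hd hI => by
    refine (div_le_div_of_nonneg_left hd (by positivity) hI).trans_eq ?_
    rw [neg_div, exp_neg]
    field_simp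
  refine (dSol_le_of_height_profile (z := fun t => solHeight p + A * sin (2 * π * t))
    (by fun_prop) (by simp [solHeight]) (by simpa [solHeight] using hpq)).trans ?_
  rw [mul_add]
  gcongr
  · exact hdiv (abs_nonneg _) (le_integral_exp_sin hθ₀ hθ₁.le hA _)
  · exact hdiv (abs_nonneg _) (le_integral_exp_neg_sin hθ₀ hθ₁.le hA _)
  · exact integral_abs_deriv_add_sin_le hA _

theorem dSol_le_of_chain {p : ℕ → ℝ × ℝ × ℝ} {N : ℕ} {D M : ℝ}
    (hpN : solHeight (p 0) = solHeight (p N)) (hstep : ∀ k < N, dSol (p k) (p (k + 1)) ≤ D)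
    (hM : ∀ k < N, |solHeight (p k) - solHeight (p 0)| ≤ M)
    (hθ₀ : 0 ≤ θ) (hθ₁ : θ < 1) (hA : 0 ≤ A) :
    dSol (p 0) (p N) ≤ 8 / (1 - θ) * (N * D) * exp ((M + D - θ * A) / 2) + 2 * π * A := by
  set z₀ := solHeight (p 0)
  have hx := abs_fst_sub_le_of_chain hstep (H := z₀ + M)
    fun k hk => by linarith [(abs_le.1 (hM k hk)).2]
  have hy := abs_snd_fst_sub_le_of_chain hstep (H := z₀ - M)
    fun k hk => by linarith [(abs_le.1 (hM k hk)).1]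
  have : 0 < 1 - θ := sub_pos.2 hθ₁
  have hexp : ∀ v w : ℝ, N * (exp (v / 2) * D) * exp (w / 2) = N * D * exp ((v + w) / 2) :=
    fun v w => by rw [add_div, exp_add]; ring
  calc dSol (p 0) (p N)
      ≤ 4 / (1 - θ) * (|(p N).1 - (p 0).1| * exp (-(z₀ + θ * A) / 2) +
          |(p N).2.1 - (p 0).2.1| * exp (-(-z₀ + θ * A) / 2)) + 2 * π * A :=
        dSol_le_of_solHeight_eq hpN hθ₀ hθ₁ hA
    _ ≤ 4 / (1 - θ) * (N * (exp ((z₀ + M + D) / 2) * D) * exp (-(z₀ + θ * A) / 2) +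
          N * (exp ((-(z₀ - M) + D) / 2) * D) * exp (-(-z₀ + θ * A) / 2)) + 2 * π * A := by
        gcongr
    _ = 8 / (1 - θ) * (N * D) * exp ((M + D - θ * A) / 2) + 2 * π * A := by
        rw [hexp, hexp]
        ring_nf

end Oscillation

section QuasiGeodesic

variable {K C r : ℝ} {α : ℝ → ℝ × ℝ × ℝ}

theorem IsQGeoOn.abs_solHeight_sub_le (hα : IsQGeoOn dSol K C α r) {s t : ℝ}
    (hs : s ∈ Icc 0 r) (ht : t ∈ Icc 0 r) :
    |solHeight (α s) - solHeight (α t)| ≤ K * |s - t| + C :=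
  (abs_solHeight_sub_le_dSol _ _).trans (hα s hs t ht).2

theorem IsQGeoOn.dSol_le_of_height_near (hα : IsQGeoOn dSol K C α r) (hK : 0 ≤ K)
    {t₁ t₂ M θ A : ℝ} (h₁ : 0 ≤ t₁) (h₁₂ : t₁ < t₂) (h₂ : t₂ ≤ r)
    (heq : solHeight (α t₁) = solHeight (α t₂))
    (hM : ∀ s ∈ Icc t₁ t₂, |solHeight (α s) - solHeight (α t₁)| ≤ M)
    (hθ₀ : 0 ≤ θ) (hθ₁ : θ < 1) (hA : 0 ≤ A) :
    dSol (α t₁) (α t₂) ≤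
      8 / (1 - θ) * ((t₂ - t₁ + 1) * (K + C)) * exp ((M + (K + C) - θ * A) / 2) + 2 * π * A := by
  set N := ⌈t₂ - t₁⌉₊
  have hT : 0 < t₂ - t₁ := sub_pos.2 h₁₂
  have hN : (0 : ℝ) < N := Nat.cast_pos.2 (Nat.ceil_pos.2 hT)
  set δ := (t₂ - t₁) / N
  have hδ₀ : 0 ≤ δ := by positivity
  have hδ₁ : δ ≤ 1 := (div_le_one hN).2 (Nat.le_ceil _)
  have hNδ : N * δ = t₂ - t₁ := mul_div_cancel₀ _ hN.ne'
  have hmem : ∀ k ≤ N, t₁ + k * δ ∈ Icc t₁ t₂ := fun k hk => by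
    have : (k : ℝ) * δ ≤ N * δ := by gcongr
    exact ⟨le_add_of_nonneg_right (by positivity), by linarith⟩
  have hsub : Icc t₁ t₂ ⊆ Icc 0 r := Icc_subset_Icc h₁ h₂
  have hstep : ∀ k < N, dSol (α (t₁ + k * δ)) (α (t₁ + (k + 1 : ℕ) * δ)) ≤ K + C := fun k hk => by
    refine (hα _ (hsub (hmem k hk.le)) _ (hsub (hmem (k + 1) hk))).2.trans ?_
    have hdiff : t₁ + k * δ - (t₁ + (k + 1 : ℕ) * δ) = -δ := by push_cast; ring
    rw [hdiff, abs_neg, abs_of_nonneg hδ₀]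
    gcongr
    exact mul_le_of_le_one_right hK hδ₁
  have hKC : 0 ≤ K + C := (dSol_nonneg _ _).trans (hstep 0 (Nat.ceil_pos.2 hT))
  have hend : t₁ + N * δ = t₂ := by rw [hNδ, add_sub_cancel]
  have hchain := dSol_le_of_chain (p := fun k => α (t₁ + k * δ)) (N := N) (M := M)
    (by simpa [hend] using heq) hstep (fun k hk => by simpa using hM _ (hmem k hk.le)) hθ₀ hθ₁ hA
  simp only [Nat.cast_zero, zero_mul, add_zero, hend] at hchain
  have : 0 < 1 - θ := sub_pos.2 hθ₁
  have hNT : (N : ℝ) ≤ t₂ - t₁ + 1 := (Nat.ceil_lt_add_one hT.le).le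
  refine hchain.trans ?_
  gcongr

theorem eventually_mul_exp_neg_add_lt (a c : ℝ) {b m : ℝ} (hb : 0 < b) (hm : 0 < m) :
    ∀ᶠ T in atTop, a * ((T + 1) * exp (-b * T)) + c < m * T := by
  have hlim : Tendsto (fun T => a * ((T + 1) * exp (-b * T)) + c) atTop (𝓝 c) := by
    have h₁ := tendsto_rpow_mul_exp_neg_mul_atTop_nhds_zero 1 b hb
    have h₀ := tendsto_rpow_mul_exp_neg_mul_atTop_nhds_zero 0 b hb
    simpa [add_mul] using ((h₁.add h₀).const_mul a).add_const c
  filter_upwards [hlim.eventually_lt_const (lt_add_one c),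
    (tendsto_id.const_mul_atTop hm).eventually_gt_atTop (c + 1)] with T h h'
  exact h.trans h'

theorem exists_height_excursion_of_isQGeoOn (hK : 0 < K) (C : ℝ) :
    ∃ T₀ : ℝ, ∀ {α : ℝ → ℝ × ℝ × ℝ} {r t₁ t₂ : ℝ}, IsQGeoOn dSol K C α r → 0 ≤ t₁ → t₂ ≤ r →
      T₀ ≤ t₂ - t₁ → solHeight (α t₁) = solHeight (α t₂) →
        ∃ s ∈ Icc t₁ t₂, (t₂ - t₁) / (12 * K) ≤ |solHeight (α s) - solHeight (α t₁)| := by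
  obtain ⟨T₀, hT₀⟩ := eventually_atTop.1 <| (eventually_gt_atTop 0).and <|
    eventually_mul_exp_neg_add_lt (32 * (K + C) * exp ((K + C) / 2)) C
      (b := 1 / (120 * K)) (m := 1 / (8 * K)) (by positivity) (by positivity)
  refine ⟨T₀, fun {α r t₁ t₂} hα h₁ h₂ hT₀T heq => ?_⟩
  set T := t₂ - t₁
  obtain ⟨hTpos, hlarge⟩ := hT₀ T hT₀T
  have h₁₂ : t₁ < t₂ := sub_pos.1 hTpos
  by_contra! hnear
  have hlower : 1 / K * T - C ≤ dSol (α t₁) (α t₂) := by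
    have := (hα t₁ ⟨h₁, h₁₂.le.trans h₂⟩ t₂ ⟨h₁.trans h₁₂.le, h₂⟩).1
    rwa [abs_sub_comm, abs_of_pos hTpos] at this
  -- `θ * A = T / (10 * K)` exceeds `T / (12 * K)`, whereas `2 * π * A` is still below `T / K`.
  have hupper := hα.dSol_le_of_height_near hK.le h₁ h₁₂ h₂ heq (fun s hs => (hnear s hs).le)
    (θ := 3 / 4) (A := 2 * T / (15 * K)) (by norm_num) (by norm_num) (by positivity)
  have hexp : exp ((T / (12 * K) + (K + C) - 3 / 4 * (2 * T / (15 * K))) / 2) =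
      exp ((K + C) / 2) * exp (-(1 / (120 * K)) * T) := by
    rw [← exp_add]
    congr 1
    field_simp
    ring
  have hoscillation : 2 * π * (2 * T / (15 * K)) ≤ 7 / 8 * (1 / K * T) := by
    have : 0 < 1 / K * T := by positivity
    calc 2 * π * (2 * T / (15 * K)) = 4 / 15 * π * (1 / K * T) := by field_simp; norm_num
      _ ≤ 7 / 8 * (1 / K * T) := by gcongr; linarith [pi_lt_d2]
  have hremaining : 1 / (8 * K) * T = 1 / K * T - 7 / 8 * (1 / K * T) := by field_simp; norm_num
  rw [hexp] at hupper
  linarith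

end QuasiGeodesic

section Subdivision

variable {X : Type*} [PseudoMetricSpace X]

theorem dist_add_dist_le_sum_dist (u : ℕ → X) {i j k n : ℕ} (hij : i ≤ j) (hjk : j ≤ k)
    (hkn : k ≤ n) :
    dist (u 0) (u i) + dist (u i) (u j) + dist (u j) (u k) + dist (u k) (u n) ≤
      ∑ l ∈ Finset.range n, dist (u l) (u (l + 1)) := by
  rw [← Nat.Ico_zero_eq_range, ← Finset.sum_Ico_consecutive _ (Nat.zero_le k) hkn,
    ← Finset.sum_Ico_consecutive _ (Nat.zero_le j) hjk,
    ← Finset.sum_Ico_consecutive _ (Nat.zero_le i) hij]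
  gcongr <;> exact dist_le_Ico_sum_dist u (by omega)

variable {r t : ℝ} {n : ℕ}

theorem floor_mul_div_le (hr : 0 < r) (ht : t ∈ Icc 0 r) : ⌊t * n / r⌋₊ ≤ n := by
  refine Nat.floor_le_of_le ((div_le_iff₀ hr).2 ?_)
  rw [mul_comm]
  gcongr
  exact ht.2

theorem abs_sub_floor_mul_div_le (hr : 0 < r) (hn : 0 < n) (ht : 0 ≤ t) :
    |t - ⌊t * n / r⌋₊ * r / n| ≤ r / n := by
  have hn' : (0 : ℝ) < n := Nat.cast_pos.2 hn
  have hscale : t * n / r * (r / n) = t := by field_simp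
  have hfloor : |t * n / r - ⌊t * n / r⌋₊| ≤ 1 := by
    rw [abs_of_nonneg (sub_nonneg.2 (Nat.floor_le (by positivity)))]
    linarith [Nat.lt_floor_add_one (t * n / r)]
  calc |t - ⌊t * n / r⌋₊ * r / n| = |(t * n / r - ⌊t * n / r⌋₊) * (r / n)| := by
        rw [sub_mul, hscale, mul_div_assoc]
    _ = |t * n / r - ⌊t * n / r⌋₊| * (r / n) := by rw [abs_mul, abs_of_pos (div_pos hr hn')]
    _ ≤ r / n := mul_le_of_le_one_left (by positivity) hfloor

theorem dist_add_dist_le_sum_dist_subdivision {f : ℝ → X} {K C t₁ s t₂ : ℝ} (hK : 0 ≤ K)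
    (hf : ∀ a ∈ Icc 0 r, ∀ b ∈ Icc 0 r, dist (f a) (f b) ≤ K * |a - b| + C) (hr : 0 < r)
    (hn : 0 < n) (h₁ : 0 ≤ t₁) (h₁s : t₁ ≤ s) (hs₂ : s ≤ t₂) (h₂ : t₂ ≤ r) :
    dist (f 0) (f t₁) + dist (f t₁) (f s) + dist (f s) (f t₂) + dist (f t₂) (f r) ≤
      ∑ j ∈ Finset.range n, dist (f (j * r / n)) (f ((j + 1) * r / n)) +
        6 * (K * (r / n) + C) := by
  have hn' : (0 : ℝ) < n := Nat.cast_pos.2 hn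
  set u : ℕ → X := fun j => f (j * r / n) with hu
  set m : ℝ → ℕ := fun t => ⌊t * n / r⌋₊
  have hm : Monotone m := fun a b hab => Nat.floor_mono (by gcongr)
  have hround : ∀ t ∈ Icc 0 r, dist (f t) (u (m t)) ≤ K * (r / n) + C := fun t ht => by
    have hmr : (m t : ℝ) * r / n ≤ r := by
      rw [div_le_iff₀ hn', mul_comm r]
      gcongr
      exact floor_mul_div_le hr ht
    refine (hf t ht _ ⟨by positivity, hmr⟩).trans ?_
    gcongr
    exact abs_sub_floor_mul_div_le hr hn ht.1
  have hu₀ : u 0 = f 0 := by simp [hu]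
  have hun : u n = f r := by simp only [hu, mul_div_cancel_left₀ r hn'.ne']
  have hchain := dist_add_dist_le_sum_dist u (i := m t₁) (j := m s) (k := m t₂) (n := n)
    (hm h₁s) (hm hs₂) (floor_mul_div_le hr ⟨h₁.trans (h₁s.trans hs₂), h₂⟩)
  have hsum : ∑ j ∈ Finset.range n, dist (u j) (u (j + 1)) =
      ∑ j ∈ Finset.range n, dist (f (j * r / n)) (f ((j + 1) * r / n)) := by
    simp only [hu, Nat.cast_add, Nat.cast_one]
  rw [hu₀, hun, hsum] at hchain
  have hm₁ := hround t₁ ⟨h₁, (h₁s.trans hs₂).trans h₂⟩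
  have hms := hround s ⟨h₁.trans h₁s, hs₂.trans h₂⟩
  have hm₂ := hround t₂ ⟨h₁.trans (h₁s.trans hs₂), h₂⟩
  have htri₁ := dist_triangle_right (f 0) (f t₁) (u (m t₁))
  have htri₁s := dist_triangle4_right (f t₁) (f s) (u (m t₁)) (u (m s))
  have htris₂ := dist_triangle4_right (f s) (f t₂) (u (m s)) (u (m t₂))
  have htri₂ := dist_triangle (f t₂) (u (m t₂)) (f r)
  linarith

end Subdivision

theorem exists_le_sub_of_not_epsMonotone {α : ℝ → ℝ × ℝ × ℝ} {ε r : ℝ}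
    (h : ¬EpsMonotone α ε r) :
    ∃ t₁ t₂ : ℝ, 0 ≤ t₁ ∧ t₂ ≤ r ∧ ε * r ≤ t₂ - t₁ ∧ solHeight (α t₁) = solHeight (α t₂) := by
  unfold EpsMonotone at h
  push Not at h
  obtain ⟨a, ha, b, hb, hab, hle⟩ := h
  rcases le_abs.1 hle with hle | hle
  · exact ⟨b, a, hb.1, ha.2, hle, hab.symm⟩
  · exact ⟨a, b, ha.1, hb.2, by linarith, hab⟩

theorem sol_subdivision_general (K C ε : ℝ) (hK : 0 < K) (hε : 0 < ε) :
    ∃ (n₀ : ℕ) (r₀ : ℝ), 0 < n₀ ∧ 0 < r₀ ∧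
      ∀ r : ℝ, r₀ ≤ r → ∀ n : ℕ, n₀ ≤ n →
        ∀ α : ℝ → ℝ × ℝ × ℝ, IsQGeoOn dSol K C α r → ¬ EpsMonotone α ε r →
          |solHeight (α 0) - solHeight (α r)| + ε * r / (8 * K) ≤
            ∑ j ∈ Finset.range n,
              |solHeight (α ((j + 1) * r / n)) - solHeight (α (j * r / n))| := by
  obtain ⟨T₀, hT₀⟩ := exists_height_excursion_of_isQGeoOn hK C
  refine ⟨⌈288 * K ^ 2 / ε⌉₊ + 1, max 1 (max T₀ (288 * K * C) / ε), by omega, by positivity, ?_⟩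
  intro r hr n hn α hα hmon
  have hr₀ : 0 < r := one_pos.trans_le ((le_max_left ..).trans hr)
  have hn₀ : 0 < n := by omega
  obtain ⟨hrT, hrC⟩ : T₀ ≤ ε * r ∧ 288 * K * C ≤ ε * r :=
    max_le_iff.1 ((div_le_iff₀' hε).1 ((le_max_right ..).trans hr))
  have hnK : 288 * K ^ 2 ≤ ε * n :=
    (div_le_iff₀' hε).1 ((Nat.le_ceil _).trans (Nat.cast_le.2 (by omega)))
  obtain ⟨t₁, t₂, h₁, h₂, hgap, heq⟩ := exists_le_sub_of_not_epsMonotone hmon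
  obtain ⟨s, hs, hexcursion⟩ := hT₀ hα h₁ h₂ (hrT.trans hgap) heq
  have hsum := dist_add_dist_le_sum_dist_subdivision (f := fun t => solHeight (α t)) hK.le
    (fun a ha b hb => hα.abs_solHeight_sub_le ha hb) hr₀ hn₀ h₁ hs.1 hs.2 h₂
  simp only [Real.dist_eq, ← heq] at hsum
  have hends := abs_sub_le (solHeight (α 0)) (solHeight (α t₁)) (solHeight (α r))
  have hloss : 6 * (K * (r / n) + C) ≤ ε * r / (24 * K) := by
    have hmesh : 288 * K ^ 2 * (r / n) ≤ ε * r :=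
      calc 288 * K ^ 2 * (r / n) ≤ ε * n * (r / n) := by gcongr
        _ = ε * r := by field_simp
    rw [le_div_iff₀ (by positivity)]
    linarith
  have hgain : ε * r / (12 * K) ≤ |solHeight (α s) - solHeight (α t₁)| :=
    le_trans (by gcongr) hexcursion
  have hbalance : ε * r / (8 * K) = 2 * (ε * r / (12 * K)) - ε * r / (24 * K) := by
    field_simp
    norm_num
  rw [abs_sub_comm (solHeight (α t₁)) (solHeight (α s))] at hsum
  simp only [abs_sub_comm (solHeight (α ((_ + 1) * r / n)))]
  linarith

end Development

/-- **Subdivision Lemma for `Sol`.** If a `(K,C)`-quasi-geodesic segment `α : [0,r] → Sol` is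
not `ε`-monotone, then upon subdividing into `n ≫ 1` equal pieces the total height variation
increases by at least `ε·r/(8K²)`. -/
theorem sol_subdivision :
    ∀ K C ε : ℝ, 1 ≤ K → 0 ≤ C → 0 < ε →
      ∃ (n₀ : ℕ) (r₀ : ℝ), 0 < n₀ ∧ 0 < r₀ ∧
        ∀ r : ℝ, r₀ ≤ r → ∀ n : ℕ, n₀ ≤ n →
          ∀ α : ℝ → ℝ × ℝ × ℝ, IsQGeoOn dSol K C α r → ¬ EpsMonotone α ε r →
            |solHeight (α 0) - solHeight (α r)| + ε * r / (8 * K ^ 2) ≤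
              ∑ j ∈ Finset.range n,
                |solHeight (α ((j + 1) * r / n)) - solHeight (α (j * r / n))| := by
  intro K C ε hK _ hε
  have hK₀ : 0 < K := one_pos.trans_le hK
  obtain ⟨n₀, r₀, hn₀, hr₀, h⟩ := sol_subdivision_general K C ε hK₀ hε
  refine ⟨n₀, r₀, hn₀, hr₀, fun r hr n hn α hα hmon => le_trans ?_ (h r hr n hn α hα hmon)⟩
  have hr_pos : 0 < r := hr₀.trans_le hr
  gcongr
  exact le_self_pow₀ hK two_ne_zero

end
end
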